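/- arXiv:2603.09057 — 4 statements merged into one kernel-verified Lean document; each statement's English description precedes it below -/
import Mathlib

section
/- A quiver datum (V, p) is extremizable if and only if there exist invertible matrices g_i ∈ GL(d_i, ℝ) for i ∈ [k] and h_j ∈ GL(n_j, ℝ) for j ∈ [m] such that (W, p) is a geometric datum, where W_a := h_j V_a g_i^{-1} for all a ∈ 𝒜_{ij}, i ∈ [k], j ∈ [m]. -/
open Matrix BigOperators

/-- The value of the capacity functional of a quiver datum `(V, p)` at a tuple `Y`
of `n j × n j` matrices. -/
noncomputable def capVal {k m : ℕ} {d : Fin k → ℕ} {n : Fin m → ℕ} {A : Fin k → Fin m → ℕ}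
    (p : Fin m → ℝ)
    (V : ∀ i : Fin k, ∀ j : Fin m, Fin (A i j) → Matrix (Fin (n j)) (Fin (d i)) ℝ)
    (Y : ∀ j : Fin m, Matrix (Fin (n j)) (Fin (n j)) ℝ) : ℝ :=
  (∏ i : Fin k, (∑ j : Fin m, p j • ∑ a : Fin (A i j), (V i j a)ᵀ * Y j * V i j a).det) /
    ∏ j : Fin m, (Y j).det ^ (p j)

/-- The capacity `cap(V, p)` of a quiver datum: the infimum of the capacity functional
over all tuples of positive definite matrices. -/
noncomputable def cap {k m : ℕ} {d : Fin k → ℕ} {n : Fin m → ℕ} {A : Fin k → Fin m → ℕ}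
    (p : Fin m → ℝ)
    (V : ∀ i : Fin k, ∀ j : Fin m, Fin (A i j) → Matrix (Fin (n j)) (Fin (d i)) ℝ) : ℝ :=
  sInf { r : ℝ | ∃ Y : ∀ j : Fin m, Matrix (Fin (n j)) (Fin (n j)) ℝ,
    (∀ j, (Y j).PosDef) ∧ r = capVal p V Y }

/-- A quiver datum `(V, p)` is extremizable if it is feasible (`cap(V,p) > 0`) and the
infimum defining the capacity is attained at some tuple of positive definite matrices. -/
def Extremizable {k m : ℕ} {d : Fin k → ℕ} {n : Fin m → ℕ} {A : Fin k → Fin m → ℕ}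
    (p : Fin m → ℝ)
    (V : ∀ i : Fin k, ∀ j : Fin m, Fin (A i j) → Matrix (Fin (n j)) (Fin (d i)) ℝ) : Prop :=
  0 < cap p V ∧ ∃ Y : ∀ j : Fin m, Matrix (Fin (n j)) (Fin (n j)) ℝ,
    (∀ j, (Y j).PosDef) ∧ capVal p V Y = cap p V

/-- A quiver datum `(V, p)` is geometric. -/
def IsGeometric {k m : ℕ} {d : Fin k → ℕ} {n : Fin m → ℕ} {A : Fin k → Fin m → ℕ}
    (p : Fin m → ℝ)
    (V : ∀ i : Fin k, ∀ j : Fin m, Fin (A i j) → Matrix (Fin (n j)) (Fin (d i)) ℝ) : Prop :=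
  (∀ i, ∑ j : Fin m, p j • ∑ a : Fin (A i j), (V i j a)ᵀ * V i j a = 1) ∧
  (∀ j, ∑ i : Fin k, ∑ a : Fin (A i j), V i j a * (V i j a)ᵀ = 1)

lemma qv_spec {N : ℕ} {M : Matrix (Fin N) (Fin N) ℝ} (hM : M.IsHermitian) :
    ∃ (P : Matrix (Fin N) (Fin N) ℝ) (μ : Fin N → ℝ), Pᵀ * P = 1 ∧ P * Pᵀ = 1 ∧
      M = P * diagonal μ * Pᵀ ∧ M.det = ∏ s, μ s ∧ (M.PosDef → ∀ s, 0 < μ s) := by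
  refine ⟨hM.eigenvectorUnitary, hM.eigenvalues, ?_, ?_, ?_, ?_, ?_⟩
  · have := Unitary.coe_star_mul_self hM.eigenvectorUnitary
    simpa [star_eq_conjTranspose] using this
  · have := Unitary.coe_mul_star_self hM.eigenvectorUnitary
    simpa [star_eq_conjTranspose] using this
  · have := hM.spectral_theorem
    rw [Unitary.conjStarAlgAut_apply] at this
    simpa [star_eq_conjTranspose, Function.comp_def] using this
  · simpa using hM.det_eq_prod_eigenvalues
  · intro h s
    exact h.eigenvalues_pos s

lemma qv_sqrt {N : ℕ} {M : Matrix (Fin N) (Fin N) ℝ} (hM : M.PosDef) :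
    ∃ g : Matrix (Fin N) (Fin N) ℝ, gᵀ * g = M ∧ IsUnit g.det := by
  obtain ⟨P, μ, h1, h2, h3, h4, h5⟩ := qv_spec hM.1
  have hμ := h5 hM
  have key : (diagonal (fun s => Real.sqrt (μ s)) * Pᵀ)ᵀ *
      (diagonal (fun s => Real.sqrt (μ s)) * Pᵀ) = M := by
    rw [h3, transpose_mul, transpose_transpose, diagonal_transpose]
    have : diagonal (fun s => Real.sqrt (μ s)) * diagonal (fun s => Real.sqrt (μ s))
        = diagonal μ := by
      rw [diagonal_mul_diagonal]
      congr 1; ext s; exact Real.mul_self_sqrt (hμ s).le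
    rw [← this]; simp only [Matrix.mul_assoc]
  refine ⟨_, key, ?_⟩
  have hd := hM.det_pos
  rw [← key, det_mul, det_transpose] at hd
  rw [isUnit_iff_ne_zero]
  intro h0
  simp only [h0, mul_zero, lt_self_iff_false] at hd

lemma qv_posDef_near {N : ℕ} {Y H : Matrix (Fin N) (Fin N) ℝ} (hY : Y.PosDef)
    (hH : H.IsHermitian) : ∀ᶠ t : ℝ in nhds 0, (Y + t • H).PosDef := by
  have hc : Continuous (fun z : ℝ × (Fin N → ℝ) => z.2 ⬝ᵥ ((Y + z.1 • H) *ᵥ z.2)) := by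
    fun_prop
  have hev : ∀ᶠ t : ℝ in nhds 0, ∀ x ∈ Metric.sphere (0 : Fin N → ℝ) 1,
      0 < x ⬝ᵥ ((Y + t • H) *ᵥ x) := by
    apply (isCompact_sphere (0 : Fin N → ℝ) 1).eventually_forall_of_forall_eventually
    intro x hx
    have hx0 : x ≠ 0 := by
      rintro rfl
      simp at hx
    have h0 : 0 < x ⬝ᵥ ((Y + (0:ℝ) • H) *ᵥ x) := by
      simpa using hY.dotProduct_mulVec_pos hx0
    exact hc.continuousAt.eventually (lt_mem_nhds h0)
  filter_upwards [hev] with t ht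
  refine PosDef.of_dotProduct_mulVec_pos ?_ ?_
  · refine hY.1.add ?_
    simpa [IsHermitian, conjTranspose_smul] using congrArg (t • ·) hH
  · intro x hx
    have hn : 0 < ‖x‖ := norm_pos_iff.2 hx
    have h1 := ht (‖x‖⁻¹ • x) (by simp [norm_smul, hn.ne'])
    simp only [mulVec_smul, dotProduct_smul, smul_dotProduct, smul_eq_mul] at h1
    have h2 : 0 < x ⬝ᵥ ((Y + t • H) *ᵥ x) := by
      have hi : 0 < ‖x‖⁻¹ := inv_pos.2 hn
      exact pos_of_mul_pos_right (pos_of_mul_pos_right h1 hi.le) hi.le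
    simpa using h2

lemma qv_det_one {N : ℕ} (B : Matrix (Fin N) (Fin N) ℝ) :
    HasDerivAt (fun t : ℝ => (1 + t • B).det) B.trace 0 := by
  have h : (fun t : ℝ => (1 + t • B).det) = fun t => 1 + trace B * t +
      (det (1 + (Polynomial.X : Polynomial ℝ) • B.map Polynomial.C)).divX.divX.eval t * t ^ 2 := by
    funext t; exact det_one_add_smul t B
  rw [h]
  have h1 := (((hasDerivAt_id (0:ℝ)).const_mul (trace B)).const_add 1).add
    ((Polynomial.hasDerivAt
      (det (1 + (Polynomial.X : Polynomial ℝ) • B.map Polynomial.C)).divX.divX 0).mul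
      (hasDerivAt_pow 2 (0:ℝ)))
  exact h1.congr_deriv (by simp)

lemma qv_logdet {N : ℕ} {M : Matrix (Fin N) (Fin N) ℝ} (hM : 0 < M.det)
    (B : Matrix (Fin N) (Fin N) ℝ) :
    HasDerivAt (fun t : ℝ => Real.log (M + t • B).det) (M⁻¹ * B).trace 0 := by
  have hu : IsUnit M.det := hM.ne'.isUnit
  have h : (fun t : ℝ => (M + t • B).det) = fun t => M.det * (1 + t • (M⁻¹ * B)).det := by
    funext t
    rw [← det_mul, mul_add, mul_one, mul_smul_comm, mul_nonsing_inv_cancel_left _ _ hu]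
  have h1 := (qv_det_one (M⁻¹ * B)).const_mul M.det
  rw [← h] at h1
  have h2 := h1.log (by simpa using hM.ne')
  convert h2 using 1
  simp [hM.ne']

lemma qv_conj {k m : ℕ} {d : Fin k → ℕ} {n : Fin m → ℕ} {A : Fin k → Fin m → ℕ}
    (p : Fin m → ℝ)
    (V : ∀ i : Fin k, ∀ j : Fin m, Fin (A i j) → Matrix (Fin (n j)) (Fin (d i)) ℝ)
    (Y h : ∀ j : Fin m, Matrix (Fin (n j)) (Fin (n j)) ℝ) (i : Fin k)
    (g : Matrix (Fin (d i)) (Fin (d i)) ℝ) :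
    ∑ j : Fin m, p j • ∑ a : Fin (A i j), (h j * V i j a * g)ᵀ * Y j * (h j * V i j a * g) =
    gᵀ * (∑ j : Fin m, p j • ∑ a : Fin (A i j), (V i j a)ᵀ * ((h j)ᵀ * Y j * h j) * V i j a) * g := by
  simp only [Finset.mul_sum, Finset.sum_mul, transpose_mul, Matrix.mul_assoc, mul_smul_comm,
    smul_mul_assoc]

lemma qv_conj' {k m : ℕ} {d : Fin k → ℕ} {n : Fin m → ℕ} {A : Fin k → Fin m → ℕ}
    (V : ∀ i : Fin k, ∀ j : Fin m, Fin (A i j) → Matrix (Fin (n j)) (Fin (d i)) ℝ)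
    (j : Fin m) (h : Matrix (Fin (n j)) (Fin (n j)) ℝ)
    (g : ∀ i, Matrix (Fin (d i)) (Fin (d i)) ℝ) :
    ∑ i : Fin k, ∑ a : Fin (A i j), (h * V i j a * g i) * (h * V i j a * g i)ᵀ =
    h * (∑ i : Fin k, ∑ a : Fin (A i j), V i j a * (g i * (g i)ᵀ) * (V i j a)ᵀ) * hᵀ := by
  simp only [Finset.mul_sum, Finset.sum_mul, transpose_mul, Matrix.mul_assoc]

/-- Weighted Jensen inequality underlying the geometric case. -/
lemma qv_core {k m : ℕ} {d : Fin k → ℕ} {n : Fin m → ℕ} {A : Fin k → Fin m → ℕ}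
    (p : Fin m → ℝ) (hp : ∀ j, 0 < p j)
    (Q : ∀ i : Fin k, ∀ j : Fin m, Fin (A i j) → Matrix (Fin (n j)) (Fin (d i)) ℝ)
    (l : ∀ j, Fin (n j) → ℝ) (hl : ∀ j e, 0 < l j e)
    (μ : ∀ i, Fin (d i) → ℝ)
    (hμ : ∀ i s, μ i s = ∑ j, p j * ∑ a, ∑ e, l j e * Q i j a e s ^ 2)
    (hw : ∀ i s, ∑ j, p j * ∑ a, ∑ e, Q i j a e s ^ 2 = 1)
    (hc : ∀ j e, ∑ i, ∑ a, ∑ s, Q i j a e s ^ 2 = 1) :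
    (∀ i s, 0 < μ i s) ∧
      ∑ j, p j * ∑ e, Real.log (l j e) ≤ ∑ i, ∑ s, Real.log (μ i s) := by
  have key : ∀ i s, 0 < μ i s ∧
      ∑ j, p j * ∑ a, ∑ e, Real.log (l j e) * Q i j a e s ^ 2 ≤ Real.log (μ i s) := by
    intro i s
    let w : (Σ j, Fin (A i j) × Fin (n j)) → ℝ := fun x => p x.1 * Q i x.1 x.2.1 x.2.2 s ^ 2
    let y : (Σ j, Fin (A i j) × Fin (n j)) → ℝ := fun x => l x.1 x.2.2
    have h0 : ∀ x ∈ Finset.univ, 0 ≤ w x := fun x _ => mul_nonneg (hp _).le (sq_nonneg _)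
    have h1 : ∑ x, w x = 1 := by
      rw [← hw i s]
      simp only [w, Fintype.sum_sigma, Fintype.sum_prod_type, Finset.mul_sum]
    have hm : ∀ x ∈ Finset.univ, y x ∈ Set.Ioi (0:ℝ) := fun x _ => hl _ _
    have hs : ∑ x, w x • y x = μ i s := by
      rw [hμ i s]
      simp only [w, y, Fintype.sum_sigma, Fintype.sum_prod_type, Finset.mul_sum, smul_eq_mul]
      refine Finset.sum_congr rfl fun j _ => Finset.sum_congr rfl fun a _ =>
        Finset.sum_congr rfl fun e _ => by ring
    have hpos := (convex_Ioi (0:ℝ)).sum_mem h0 h1 hm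
    have hj := strictConcaveOn_log_Ioi.concaveOn.le_map_sum h0 h1 hm
    rw [hs] at hpos hj
    refine ⟨hpos, le_trans (le_of_eq ?_) hj⟩
    simp only [w, y, Fintype.sum_sigma, Fintype.sum_prod_type, Finset.mul_sum, smul_eq_mul]
    refine Finset.sum_congr rfl fun j _ => Finset.sum_congr rfl fun a _ =>
      Finset.sum_congr rfl fun e _ => by ring
  refine ⟨fun i s => (key i s).1, ?_⟩
  refine le_trans (le_of_eq ?_)
    (Finset.sum_le_sum fun i _ => Finset.sum_le_sum fun s _ => (key i s).2)
  calc ∑ j, p j * ∑ e, Real.log (l j e)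
      = ∑ j, p j * ∑ e, Real.log (l j e) * ∑ i, ∑ a, ∑ s, Q i j a e s ^ 2 := by
        simp only [hc, mul_one]
    _ = ∑ j, ∑ i, ∑ s, p j * ∑ a, ∑ e, Real.log (l j e) * Q i j a e s ^ 2 := by
        refine Finset.sum_congr rfl fun j _ => ?_
        simp only [Finset.mul_sum]
        rw [Finset.sum_comm]
        refine Finset.sum_congr rfl fun i _ => ?_
        rw [Finset.sum_comm]
        conv_rhs => rw [Finset.sum_comm]
        refine Finset.sum_congr rfl fun a _ => ?_
        rw [Finset.sum_comm]
    _ = _ := by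
        rw [Finset.sum_comm]
        refine Finset.sum_congr rfl fun i _ => ?_
        rw [Finset.sum_comm]

lemma qv_diag {N D : ℕ} (Q : Matrix (Fin N) (Fin D) ℝ) (l : Fin N → ℝ) (s : Fin D) :
    (Qᵀ * diagonal l * Q) s s = ∑ e, l e * Q e s ^ 2 := by
  rw [Matrix.mul_apply]
  refine Finset.sum_congr rfl fun e _ => ?_
  rw [mul_diagonal, transpose_apply]; ring

lemma qv_geom_ge {k m : ℕ} {d : Fin k → ℕ} {n : Fin m → ℕ} {A : Fin k → Fin m → ℕ}
    (p : Fin m → ℝ) (hp : ∀ j, 0 < p j)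
    (W : ∀ i : Fin k, ∀ j : Fin m, Fin (A i j) → Matrix (Fin (n j)) (Fin (d i)) ℝ)
    (hW : IsGeometric p W)
    (Y : ∀ j : Fin m, Matrix (Fin (n j)) (Fin (n j)) ℝ) (hY : ∀ j, (Y j).PosDef) :
    1 ≤ capVal p W Y := by
  let M : ∀ i, Matrix (Fin (d i)) (Fin (d i)) ℝ := fun i =>
    ∑ j : Fin m, p j • ∑ a : Fin (A i j), (W i j a)ᵀ * Y j * W i j a
  have hM : ∀ i, (M i).IsHermitian := by
    intro i
    have hYt : ∀ j, (Y j)ᵀ = Y j := fun j => by simpa using (hY j).1.eq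
    simp [M, IsHermitian, transpose_sum, transpose_smul, Matrix.mul_assoc, hYt]
  choose U l hU1 hU2 hU3 hU4 hU5 using fun j => qv_spec (hY j).1
  choose P μ hP1 hP2 hP3 hP4 hP5 using fun i => qv_spec (hM i)
  have hl : ∀ j e, 0 < l j e := fun j => hU5 j (hY j)
  have hUD : ∀ j, U j * diagonal (l j) * (U j)ᵀ = Y j := fun j => (hU3 j).symm
  have hMD : ∀ i, (P i)ᵀ * M i * P i = diagonal (μ i) := by
    intro i
    rw [hP3 i]
    calc (P i)ᵀ * (P i * diagonal (μ i) * (P i)ᵀ) * P i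
        = ((P i)ᵀ * P i) * diagonal (μ i) * ((P i)ᵀ * P i) := by simp only [Matrix.mul_assoc]
      _ = _ := by rw [hP1]; simp
  let Q : ∀ i : Fin k, ∀ j : Fin m, Fin (A i j) → Matrix (Fin (n j)) (Fin (d i)) ℝ :=
    fun i j a => (U j)ᵀ * W i j a * P i
  have hμ : ∀ i s, μ i s = ∑ j, p j * ∑ a, ∑ e, l j e * Q i j a e s ^ 2 := by
    intro i s
    have h := qv_conj p W (fun j => diagonal (l j)) (fun j => (U j)ᵀ) i (P i)
    simp only [transpose_transpose, hUD] at h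
    change _ = (P i)ᵀ * M i * P i at h
    rw [hMD] at h
    have h' := congrFun (congrFun h s) s
    rw [diagonal_apply_eq] at h'
    rw [← h', Matrix.sum_apply]
    refine Finset.sum_congr rfl fun j _ => ?_
    rw [Matrix.smul_apply, Matrix.sum_apply, smul_eq_mul]
    congr 1
    refine Finset.sum_congr rfl fun a _ => ?_
    exact qv_diag _ _ _
  have hw : ∀ i s, ∑ j, p j * ∑ a, ∑ e, Q i j a e s ^ 2 = 1 := by
    intro i s
    have h := qv_conj p W (fun j => diagonal (fun _ => 1)) (fun j => (U j)ᵀ) i (P i)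
    simp only [transpose_transpose, diagonal_one, Matrix.mul_one, hU2, hW.1, hP1] at h
    have h' := congrFun (congrFun h s) s
    rw [one_apply_eq, Matrix.sum_apply] at h'
    rw [← h']
    refine Finset.sum_congr rfl fun j _ => ?_
    rw [Matrix.smul_apply, Matrix.sum_apply, smul_eq_mul]
    congr 1
    refine Finset.sum_congr rfl fun a _ => ?_
    have := qv_diag (Q i j a) (fun _ => 1) s
    simp only [diagonal_one, Matrix.mul_one, one_mul] at this
    exact this.symm
  have hc : ∀ j e, ∑ i, ∑ a, ∑ s, Q i j a e s ^ 2 = 1 := by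
    intro j e
    have h := qv_conj' W j (U j)ᵀ P
    simp only [transpose_transpose, hP2, Matrix.mul_one, hW.2, hU1] at h
    have h' := congrFun (congrFun h e) e
    rw [one_apply_eq, Matrix.sum_apply] at h'
    rw [← h']
    refine Finset.sum_congr rfl fun i _ => ?_
    rw [Matrix.sum_apply]
    refine Finset.sum_congr rfl fun a _ => ?_
    have := qv_diag (Q i j a)ᵀ (fun _ => 1) e
    simp only [diagonal_one, Matrix.mul_one, one_mul, transpose_transpose, transpose_apply] at this
    exact this.symm
  obtain ⟨hpos, hle⟩ := qv_core p hp Q l hl μ hμ hw hc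
  have hdY : ∀ j, 0 < (Y j).det := fun j => (hY j).det_pos
  have hden : 0 < ∏ j : Fin m, (Y j).det ^ (p j) :=
    Finset.prod_pos fun j _ => Real.rpow_pos_of_pos (hdY j) _
  have hdM : ∀ i, 0 < (M i).det := fun i => by
    rw [hP4]; exact Finset.prod_pos fun s _ => hpos i s
  have hnum : 0 < ∏ i, (M i).det := Finset.prod_pos fun i _ => hdM i
  change 1 ≤ (∏ i, (M i).det) / _
  rw [one_le_div hden, ← Real.log_le_log_iff hden hnum,
    Real.log_prod (fun j _ => (Real.rpow_pos_of_pos (hdY j) _).ne'),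
    Real.log_prod (fun i _ => (hdM i).ne')]
  refine le_trans (le_of_eq ?_) (hle.trans (le_of_eq ?_))
  · refine Finset.sum_congr rfl fun j _ => ?_
    rw [Real.log_rpow (hdY j), hU4, Real.log_prod (fun e _ => (hl j e).ne')]
  · refine Finset.sum_congr rfl fun i _ => ?_
    rw [hP4, Real.log_prod (fun s _ => (hpos i s).ne')]

/-- Critical point equation at an extremizer. -/
lemma qv_crit {k m : ℕ} {d : Fin k → ℕ} {n : Fin m → ℕ} {A : Fin k → Fin m → ℕ}
    (p : Fin m → ℝ) (hp : ∀ j, 0 < p j)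
    (V : ∀ i : Fin k, ∀ j : Fin m, Fin (A i j) → Matrix (Fin (n j)) (Fin (d i)) ℝ)
    (Y : ∀ j : Fin m, Matrix (Fin (n j)) (Fin (n j)) ℝ) (hY : ∀ j, (Y j).PosDef)
    (M : ∀ i, Matrix (Fin (d i)) (Fin (d i)) ℝ)
    (hMdef : ∀ i, M i = ∑ j : Fin m, p j • ∑ a : Fin (A i j), (V i j a)ᵀ * Y j * V i j a)
    (hM : ∀ i, (M i).PosDef)
    (hmin : ∀ Z : ∀ j : Fin m, Matrix (Fin (n j)) (Fin (n j)) ℝ, (∀ j, (Z j).PosDef) →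
      capVal p V Y ≤ capVal p V Z) (j : Fin m) :
    ∑ i, ∑ a, V i j a * (M i)⁻¹ * (V i j a)ᵀ = (Y j)⁻¹ := by
  let G : ∀ j : Fin m, Matrix (Fin (n j)) (Fin (n j)) ℝ := fun j =>
    ∑ i, ∑ a, V i j a * (M i)⁻¹ * (V i j a)ᵀ - (Y j)⁻¹
  have hMt : ∀ i, (M i)⁻¹ᵀ = (M i)⁻¹ := fun i => by simpa using (hM i).inv.1.eq
  have hYt : ∀ j, (Y j)⁻¹ᵀ = (Y j)⁻¹ := fun j => by simpa using (hY j).inv.1.eq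
  have hGt : ∀ j, (G j)ᵀ = G j := by
    intro j
    simp only [G, transpose_sub, transpose_sum, transpose_mul, transpose_transpose, hMt, hYt,
      Matrix.mul_assoc]
  have hG : ∀ j, (G j).IsHermitian := fun j => by simpa [IsHermitian] using hGt j
  let B : ∀ i, Matrix (Fin (d i)) (Fin (d i)) ℝ := fun i =>
    ∑ j : Fin m, p j • ∑ a : Fin (A i j), (V i j a)ᵀ * G j * V i j a
  have hlin : ∀ i (t : ℝ), ∑ j : Fin m, p j • ∑ a : Fin (A i j),
      (V i j a)ᵀ * (Y j + t • G j) * V i j a = M i + t • B i := by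
    intro i t
    rw [hMdef]
    simp only [B, Matrix.mul_add, Matrix.add_mul, Finset.sum_add_distrib, smul_add,
      Finset.smul_sum, Matrix.mul_smul, Matrix.smul_mul, smul_comm t]
  have hMs : ∀ i, (B i).IsHermitian := by
    intro i
    simp [B, IsHermitian, transpose_sum, transpose_smul, Matrix.mul_assoc, hGt]
  let f : ℝ → ℝ := fun t => ∑ i, Real.log (M i + t • B i).det -
    ∑ j, p j * Real.log (Y j + t • G j).det
  have hder : HasDerivAt f (∑ i, ((M i)⁻¹ * B i).trace - ∑ j, p j * ((Y j)⁻¹ * G j).trace) 0 := by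
    refine HasDerivAt.sub ?_ ?_
    · exact HasDerivAt.fun_sum fun i _ => qv_logdet (hM i).det_pos (B i)
    · exact HasDerivAt.fun_sum fun j _ => (qv_logdet (hY j).det_pos (G j)).const_mul (p j)
  have hf : ∀ t : ℝ, (∀ i, (M i + t • B i).PosDef) → (∀ j, (Y j + t • G j).PosDef) →
      0 < capVal p V (fun j => Y j + t • G j) ∧
      f t = Real.log (capVal p V (fun j => Y j + t • G j)) := by
    intro t h1 h2
    have hden : 0 < ∏ j : Fin m, (Y j + t • G j).det ^ (p j) :=
      Finset.prod_pos fun j _ => Real.rpow_pos_of_pos (h2 j).det_pos _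
    have hnum : 0 < ∏ i, (M i + t • B i).det := Finset.prod_pos fun i _ => (h1 i).det_pos
    unfold capVal
    simp only [hlin]
    refine ⟨div_pos hnum hden, ?_⟩
    rw [Real.log_div hnum.ne' hden.ne',
      Real.log_prod (fun j _ => (Real.rpow_pos_of_pos (h2 j).det_pos _).ne'),
      Real.log_prod (fun i _ => (h1 i).det_pos.ne')]
    simp only [f]
    congr 1
    exact Finset.sum_congr rfl fun j _ => (Real.log_rpow (h2 j).det_pos _).symm
  have hloc : IsLocalMin f 0 := by
    have e1 : ∀ᶠ t : ℝ in nhds 0, ∀ i, (M i + t • B i).PosDef :=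
      Filter.eventually_all.2 fun i => qv_posDef_near (hM i) (hMs i)
    have e2 : ∀ᶠ t : ℝ in nhds 0, ∀ j, (Y j + t • G j).PosDef :=
      Filter.eventually_all.2 fun j => qv_posDef_near (hY j) (hG j)
    filter_upwards [e1, e2] with t h1 h2
    obtain ⟨_, ht⟩ := hf t h1 h2
    obtain ⟨h0p, h0⟩ := hf 0 (by simpa using hM) (by simpa using hY)
    rw [ht, h0]
    refine Real.log_le_log h0p ?_
    simpa using hmin _ h2
  have hzero := hloc.hasDerivAt_eq_zero hder
  have htr : ∑ i, ((M i)⁻¹ * B i).trace - ∑ j, p j * ((Y j)⁻¹ * G j).trace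
      = ∑ j, p j * ((G j)ᵀ * G j).trace := by
    have h1 : ∑ i, ((M i)⁻¹ * B i).trace =
        ∑ j, p j * ((∑ i, ∑ a, V i j a * (M i)⁻¹ * (V i j a)ᵀ) * G j).trace := by
      simp only [B, Finset.mul_sum, Finset.sum_mul, trace_sum, mul_smul_comm, trace_smul,
        smul_eq_mul]
      rw [Finset.sum_comm]
      refine Finset.sum_congr rfl fun j _ => Finset.sum_congr rfl fun i _ =>
        Finset.sum_congr rfl fun a _ => ?_
      congr 1
      rw [Matrix.mul_assoc (V i j a), Matrix.mul_assoc (V i j a), trace_mul_comm (V i j a)]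
      simp only [Matrix.mul_assoc]
    rw [h1, ← Finset.sum_sub_distrib]
    refine Finset.sum_congr rfl fun j _ => ?_
    rw [← mul_sub, ← trace_sub, ← Matrix.sub_mul, hGt]
  rw [htr] at hzero
  have hnn : ∀ j, 0 ≤ ((G j)ᵀ * G j).trace := fun j => by
    simpa using (posSemidef_conjTranspose_mul_self (G j)).trace_nonneg
  have hz := (Finset.sum_eq_zero_iff_of_nonneg
    (fun j _ => mul_nonneg (hp j).le (hnn j))).1 hzero j (Finset.mem_univ _)
  have hz' : ((G j)ᵀ * G j).trace = 0 := by
    rcases mul_eq_zero.1 hz with h | h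
    · exact absurd h (hp j).ne'
    · exact h
  have hG0 : G j = 0 := by
    rw [← trace_conjTranspose_mul_self_eq_zero_iff]; simpa using hz'
  exact sub_eq_zero.1 hG0

lemma qv_forward {k m : ℕ} {d : Fin k → ℕ} {n : Fin m → ℕ} {A : Fin k → Fin m → ℕ}
    (p : Fin m → ℝ) (hp : ∀ j, 0 < p j)
    (V : ∀ i : Fin k, ∀ j : Fin m, Fin (A i j) → Matrix (Fin (n j)) (Fin (d i)) ℝ)
    (hE : Extremizable p V) :
      ∃ (g : ∀ i : Fin k, Matrix (Fin (d i)) (Fin (d i)) ℝ)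
        (h : ∀ j : Fin m, Matrix (Fin (n j)) (Fin (n j)) ℝ),
        (∀ i, IsUnit (g i).det) ∧ (∀ j, IsUnit (h j).det) ∧
        IsGeometric p (fun i j a => h j * V i j a * (g i)⁻¹) := by
  obtain ⟨hpos, Y, hY, hYe⟩ := hE
  let M : ∀ i, Matrix (Fin (d i)) (Fin (d i)) ℝ := fun i =>
    ∑ j : Fin m, p j • ∑ a : Fin (A i j), (V i j a)ᵀ * Y j * V i j a
  have hMs : ∀ (Z : ∀ j : Fin m, Matrix (Fin (n j)) (Fin (n j)) ℝ), (∀ j, (Z j).PosDef) → ∀ i,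
      (∑ j : Fin m, p j • ∑ a : Fin (A i j), (V i j a)ᵀ * Z j * V i j a).PosSemidef := by
    intro Z hZ i
    refine posSemidef_sum _ fun j _ => PosSemidef.smul (posSemidef_sum _ fun a _ => ?_) (hp j).le
    simpa using (hZ j).posSemidef.conjTranspose_mul_mul_same (V i j a)
  have hnn : ∀ (Z : ∀ j : Fin m, Matrix (Fin (n j)) (Fin (n j)) ℝ), (∀ j, (Z j).PosDef) →
      0 ≤ capVal p V Z := fun Z hZ =>
    div_nonneg (Finset.prod_nonneg fun i _ => (hMs Z hZ i).det_nonneg)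
      (Finset.prod_nonneg fun j _ => (Real.rpow_pos_of_pos (hZ j).det_pos _).le)
  have hmin : ∀ Z : ∀ j : Fin m, Matrix (Fin (n j)) (Fin (n j)) ℝ, (∀ j, (Z j).PosDef) →
      capVal p V Y ≤ capVal p V Z := by
    intro Z hZ
    rw [hYe]
    refine csInf_le ⟨0, ?_⟩ ⟨Z, hZ, rfl⟩
    rintro r ⟨X, hX, rfl⟩
    exact hnn X hX
  have hM : ∀ i, (M i).PosDef := by
    intro i
    refine (hMs Y hY i).posDef_iff_det_ne_zero.2 fun h0 => ?_
    have : capVal p V Y = 0 := by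
      unfold capVal
      rw [Finset.prod_eq_zero (Finset.mem_univ i) h0, zero_div]
    rw [← hYe, this] at hpos
    exact lt_irrefl _ hpos
  have hcrit := qv_crit p hp V Y hY M (fun _ => rfl) hM hmin
  choose g hg hgu using fun i => qv_sqrt (hM i)
  choose h hh hhu using fun j => qv_sqrt (hY j)
  refine ⟨g, h, hgu, hhu, ?_, ?_⟩
  · intro i
    have e := qv_conj p V (fun j => 1) h i (g i)⁻¹
    simp only [Matrix.mul_one, hh] at e
    rw [e]
    change ((g i)⁻¹)ᵀ * M i * (g i)⁻¹ = 1
    rw [← hg i, Matrix.mul_assoc, Matrix.mul_assoc, mul_nonsing_inv _ (hgu i), Matrix.mul_one,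
      ← transpose_mul, mul_nonsing_inv _ (hgu i), transpose_one]
  · intro j
    have e := qv_conj' V j (h j) (fun i => (g i)⁻¹)
    have e2 : ∀ i, (g i)⁻¹ * ((g i)⁻¹)ᵀ = (M i)⁻¹ := fun i => by
      rw [← hg i, Matrix.mul_inv_rev, transpose_nonsing_inv]
    simp only [e2, hcrit] at e
    rw [e, ← hh j, Matrix.mul_inv_rev, ← Matrix.mul_assoc, mul_nonsing_inv _ (hhu j),
      Matrix.one_mul, nonsing_inv_mul]
    simpa using hhu j

lemma qv_backward {k m : ℕ} {d : Fin k → ℕ} {n : Fin m → ℕ} {A : Fin k → Fin m → ℕ}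
    (p : Fin m → ℝ) (hp : ∀ j, 0 < p j)
    (V : ∀ i : Fin k, ∀ j : Fin m, Fin (A i j) → Matrix (Fin (n j)) (Fin (d i)) ℝ)
    (g : ∀ i : Fin k, Matrix (Fin (d i)) (Fin (d i)) ℝ)
    (h : ∀ j : Fin m, Matrix (Fin (n j)) (Fin (n j)) ℝ)
    (hg : ∀ i, IsUnit (g i).det) (hh : ∀ j, IsUnit (h j).det)
    (hW : IsGeometric p (fun i j a => h j * V i j a * (g i)⁻¹)) : Extremizable p V := by
  let C : ℝ := (∏ i, (g i).det ^ 2) / ∏ j, ((h j).det ^ 2) ^ p j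
  have hsq : ∀ j, 0 < (h j).det ^ 2 := fun j => sq_pos_of_ne_zero (hh j).ne_zero
  have hC : 0 < C := div_pos (Finset.prod_pos fun i _ => sq_pos_of_ne_zero (hg i).ne_zero)
    (Finset.prod_pos fun j _ => Real.rpow_pos_of_pos (hsq j) _)
  have hcap : ∀ Z : ∀ j : Fin m, Matrix (Fin (n j)) (Fin (n j)) ℝ, (∀ j, (Z j).PosDef) →
      capVal p V (fun j => (h j)ᵀ * Z j * h j) =
        C * capVal p (fun i j a => h j * V i j a * (g i)⁻¹) Z := by
    intro Z hZ
    unfold capVal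
    simp only [qv_conj p V Z h]
    simp only [det_mul, det_transpose, Finset.prod_mul_distrib]
    have e : ∀ j, ((h j).det * (Z j).det * (h j).det) ^ p j
        = ((h j).det ^ 2) ^ p j * (Z j).det ^ p j := fun j => by
      rw [← Real.mul_rpow (hsq j).le (hZ j).det_pos.le]; congr 1; ring
    simp only [e, Finset.prod_mul_distrib, C]
    have e2 : (∏ i, (g i).det ^ 2) * ((∏ i, ((g i)⁻¹).det) * (∏ i, ((g i)⁻¹).det)) = 1 := by
      simp only [← Finset.prod_mul_distrib]
      refine Finset.prod_eq_one fun i _ => ?_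
      have := (hg i).ne_zero
      rw [det_nonsing_inv, Ring.inverse_eq_inv']
      field_simp
    rw [div_mul_div_comm]
    congr 1
    linear_combination (-1 : ℝ) * (∏ i, (∑ j, p j • ∑ a, (V i j a)ᵀ * ((h j)ᵀ * Z j * h j) *
      V i j a).det) * e2
  have hsurj : ∀ Y : ∀ j : Fin m, Matrix (Fin (n j)) (Fin (n j)) ℝ, (∀ j, (Y j).PosDef) →
      C ≤ capVal p V Y := by
    intro Y hY
    have hZ : ∀ j, (((h j)⁻¹)ᵀ * Y j * (h j)⁻¹).PosDef := fun j => by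
      have hu : IsUnit (h j)⁻¹ := (isUnit_nonsing_inv_iff).2 ((isUnit_iff_isUnit_det _).2 (hh j))
      have := (Matrix.IsUnit.posDef_star_left_conjugate_iff (x := Y j) hu).2 (hY j)
      simpa [star_eq_conjTranspose] using this
    have e := hcap _ hZ
    have e3 : (fun j => (h j)ᵀ * (((h j)⁻¹)ᵀ * Y j * (h j)⁻¹) * h j) = Y := by
      funext j
      calc (h j)ᵀ * (((h j)⁻¹)ᵀ * Y j * (h j)⁻¹) * h j
          = ((h j)⁻¹ * h j)ᵀ * Y j * ((h j)⁻¹ * h j) := by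
            rw [transpose_mul]; simp only [Matrix.mul_assoc]
        _ = Y j := by rw [nonsing_inv_mul _ (hh j)]; simp
    rw [e3] at e
    rw [e]
    exact le_mul_of_one_le_right hC.le (qv_geom_ge p hp _ hW _ hZ)
  have hYp : ∀ j, ((h j)ᵀ * 1 * h j).PosDef := fun j => by
    have hu : IsUnit (h j) := (isUnit_iff_isUnit_det _).2 (hh j)
    have := (Matrix.IsUnit.posDef_star_left_conjugate_iff (x := 1) hu).2 PosDef.one
    simpa [star_eq_conjTranspose] using this
  have hval : capVal p V (fun j => (h j)ᵀ * 1 * h j) = C := by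
    rw [hcap _ fun j => PosDef.one]
    have : capVal p (fun i j a => h j * V i j a * (g i)⁻¹) (fun j => 1) = 1 := by
      unfold capVal
      simp only [Matrix.mul_one, hW.1]
      simp
    rw [this, mul_one]
  have hleast : IsLeast { r : ℝ | ∃ Y : ∀ j : Fin m, Matrix (Fin (n j)) (Fin (n j)) ℝ,
      (∀ j, (Y j).PosDef) ∧ r = capVal p V Y } C := by
    refine ⟨⟨_, hYp, hval.symm⟩, ?_⟩
    rintro r ⟨Y, hY, rfl⟩
    exact hsurj Y hY
  have hcapC : cap p V = C := hleast.csInf_eq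
  exact ⟨hcapC ▸ hC, _, hYp, hval.trans hcapC.symm⟩

/-- A quiver datum `(V, p)` is extremizable if and only if there exist
invertible matrices `g_i ∈ GL(d_i, ℝ)` and `h_j ∈ GL(n_j, ℝ)` such that the transformed
datum `((h_j V_a g_i⁻¹), p)` is geometric. -/
theorem extremizable_iff_transform_to_geometric {k m : ℕ} (hk : 0 < k) (hm : 0 < m)
    {d : Fin k → ℕ} {n : Fin m → ℕ} {A : Fin k → Fin m → ℕ} {p : Fin m → ℝ}
    (hd : ∀ i, 0 < d i) (hn : ∀ j, 0 < n j) (hp : ∀ j, 0 < p j)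
    (hbal : ∑ i : Fin k, (d i : ℝ) = ∑ j : Fin m, p j * (n j : ℝ))
    (V : ∀ i : Fin k, ∀ j : Fin m, Fin (A i j) → Matrix (Fin (n j)) (Fin (d i)) ℝ) :
    Extremizable p V ↔
      ∃ (g : ∀ i : Fin k, Matrix (Fin (d i)) (Fin (d i)) ℝ)
        (h : ∀ j : Fin m, Matrix (Fin (n j)) (Fin (n j)) ℝ),
        (∀ i, IsUnit (g i).det) ∧ (∀ j, IsUnit (h j).det) ∧
        IsGeometric p (fun i j a => h j * V i j a * (g i)⁻¹) := by
  exact ⟨qv_forward p hp V, fun ⟨g, h, hg, hh, hW⟩ => qv_backward p hp V g h hg hh hW⟩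
end

section
/- A quiver datum (V, p) is extremizable if and only if there exists a tuple Y = (Y_1,…,Y_m) of real positive definite matrices, Y_j of size n_j×n_j, such that M_i := ∑_{j=1}^m p_j ∑_{a∈𝒜_{ij}} V_aᵀ Y_j V_a is invertible for every i ∈ [k] and ∑_{i=1}^k ∑_{a∈𝒜_{ij}} V_a M_i^{-1} V_aᵀ = Y_j^{-1} for every j ∈ [m]. Moreover, for any such pair (V, Y), cap(V, p) = (∏_{i=1}^k det(M_i)) / (∏_{j=1}^m det(Y_j)^{p_j}). -/
open Matrix BigOperators

/-- Real spectral theorem in plain matrix form. -/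
lemma exists_orth_diag {N : ℕ} {X : Matrix (Fin N) (Fin N) ℝ} (hX : X.IsHermitian) :
    ∃ (U : Matrix (Fin N) (Fin N) ℝ) (μ : Fin N → ℝ), U * Uᵀ = 1 ∧
      X = U * diagonal μ * Uᵀ := by
  refine ⟨hX.eigenvectorUnitary, hX.eigenvalues, ?_, ?_⟩
  · have := Unitary.coe_mul_star_self hX.eigenvectorUnitary
    simpa [star_eq_conjTranspose] using this
  · have := hX.spectral_theorem
    rw [Unitary.conjStarAlgAut_apply] at this
    simpa [star_eq_conjTranspose, Function.comp_def] using this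

lemma exists_factor {N : ℕ} {M : Matrix (Fin N) (Fin N) ℝ} (hM : M.PosSemidef) :
    ∃ B : Matrix (Fin N) (Fin N) ℝ, M = Bᴴ * B := by
  obtain ⟨U, μ, hU, hUM⟩ := exists_orth_diag hM.isHermitian
  have hu : IsUnit U := IsUnit.of_mul_eq_one _ hU
  have hμ : ∀ s, 0 ≤ μ s := by
    have := Matrix.IsUnit.posSemidef_star_right_conjugate_iff (x := diagonal μ) hu
    rw [star_eq_conjTranspose, conjTranspose_eq_transpose_of_trivial, ← hUM] at this
    exact posSemidef_diagonal_iff.mp (this.mp hM)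
  refine ⟨diagonal (fun s => Real.sqrt (μ s)) * Uᵀ, ?_⟩
  rw [conjTranspose_eq_transpose_of_trivial, transpose_mul, transpose_transpose,
    diagonal_transpose, Matrix.mul_assoc, ← Matrix.mul_assoc (diagonal _), diagonal_mul_diagonal]
  simp only [Real.mul_self_sqrt (hμ _)]
  rw [← Matrix.mul_assoc, hUM]

lemma posDef_of_isUnit_det {N : ℕ} {M : Matrix (Fin N) (Fin N) ℝ} (hM : M.PosSemidef)
    (hu : IsUnit M.det) : M.PosDef := by
  obtain ⟨B, rfl⟩ := exists_factor hM
  have : IsUnit B.det := by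
    rw [det_mul] at hu
    exact isUnit_of_mul_isUnit_right hu
  apply PosDef.conjTranspose_mul_self
  exact mulVec_injective_of_isUnit ((isUnit_iff_isUnit_det B).mpr this)

/-- Simultaneous diagonalization of a positive definite and a symmetric matrix. -/
lemma exists_simul_diag {N : ℕ} {M X : Matrix (Fin N) (Fin N) ℝ} (hM : M.PosDef)
    (hX : X.IsHermitian) :
    ∃ (P : Matrix (Fin N) (Fin N) ℝ) (μ : Fin N → ℝ), IsUnit P.det ∧ M = P * Pᵀ ∧
      X = P * diagonal μ * Pᵀ := by
  obtain ⟨B, hB⟩ := exists_factor hM.posSemidef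
  rw [conjTranspose_eq_transpose_of_trivial] at hB
  have hBu : IsUnit B.det := by
    have := (isUnit_iff_isUnit_det M).mp hM.isUnit
    rw [hB, det_mul] at this
    exact isUnit_of_mul_isUnit_right this
  have hBu' : IsUnit Bᵀ.det := by rwa [det_transpose]
  have hX' : (Bᵀ⁻¹ * X * B⁻¹).IsHermitian := by
    have h : X.conjTranspose = X := hX
    rw [conjTranspose_eq_transpose_of_trivial] at h
    unfold IsHermitian
    rw [conjTranspose_eq_transpose_of_trivial]
    simp [transpose_mul, transpose_nonsing_inv, h, Matrix.mul_assoc]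
  obtain ⟨U, μ, hU, hUX⟩ := exists_orth_diag hX'
  refine ⟨Bᵀ * U, μ, ?_, ?_, ?_⟩
  · rw [det_mul]
    refine hBu'.mul ?_
    have : U.det * Uᵀ.det = 1 := by rw [← det_mul, hU, det_one]
    exact IsUnit.of_mul_eq_one _ this
  · rw [transpose_mul, transpose_transpose, Matrix.mul_assoc, ← Matrix.mul_assoc U, hU,
      Matrix.one_mul, hB]
  · rw [transpose_mul, transpose_transpose]
    calc X = Bᵀ * (Bᵀ⁻¹ * X * B⁻¹) * B := by
          rw [Matrix.mul_assoc Bᵀ⁻¹, mul_nonsing_inv_cancel_left _ _ hBu',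
            nonsing_inv_mul_cancel_right _ _ hBu]
      _ = _ := by rw [hUX]; simp only [Matrix.mul_assoc]

lemma simul_diag_pos {N : ℕ} {P X : Matrix (Fin N) (Fin N) ℝ} {μ : Fin N → ℝ}
    (hP : IsUnit P.det) (hX : X = P * diagonal μ * Pᵀ) : X.PosDef ↔ ∀ s, 0 < μ s := by
  have := Matrix.IsUnit.posDef_star_right_conjugate_iff (x := diagonal μ)
    ((isUnit_iff_isUnit_det P).mpr hP)
  rw [star_eq_conjTranspose, conjTranspose_eq_transpose_of_trivial, ← hX] at this
  rw [this, posDef_diagonal_iff]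

lemma det_simul {N : ℕ} {P M X : Matrix (Fin N) (Fin N) ℝ} {μ : Fin N → ℝ}
    (hM : M = P * Pᵀ) (hX : X = P * diagonal μ * Pᵀ) : X.det = M.det * ∏ s, μ s := by
  rw [hX, hM]; simp only [det_mul, det_diagonal]; ring

/-- The geometric case of the inequality, with everything diagonalized. -/
lemma geometric_ineq {k m : ℕ} {d : Fin k → ℕ} {n : Fin m → ℕ} {A : Fin k → Fin m → ℕ}
    {p : Fin m → ℝ} (hp : ∀ j, 0 < p j)
    (C : ∀ i : Fin k, ∀ j : Fin m, Fin (A i j) → Matrix (Fin (n j)) (Fin (d i)) ℝ)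
    (h1 : ∀ i, ∑ j : Fin m, p j • ∑ a : Fin (A i j), (C i j a)ᵀ * C i j a = 1)
    (h2 : ∀ j, ∑ i : Fin k, ∑ a : Fin (A i j), C i j a * (C i j a)ᵀ = 1)
    (l : ∀ j, Fin (n j) → ℝ) (hl : ∀ j t, 0 < l j t) (μ : ∀ i, Fin (d i) → ℝ)
    (h3 : ∀ i, ∑ j : Fin m, p j • ∑ a : Fin (A i j), (C i j a)ᵀ * diagonal (l j) * C i j a
      = diagonal (μ i)) :
    ∏ j, (∏ t, l j t) ^ p j ≤ ∏ i, ∏ s, μ i s := by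
  let w : ∀ i, Fin (d i) → (Σ j, Fin (n j)) → ℝ :=
    fun i s x => p x.1 * ∑ a : Fin (A i x.1), (C i x.1 a x.2 s) ^ 2
  have hw0 : ∀ i s x, 0 ≤ w i s x := fun i s x =>
    mul_nonneg (hp _).le (Finset.sum_nonneg fun a _ => sq_nonneg _)
  have hw1 : ∀ i s, ∑ x, w i s x = 1 := by
    intro i s
    have := congrFun (congrFun (h1 i) s) s
    simp only [Matrix.sum_apply, Matrix.smul_apply, Matrix.mul_apply, Matrix.transpose_apply,
      Matrix.one_apply_eq, smul_eq_mul] at this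
    rw [← this, Fintype.sum_sigma]
    refine Finset.sum_congr rfl fun j _ => ?_
    simp only [w]
    rw [← Finset.mul_sum, Finset.sum_comm]
    simp only [sq]
  have hw2 : ∀ x : (Σ j, Fin (n j)), ∑ i, ∑ s, w i s x = p x.1 := by
    rintro ⟨j, t⟩
    have := congrFun (congrFun (h2 j) t) t
    simp only [Matrix.sum_apply, Matrix.mul_apply, Matrix.transpose_apply,
      Matrix.one_apply_eq] at this
    simp only [w]
    simp only [← Finset.mul_sum]
    conv_rhs => rw [← mul_one (p j), ← this]
    congr 1
    refine Finset.sum_congr rfl fun i _ => ?_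
    rw [Finset.sum_comm]
    simp only [sq]
  have hμ : ∀ i s, ∑ x, w i s x * l x.1 x.2 = μ i s := by
    intro i s
    have := congrFun (congrFun (h3 i) s) s
    simp only [Matrix.sum_apply, Matrix.smul_apply, Matrix.mul_apply, Matrix.transpose_apply,
      Matrix.diagonal_apply_eq, smul_eq_mul] at this
    rw [← this, Fintype.sum_sigma]
    refine Finset.sum_congr rfl fun j _ => ?_
    simp only [w]
    rw [Finset.sum_comm, Finset.mul_sum]
    refine Finset.sum_congr rfl fun t _ => ?_
    rw [mul_assoc, Finset.sum_mul]
    congr 1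
    exact Finset.sum_congr rfl fun a _ => by
      simp [Matrix.diagonal_apply]; ring
  have hineq : ∀ i s, ∏ x : (Σ j, Fin (n j)), l x.1 x.2 ^ w i s x ≤ μ i s := by
    intro i s
    rw [← hμ]
    exact Real.geom_mean_le_arith_mean_weighted _ _ _ (fun x _ => hw0 i s x) (hw1 i s)
      (fun x _ => (hl _ _).le)
  have hpos : ∀ i s, 0 ≤ ∏ x : (Σ j, Fin (n j)), l x.1 x.2 ^ w i s x := fun i s =>
    Finset.prod_nonneg fun x _ => Real.rpow_nonneg (hl _ _).le _
  calc ∏ j, (∏ t, l j t) ^ p j = ∏ x : (Σ j, Fin (n j)), l x.1 x.2 ^ p x.1 := by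
        rw [Fintype.prod_sigma]
        exact Finset.prod_congr rfl fun j _ =>
          (Real.finsetProd_rpow _ _ (fun t _ => (hl j t).le) _).symm
    _ = ∏ i, ∏ s, ∏ x : (Σ j, Fin (n j)), l x.1 x.2 ^ w i s x := by
        have : ∀ i, ∏ s, ∏ x : (Σ j, Fin (n j)), l x.1 x.2 ^ w i s x
            = ∏ x : (Σ j, Fin (n j)), l x.1 x.2 ^ (∑ s, w i s x) := by
          intro i
          rw [Finset.prod_comm]
          exact Finset.prod_congr rfl fun x _ => (Real.rpow_sum_of_pos (hl _ _) _ _).symm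
        simp only [this]
        rw [Finset.prod_comm]
        refine Finset.prod_congr rfl fun x _ => ?_
        rw [← hw2 x]
        exact Real.rpow_sum_of_pos (hl _ _) _ _
    _ ≤ _ := Finset.prod_le_prod (fun i _ => Finset.prod_nonneg fun s _ => hpos i s)
        fun i _ => Finset.prod_le_prod (fun s _ => hpos i s) fun s _ => hineq i s

/-- The matrix `M_i`. -/
noncomputable def quivM {k m : ℕ} {d : Fin k → ℕ} {n : Fin m → ℕ} {A : Fin k → Fin m → ℕ}
    (p : Fin m → ℝ)
    (V : ∀ i : Fin k, ∀ j : Fin m, Fin (A i j) → Matrix (Fin (n j)) (Fin (d i)) ℝ)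
    (Y : ∀ j : Fin m, Matrix (Fin (n j)) (Fin (n j)) ℝ) (i : Fin k) :
    Matrix (Fin (d i)) (Fin (d i)) ℝ :=
  ∑ j : Fin m, p j • ∑ a : Fin (A i j), (V i j a)ᵀ * Y j * V i j a

section
variable {k m : ℕ} {d : Fin k → ℕ} {n : Fin m → ℕ} {A : Fin k → Fin m → ℕ} {p : Fin m → ℝ}
  {V : ∀ i : Fin k, ∀ j : Fin m, Fin (A i j) → Matrix (Fin (n j)) (Fin (d i)) ℝ}
  {Y : ∀ j : Fin m, Matrix (Fin (n j)) (Fin (n j)) ℝ}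

lemma quivM_posSemidef (hp : ∀ j, 0 < p j) (hY : ∀ j, (Y j).PosDef) (i : Fin k) :
    (quivM p V Y i).PosSemidef := by
  refine posSemidef_sum _ fun j _ => ?_
  refine PosSemidef.smul ?_ (hp j).le
  refine posSemidef_sum _ fun a _ => ?_
  have := (hY j).posSemidef.conjTranspose_mul_mul_same (V i j a)
  rwa [conjTranspose_eq_transpose_of_trivial] at this

lemma quivM_congr (R : ∀ j, Matrix (Fin (n j)) (Fin (n j)) ℝ)
    (D : ∀ j, Matrix (Fin (n j)) (Fin (n j)) ℝ)
    (S : ∀ i, Matrix (Fin (d i)) (Fin (d i)) ℝ) (hY : ∀ j, Y j = R j * D j * (R j)ᵀ) (i : Fin k) :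
    quivM p (fun i j a => (R j)ᵀ * V i j a * S i) D i = (S i)ᵀ * quivM p V Y i * S i := by
  simp only [quivM, Matrix.mul_sum, Matrix.sum_mul, Matrix.mul_smul, Matrix.smul_mul]
  refine Finset.sum_congr rfl fun j _ => ?_
  congr 1
  refine Finset.sum_congr rfl fun a _ => ?_
  rw [hY j]
  simp only [transpose_mul, transpose_transpose, Matrix.mul_assoc]

lemma capVal_le_of_critical (hp : ∀ j, 0 < p j) (hY : ∀ j, (Y j).PosDef)
    (hM : ∀ i, IsUnit (quivM p V Y i).det)
    (hcrit : ∀ j, ∑ i : Fin k, ∑ a : Fin (A i j),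
      V i j a * (quivM p V Y i)⁻¹ * (V i j a)ᵀ = (Y j)⁻¹)
    {Z : ∀ j : Fin m, Matrix (Fin (n j)) (Fin (n j)) ℝ} (hZ : ∀ j, (Z j).PosDef) :
    capVal p V Y ≤ capVal p V Z := by
  have hMp : ∀ i, (quivM p V Y i).PosDef := fun i =>
    posDef_of_isUnit_det (quivM_posSemidef hp hY i) (hM i)
  choose Q l hQu hQY hQZ using fun j => exists_simul_diag (hY j) (hZ j).isHermitian
  choose P μ hPu hPM hPX using fun i =>
    exists_simul_diag (hMp i) (quivM_posSemidef (V := V) hp hZ i).isHermitian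
  have hl : ∀ j t, 0 < l j t := fun j => (simul_diag_pos (hQu j) (hQZ j)).mp (hZ j)
  have hPt : ∀ i, IsUnit ((P i)ᵀ).det := fun i => by rw [det_transpose]; exact hPu i
  have hcanc : ∀ i (D : Matrix (Fin (d i)) (Fin (d i)) ℝ),
      ((P i)ᵀ⁻¹)ᵀ * (P i * D * (P i)ᵀ) * (P i)ᵀ⁻¹ = D := by
    intro i D
    rw [transpose_nonsing_inv, transpose_transpose, Matrix.mul_assoc (P i),
      nonsing_inv_mul_cancel_left _ _ (hPu i), mul_nonsing_inv_cancel_right _ _ (hPt i)]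
  have key := geometric_ineq hp (fun i j a => (Q j)ᵀ * V i j a * (P i)ᵀ⁻¹) ?_ ?_ l hl μ ?_
  · have e1 : ∀ j, (Z j).det = (Y j).det * ∏ t, l j t := fun j => det_simul (hQY j) (hQZ j)
    have e2 : ∀ i, (quivM p V Z i).det = (quivM p V Y i).det * ∏ s, μ i s :=
      fun i => det_simul (hPM i) (hPX i)
    change (∏ i, (quivM p V Y i).det) / _ ≤ (∏ i, (quivM p V Z i).det) / _
    have e3 : ∏ j, (Z j).det ^ p j = (∏ j, (Y j).det ^ p j) * ∏ j, (∏ t, l j t) ^ p j := by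
      rw [← Finset.prod_mul_distrib]
      refine Finset.prod_congr rfl fun j _ => ?_
      rw [e1 j, Real.mul_rpow (hY j).det_pos.le (Finset.prod_nonneg fun t _ => (hl j t).le)]
    have hYp : 0 < ∏ j, (Y j).det ^ p j :=
      Finset.prod_pos fun j _ => Real.rpow_pos_of_pos (hY j).det_pos _
    have hlp : 0 < ∏ j, (∏ t, l j t) ^ p j :=
      Finset.prod_pos fun j _ => Real.rpow_pos_of_pos (Finset.prod_pos fun t _ => hl j t) _
    have hMd : 0 < ∏ i, (quivM p V Y i).det := Finset.prod_pos fun i _ => (hMp i).det_pos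
    simp only [e2]
    rw [Finset.prod_mul_distrib, e3, mul_div_mul_comm]
    exact le_mul_of_one_le_right (div_pos hMd hYp).le ((one_le_div hlp).mpr key)
  · intro i
    have := quivM_congr (p := p) (V := V) Q (fun j => 1) (fun i => (P i)ᵀ⁻¹)
      (Y := Y) (by simpa using hQY) i
    have h := hcanc i 1
    rw [Matrix.mul_one, ← hPM i, ← this] at h
    simpa only [quivM, Matrix.mul_one] using h
  · intro j
    have hQt : IsUnit ((Q j)ᵀ).det := by rw [det_transpose]; exact hQu j
    have h : (Q j)ᵀ * (Y j)⁻¹ * Q j = 1 := by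
      rw [hQY j, Matrix.mul_inv_rev, mul_nonsing_inv_cancel_left _ _ hQt, nonsing_inv_mul _ (hQu j)]
    rw [← hcrit j] at h
    rw [← h]
    simp only [Matrix.mul_sum, Matrix.sum_mul]
    refine Finset.sum_congr rfl fun i _ => Finset.sum_congr rfl fun a _ => ?_
    have hi : (quivM p V Y i)⁻¹ = (P i)ᵀ⁻¹ * ((P i)ᵀ⁻¹)ᵀ := by
      conv_lhs => rw [hPM i]
      rw [Matrix.mul_inv_rev, transpose_nonsing_inv, transpose_transpose]
    rw [hi]
    simp only [transpose_mul, transpose_transpose, Matrix.mul_assoc]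
  · intro i
    have := quivM_congr (p := p) (V := V) Q (fun j => diagonal (l j)) (fun i => (P i)ᵀ⁻¹)
      (Y := Z) hQZ i
    rw [hPX i, hcanc i] at this
    exact this

lemma capVal_pos (hY : ∀ j, (Y j).PosDef) (hM : ∀ i, (quivM p V Y i).PosDef) :
    0 < capVal p V Y :=
  div_pos (Finset.prod_pos fun i _ => (hM i).det_pos)
    (Finset.prod_pos fun j _ => Real.rpow_pos_of_pos (hY j).det_pos _)

lemma cap_eq_of_min (hY : ∀ j, (Y j).PosDef)
    (h : ∀ Z : ∀ j : Fin m, Matrix (Fin (n j)) (Fin (n j)) ℝ, (∀ j, (Z j).PosDef) →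
      capVal p V Y ≤ capVal p V Z) : cap p V = capVal p V Y := by
  refine IsLeast.csInf_eq ⟨⟨Y, hY, rfl⟩, ?_⟩
  rintro r ⟨Z, hZ, rfl⟩
  exact h Z hZ

lemma cap_le (hp : ∀ j, 0 < p j) {Z : ∀ j : Fin m, Matrix (Fin (n j)) (Fin (n j)) ℝ}
    (hZ : ∀ j, (Z j).PosDef) : cap p V ≤ capVal p V Z := by
  refine csInf_le ⟨0, ?_⟩ ⟨Z, hZ, rfl⟩
  rintro r ⟨W, hW, rfl⟩
  exact div_nonneg (Finset.prod_nonneg fun i _ => (quivM_posSemidef hp hW i).det_nonneg)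
    (Finset.prod_nonneg fun j _ => Real.rpow_nonneg (hW j).det_pos.le _)

lemma hasDerivAt_det {N : ℕ} {M : Matrix (Fin N) (Fin N) ℝ} (hM : IsUnit M.det)
    (H : Matrix (Fin N) (Fin N) ℝ) :
    HasDerivAt (fun t : ℝ => (M + t • H).det) (M.det * (M⁻¹ * H).trace) 0 := by
  have e : ∀ t : ℝ, (M + t • H).det = M.det * (1 + (M⁻¹ * H).trace * t +
      (det (1 + (Polynomial.X : Polynomial ℝ) • (M⁻¹ * H).map Polynomial.C)).divX.divX.eval t
        * t ^ 2) := by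
    intro t
    rw [← det_one_add_smul, ← det_mul, Matrix.mul_add, Matrix.mul_one, Matrix.mul_smul,
      mul_nonsing_inv_cancel_left _ _ hM]
  rw [show (fun t : ℝ => (M + t • H).det) = _ from funext e]
  refine HasDerivAt.const_mul (M.det) ?_
  have h1 := ((hasDerivAt_id (0 : ℝ)).const_mul ((M⁻¹ * H).trace)).const_add 1
  have h2 := ((det (1 + (Polynomial.X : Polynomial ℝ) •
    (M⁻¹ * H).map Polynomial.C)).divX.divX.hasDerivAt (0 : ℝ)).mul (hasDerivAt_pow 2 (0 : ℝ))
  exact (h1.add h2).congr_deriv (by simp)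

lemma hasDerivAt_logdet {N : ℕ} {M : Matrix (Fin N) (Fin N) ℝ} (hM : IsUnit M.det)
    (H : Matrix (Fin N) (Fin N) ℝ) :
    HasDerivAt (fun t : ℝ => Real.log (M + t • H).det) ((M⁻¹ * H).trace) 0 := by
  have h := (hasDerivAt_det hM H).log (by simpa using hM.ne_zero)
  convert h using 1
  simp [hM.ne_zero]

lemma eventually_posDef {N : ℕ} {M H : Matrix (Fin N) (Fin N) ℝ} (hM : M.PosDef)
    (hH : H.IsHermitian) : ∀ᶠ t : ℝ in nhds 0, (M + t • H).PosDef := by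
  obtain ⟨P, μ, hP, hPM, hPH⟩ := exists_simul_diag hM hH
  have : ∀ᶠ t : ℝ in nhds 0, ∀ s, 0 < 1 + t * μ s := by
    rw [Filter.eventually_all]
    intro s
    have hc : Continuous fun t : ℝ => 1 + t * μ s := by fun_prop
    exact hc.continuousAt.eventually (lt_mem_nhds (by simp))
  filter_upwards [this] with t ht
  refine (simul_diag_pos hP (μ := fun s => 1 + t * μ s) ?_).mpr ht
  have : diagonal (fun s => 1 + t * μ s) = 1 + t • diagonal μ := by
    rw [← diagonal_one, ← diagonal_smul, diagonal_add]; rfl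
  rw [this, hPM, hPH]
  simp [Matrix.mul_add, Matrix.add_mul]

lemma critical_of_min (hp : ∀ j, 0 < p j) (hY : ∀ j, (Y j).PosDef)
    (hM : ∀ i, (quivM p V Y i).PosDef)
    (hmin : ∀ Z : ∀ j : Fin m, Matrix (Fin (n j)) (Fin (n j)) ℝ, (∀ j, (Z j).PosDef) →
      capVal p V Y ≤ capVal p V Z) (j : Fin m) :
    ∑ i : Fin k, ∑ a : Fin (A i j),
      V i j a * (quivM p V Y i)⁻¹ * (V i j a)ᵀ = (Y j)⁻¹ := by
  let G : ∀ j : Fin m, Matrix (Fin (n j)) (Fin (n j)) ℝ := fun j =>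
    ∑ i : Fin k, ∑ a : Fin (A i j), V i j a * (quivM p V Y i)⁻¹ * (V i j a)ᵀ - (Y j)⁻¹
  have hG : ∀ j, (G j).IsHermitian := by
    intro j
    refine IsHermitian.sub (PosSemidef.isHermitian ?_) (hY j).inv.isHermitian
    refine posSemidef_sum _ fun i _ => posSemidef_sum _ fun a _ => ?_
    have := (hM i).inv.posSemidef.mul_mul_conjTranspose_same (V i j a)
    rwa [conjTranspose_eq_transpose_of_trivial] at this
  have hlin : ∀ (t : ℝ) i, quivM p V (fun j => Y j + t • G j) i
      = quivM p V Y i + t • quivM p V G i := by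
    intro t i
    simp only [quivM, Finset.smul_sum, ← Finset.sum_add_distrib, Matrix.mul_add, Matrix.add_mul,
      Matrix.mul_smul, Matrix.smul_mul, smul_add]
    refine Finset.sum_congr rfl fun j _ => Finset.sum_congr rfl fun a _ => ?_
    rw [smul_comm]
  have hher : ∀ i, (quivM p V G i).IsHermitian := by
    intro i
    have hGt : ∀ j, (G j)ᵀ = G j := fun j => by
      have := (hG j).eq
      rwa [conjTranspose_eq_transpose_of_trivial] at this
    unfold IsHermitian
    rw [conjTranspose_eq_transpose_of_trivial]
    simp [quivM, transpose_sum, transpose_mul, hGt, Matrix.mul_assoc]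
  let g : ℝ → ℝ := fun t => ∑ i, Real.log (quivM p V Y i + t • quivM p V G i).det
    - ∑ j, p j * Real.log (Y j + t • G j).det
  have hgd : HasDerivAt g (∑ i, ((quivM p V Y i)⁻¹ * quivM p V G i).trace
      - ∑ j, p j * ((Y j)⁻¹ * G j).trace) 0 := by
    refine HasDerivAt.sub ?_ ?_
    · exact HasDerivAt.fun_sum fun i _ => hasDerivAt_logdet (hM i).det_pos.ne'.isUnit _
    · exact HasDerivAt.fun_sum fun j _ =>
        (hasDerivAt_logdet (hY j).det_pos.ne'.isUnit _).const_mul _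
  have hev : ∀ᶠ t : ℝ in nhds 0, g t = Real.log (capVal p V fun j => Y j + t • G j) ∧
      (∀ j, (Y j + t • G j).PosDef) := by
    have h1 : ∀ᶠ t : ℝ in nhds 0, ∀ j, (Y j + t • G j).PosDef :=
      Filter.eventually_all.mpr fun j => eventually_posDef (hY j) (hG j)
    have h2 : ∀ᶠ t : ℝ in nhds 0, ∀ i, (quivM p V Y i + t • quivM p V G i).PosDef :=
      Filter.eventually_all.mpr fun i => eventually_posDef (hM i) (hher i)
    filter_upwards [h1, h2] with t h1 h2
    refine ⟨?_, h1⟩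
    change _ = Real.log ((∏ i, (quivM p V (fun j => Y j + t • G j) i).det) / _)
    simp only [hlin]
    rw [Real.log_div, Real.log_prod, Real.log_prod]
    · simp only [g]
      congr 1
      exact Finset.sum_congr rfl fun j _ => (Real.log_rpow (h1 j).det_pos _).symm
    · exact fun j _ => (Real.rpow_pos_of_pos (h1 j).det_pos _).ne'
    · exact fun i _ => (h2 i).det_pos.ne'
    · exact (Finset.prod_pos fun i _ => (h2 i).det_pos).ne'
    · exact (Finset.prod_pos fun j _ => Real.rpow_pos_of_pos (h1 j).det_pos _).ne'
  have hloc : IsLocalMin g 0 := by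
    have h0 : g 0 = Real.log (capVal p V Y) := by
      have := hev.self_of_nhds.1
      simpa using this
    filter_upwards [hev] with t ht
    rw [h0, ht.1]
    exact Real.log_le_log (capVal_pos hY hM) (hmin _ ht.2)
  have hz := hloc.hasDerivAt_eq_zero hgd
  have e : ∑ i, ((quivM p V Y i)⁻¹ * quivM p V G i).trace
      - ∑ j, p j * ((Y j)⁻¹ * G j).trace = ∑ j, p j * (G j * G j).trace := by
    have e1 : ∀ j, (G j * G j).trace = ∑ i, ∑ a : Fin (A i j),
        (V i j a * (quivM p V Y i)⁻¹ * (V i j a)ᵀ * G j).trace - ((Y j)⁻¹ * G j).trace := by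
      intro j
      conv_lhs => rw [show G j * G j = (∑ i : Fin k, ∑ a : Fin (A i j),
        V i j a * (quivM p V Y i)⁻¹ * (V i j a)ᵀ - (Y j)⁻¹) * G j from rfl]
      rw [Matrix.sub_mul, trace_sub]
      simp only [Matrix.sum_mul, trace_sum]
    simp only [e1, mul_sub, Finset.sum_sub_distrib]
    congr 1
    have e2 : ∀ i, ((quivM p V Y i)⁻¹ * quivM p V G i).trace = ∑ j, p j * ∑ a : Fin (A i j),
        (V i j a * (quivM p V Y i)⁻¹ * (V i j a)ᵀ * G j).trace := by
      intro i
      conv_lhs => rw [show quivM p V G i = ∑ j : Fin m, p j • ∑ a : Fin (A i j),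
        (V i j a)ᵀ * G j * V i j a from rfl]
      simp only [Matrix.mul_sum, Matrix.mul_smul, trace_sum, trace_smul, smul_eq_mul]
      refine Finset.sum_congr rfl fun j _ => ?_
      congr 1
      refine Finset.sum_congr rfl fun a _ => ?_
      rw [← Matrix.mul_assoc, trace_mul_comm]
      simp only [Matrix.mul_assoc]
    simp only [e2]
    rw [Finset.sum_comm]
    simp only [Finset.mul_sum]
  rw [e] at hz
  have hnn : ∀ j, 0 ≤ (G j * G j).trace ∧ ((G j * G j).trace = 0 → G j = 0) := by
    intro j
    have h := (hG j).eq
    have h1 := (posSemidef_conjTranspose_mul_self (G j)).trace_nonneg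
    have h2 := (trace_conjTranspose_mul_self_eq_zero_iff (A := G j)).mp
    rw [h] at h1 h2
    exact ⟨h1, h2⟩
  have hz' := (Finset.sum_eq_zero_iff_of_nonneg
    (fun j _ => mul_nonneg (hp j).le (hnn j).1)).mp hz j (Finset.mem_univ j)
  have := (hnn j).2 ((mul_eq_zero.mp hz').resolve_left (hp j).ne')
  exact sub_eq_zero.mp this

end

/-- `(V, p)` is extremizable iff there is a tuple `Y` of positive definite
matrices such that each `M_i := ∑_j p_j ∑_a V_aᵀ Y_j V_a` is invertible and
`∑_i ∑_a V_a M_i⁻¹ V_aᵀ = Y_j⁻¹` for all `j`; moreover, for any such `Y`,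
`cap(V, p) = (∏_i det M_i) / (∏_j det(Y_j)^{p_j})`. -/
theorem extremizable_iff_scaling_solution {k m : ℕ} (hk : 0 < k) (hm : 0 < m)
    {d : Fin k → ℕ} {n : Fin m → ℕ} {A : Fin k → Fin m → ℕ} {p : Fin m → ℝ}
    (hd : ∀ i, 0 < d i) (hn : ∀ j, 0 < n j) (hp : ∀ j, 0 < p j)
    (hbal : ∑ i : Fin k, (d i : ℝ) = ∑ j : Fin m, p j * (n j : ℝ))
    (V : ∀ i : Fin k, ∀ j : Fin m, Fin (A i j) → Matrix (Fin (n j)) (Fin (d i)) ℝ) :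
    (Extremizable p V ↔
      ∃ Y : ∀ j : Fin m, Matrix (Fin (n j)) (Fin (n j)) ℝ,
        (∀ j, (Y j).PosDef) ∧
        (∀ i, IsUnit (∑ j : Fin m, p j • ∑ a : Fin (A i j), (V i j a)ᵀ * Y j * V i j a).det) ∧
        (∀ j, ∑ i : Fin k, ∑ a : Fin (A i j),
            V i j a * (∑ j' : Fin m, p j' • ∑ a' : Fin (A i j'), (V i j' a')ᵀ * Y j' * V i j' a')⁻¹
              * (V i j a)ᵀ = (Y j)⁻¹)) ∧
    (∀ Y : ∀ j : Fin m, Matrix (Fin (n j)) (Fin (n j)) ℝ,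
      (∀ j, (Y j).PosDef) →
      (∀ i, IsUnit (∑ j : Fin m, p j • ∑ a : Fin (A i j), (V i j a)ᵀ * Y j * V i j a).det) →
      (∀ j, ∑ i : Fin k, ∑ a : Fin (A i j),
          V i j a * (∑ j' : Fin m, p j' • ∑ a' : Fin (A i j'), (V i j' a')ᵀ * Y j' * V i j' a')⁻¹
            * (V i j a)ᵀ = (Y j)⁻¹) →
      cap p V = (∏ i : Fin k, (∑ j : Fin m, p j • ∑ a : Fin (A i j), (V i j a)ᵀ * Y j * V i j a).det)
          / (∏ j : Fin m, (Y j).det ^ (p j))) := by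

  have main : ∀ Y : ∀ j : Fin m, Matrix (Fin (n j)) (Fin (n j)) ℝ,
      (∀ j, (Y j).PosDef) → (∀ i, IsUnit (quivM p V Y i).det) →
      (∀ j, ∑ i : Fin k, ∑ a : Fin (A i j),
          V i j a * (quivM p V Y i)⁻¹ * (V i j a)ᵀ = (Y j)⁻¹) → cap p V = capVal p V Y :=
    fun Y hY hM hc => cap_eq_of_min hY fun Z hZ => capVal_le_of_critical hp hY hM hc hZ
  refine ⟨⟨?_, ?_⟩, main⟩
  · rintro ⟨hpos, Y, hY, hYc⟩
    have hu : ∀ i, IsUnit (quivM p V Y i).det := by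
      intro i
      rw [← hYc] at hpos
      refine isUnit_iff_ne_zero.mpr fun h0 => hpos.ne' ?_
      change (∏ i, (quivM p V Y i).det) / _ = 0
      rw [Finset.prod_eq_zero (Finset.mem_univ i) h0, zero_div]
    refine ⟨Y, hY, hu, ?_⟩
    exact critical_of_min hp hY
      (fun i => posDef_of_isUnit_det (quivM_posSemidef hp hY i) (hu i))
      (fun Z hZ => hYc ▸ cap_le hp hZ)
  · rintro ⟨Y, hY, hM, hc⟩
    have h := main Y hY hM hc
    refine ⟨?_, Y, hY, h.symm⟩
    rw [h]
    exact capVal_pos hY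
      (fun i => posDef_of_isUnit_det (quivM_posSemidef hp hY i) (hM i))
end

section
/- Assume p_1,…,p_m are positive rational numbers. Let 𝒮 ⊆ ℝ^{D_1}, with D_1 = ∑_{i,j} |𝒜_{ij}| d_i n_j, be the set of all matrix tuples V such that (V, p) is feasible. Then the graph of V ↦ cap(V, p) on 𝒮 is a semi-algebraic subset of ℝ^{D_1+1}; in particular, there exists a nonzero real polynomial P in D_1 + 1 variables such that P(V, cap(V, p)) = 0 for every V ∈ 𝒮. -/
open Matrix BigOperators

/-- The index set of coordinates on the space `ℝ^{D₁}` of matrix tuples,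
`D₁ = ∑_{i,j} |𝒜_{ij}| d_i n_j`. -/
abbrev QIdx (k m : ℕ) (d : Fin k → ℕ) (n : Fin m → ℕ) (A : Fin k → Fin m → ℕ) : Type :=
  (i : Fin k) × (j : Fin m) × (Fin (A i j) × Fin (n j) × Fin (d i))

/-- Reassemble a point of `ℝ^{D₁}` into a tuple of matrices (a quiver datum). -/
def toDatum {k m : ℕ} {d : Fin k → ℕ} {n : Fin m → ℕ} {A : Fin k → Fin m → ℕ}
    (x : QIdx k m d n A → ℝ) :
    ∀ i : Fin k, ∀ j : Fin m, Fin (A i j) → Matrix (Fin (n j)) (Fin (d i)) ℝ :=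
  fun i j a => Matrix.of fun r c => x ⟨i, j, a, r, c⟩

/-- A subset of `ℝ^ι` (`ι` finite) is semi-algebraic if it is a finite union of sets, each
defined by finitely many polynomial equalities and finitely many strict polynomial
inequalities. -/
def IsSemialgebraic {ι : Type} [Fintype ι] (S : Set (ι → ℝ)) : Prop :=
  ∃ (N M : ℕ) (P : Fin N → Fin M → MvPolynomial ι ℝ) (isEq : Fin N → Fin M → Bool),
    S = ⋃ t : Fin N, { x | ∀ l : Fin M,
      if isEq t l then MvPolynomial.eval x (P t l) = 0
      else 0 < MvPolynomial.eval x (P t l) }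


section QE
open Polynomial Filter Topology

/-- Pseudo-division with an even power of the leading coefficient. -/
lemma qe_pseudoRem {R : Type*} [CommRing R] (f : R[X]) (hf : 1 ≤ f.natDegree) (p : R[X]) :
    ∃ (k : ℕ) (q r : R[X]), C (f.leadingCoeff) ^ k * p = q * f + r ∧
      r.natDegree < f.natDegree := by
  induction hN : p.natDegree using Nat.strong_induction_on generalizing p with
  | _ N ih =>
    by_cases hlt : p.natDegree < f.natDegree
    · exact ⟨0, 0, p, by simp, hlt⟩
    · push Not at hlt
      set p1 : R[X] := C f.leadingCoeff * p - C p.leadingCoeff * X ^ (p.natDegree - f.natDegree) * f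
        with hp1
      have hdeg : p1.natDegree < p.natDegree := by
        have h1 : p1.natDegree ≤ p.natDegree := by
          refine (natDegree_sub_le _ _).trans (max_le (natDegree_C_mul_le _ _) ?_)
          refine natDegree_mul_le.trans ?_
          have := natDegree_C_mul_X_pow_le p.leadingCoeff (p.natDegree - f.natDegree)
          omega
        have h2 : p1.coeff p.natDegree = 0 := by
          have h3 : (X ^ (p.natDegree - f.natDegree) * f).coeff p.natDegree = f.leadingCoeff := by
            conv_lhs => rw [show p.natDegree = f.natDegree + (p.natDegree - f.natDegree) by omega]
            rw [show f.natDegree + (p.natDegree - f.natDegree) - f.natDegree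
              = p.natDegree - f.natDegree by omega, coeff_X_pow_mul]
            rfl
          rw [hp1, coeff_sub, mul_assoc, coeff_C_mul, coeff_C_mul, h3]
          rw [coeff_natDegree, mul_comm, sub_self]
        refine lt_of_le_of_ne h1 fun h => ?_
        have : p1.leadingCoeff = 0 := by rw [leadingCoeff, h, h2]
        rw [leadingCoeff_eq_zero] at this
        rw [this] at h
        simp at h
        omega
      obtain ⟨k, q, r, h, hr⟩ := ih _ (hN ▸ hdeg) p1 rfl
      refine ⟨k + 1, q + C f.leadingCoeff ^ k *
        (C p.leadingCoeff * X ^ (p.natDegree - f.natDegree)), r, ?_, hr⟩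
      have : C f.leadingCoeff * p = p1 +
          C p.leadingCoeff * X ^ (p.natDegree - f.natDegree) * f := by rw [hp1]; ring
      rw [pow_succ, mul_assoc, this, mul_add, h]
      ring

/-- `r` is a pseudo-remainder of `p` by `f`. -/
def QERem {R : Type*} [CommRing R] (f p r : R[X]) : Prop :=
  (∃ (k : ℕ) (q : R[X]), C (f.leadingCoeff ^ k * f.leadingCoeff ^ k) * p = q * f + r) ∧
    r.natDegree < f.natDegree

lemma qe_exists_rem {R : Type*} [CommRing R] (f : R[X]) (hf : 1 ≤ f.natDegree) (p : R[X]) :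
    ∃ r, QERem f p r := by
  obtain ⟨k, q, r, h, hr⟩ := qe_pseudoRem f hf p
  refine ⟨C (f.leadingCoeff) ^ k * r, ⟨k, C (f.leadingCoeff) ^ k * q, ?_⟩, ?_⟩
  · rw [C_mul, C_pow, mul_assoc, h]; ring
  · rw [← C_pow]
    exact (natDegree_C_mul_le _ _).trans_lt hr

/-- Closure of a finite set of polynomials under the operations of the elimination procedure,
at degrees at least `k`. -/
def QEClosed {R : Type*} [CommRing R] (k : ℕ) (E : Finset R[X]) : Prop :=
  ∀ f ∈ E, k ≤ f.natDegree → 1 ≤ f.natDegree → derivative f ∈ E ∧ f.eraseLead ∈ E ∧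
    ∀ p ∈ E, f.natDegree ≤ p.natDegree → ∃ r ∈ E, QERem f p r

lemma qe_closed_step {R : Type*} [CommRing R] (k : ℕ) (E : Finset R[X])
    (h : QEClosed (k + 1) E) : ∃ E' : Finset R[X], E ⊆ E' ∧ QEClosed k E' := by
  classical
  rcases Nat.eq_zero_or_pos k with rfl | hk
  · exact ⟨E, subset_rfl, fun f hf _ h1 => h f hf h1 h1⟩
  choose! rem hrem using fun (f : R[X]) (hf : 1 ≤ f.natDegree) (p : R[X]) => qe_exists_rem f hf p
  set D := E.filter (fun f => f.natDegree = k) with hD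
  set E' := E ∪ D.image derivative ∪ D.image eraseLead ∪
    (D ×ˢ E).image (fun z => rem z.1 z.2) with hE'
  have hsub : E ⊆ E' := by
    intro a ha; simp [hE', ha]
  have hback : ∀ f ∈ E', k ≤ f.natDegree → f ∈ E := by
    intro f hf hkf
    simp only [hE', Finset.mem_union, Finset.mem_image, Finset.mem_product, Prod.exists, hD,
      Finset.mem_filter] at hf
    rcases hf with ((hf | ⟨g, ⟨hg, hgk⟩, rfl⟩) | ⟨g, ⟨hg, hgk⟩, rfl⟩) | ⟨g, p, ⟨⟨hg, hgk⟩, hp⟩, rfl⟩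
    · exact hf
    · have := natDegree_derivative_lt (p := g) (by omega); omega
    · have := eraseLead_natDegree_le g; omega
    · have := (hrem g (by omega) p).2; omega
  refine ⟨E', hsub, fun f hf hkf h1 => ?_⟩
  have hfE := hback f hf hkf
  by_cases hfk : f.natDegree = k
  · refine ⟨?_, ?_, fun p hp hfp => ⟨rem f p, ?_, hrem f h1 p⟩⟩
    · simp only [hE', Finset.mem_union, Finset.mem_image]
      exact Or.inl (Or.inl (Or.inr ⟨f, by simp [hD, hfE, hfk], rfl⟩))
    · simp only [hE', Finset.mem_union, Finset.mem_image]
      exact Or.inl (Or.inr ⟨f, by simp [hD, hfE, hfk], rfl⟩)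
    · have hpE := hback p hp (hkf.trans hfp)
      simp only [hE', Finset.mem_union, Finset.mem_image]
      exact Or.inr ⟨(f, p), by simp [hD, hfE, hfk, hpE], rfl⟩
  · obtain ⟨a, b, c⟩ := h f hfE (by omega) h1
    refine ⟨hsub a, hsub b, fun p hp hfp => ?_⟩
    obtain ⟨r, hr, hr'⟩ := c p (hback p hp (hkf.trans hfp)) hfp
    exact ⟨r, hsub hr, hr'⟩

lemma qe_exists_closed {R : Type*} [CommRing R] (F : Finset R[X]) :
    ∃ E : Finset R[X], F ⊆ E ∧ QEClosed 0 E := by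
  have key : ∀ (k : ℕ) (E : Finset R[X]), QEClosed k E →
      ∃ E' : Finset R[X], E ⊆ E' ∧ QEClosed 0 E' := by
    intro k
    induction k with
    | zero => exact fun E h => ⟨E, subset_rfl, h⟩
    | succ k ih =>
      intro E h
      obtain ⟨E1, h1, h2⟩ := qe_closed_step k E h
      obtain ⟨E2, h3, h4⟩ := ih E1 h2
      exact ⟨E2, h1.trans h3, h4⟩
  refine key (F.sup natDegree + 1) F fun f hf hk => ?_
  have := Finset.le_sup (f := natDegree) hf
  omega

/-- Signs agree. -/
lemma qe_monotone_sign {f f' : ℝ → ℝ} (hf : ∀ t, HasDerivAt f (f' t) t) {u v : ℝ}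
    (h : ∀ c ∈ Set.Icc u v, 0 ≤ f' c) : MonotoneOn f (Set.Icc u v) := by
  apply monotoneOn_of_deriv_nonneg (convex_Icc u v)
  · exact fun x _ => (hf x).continuousAt.continuousWithinAt
  · exact fun x _ => (hf x).differentiableAt.differentiableWithinAt
  · intro x hx
    rw [(hf x).deriv]
    exact h x (interior_subset hx)

lemma qe_hasDeriv {R : Type*} [CommRing R] (x : R →+* ℝ) (f : R[X]) (t : ℝ) :
    HasDerivAt (fun t => f.eval₂ x t) ((derivative f).eval₂ x t) t := by
  have := (f.map x).hasDerivAt t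
  simpa [eval_map, derivative_map] using this

lemma qe_const_sign {f f' : ℝ → ℝ} (hf : ∀ t, HasDerivAt f (f' t) t) {u v : ℝ} (huv : u ≤ v)
    (h : ∀ c ∈ Set.Icc u v, SignType.sign (f' c) = SignType.sign (f' u))
    (he : SignType.sign (f u) = SignType.sign (f v)) :
    ∀ c ∈ Set.Icc u v, SignType.sign (f c) = SignType.sign (f u) := by
  intro c hc
  have hu : u ∈ Set.Icc u v := ⟨le_rfl, huv⟩
  have hv : v ∈ Set.Icc u v := ⟨huv, le_rfl⟩
  rcases le_total 0 (f' u) with h0 | h0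
  · have hm := qe_monotone_sign hf (u := u) (v := v) (fun c hc => by
      have := h c hc
      rcases h0.eq_or_lt with h1 | h1
      · rw [← h1, sign_zero, sign_eq_zero_iff] at this; exact this.ge
      · rw [sign_pos h1, sign_eq_one_iff] at this; exact this.le)
    apply le_antisymm
    · rw [he]; exact SignType.sign.monotone (hm hc hv hc.2)
    · exact SignType.sign.monotone (hm hu hc hc.1)
  · have hm := qe_monotone_sign (f := fun t => - f t) (fun t => (hf t).neg) (u := u) (v := v)
      (fun c hc => by
        have := h c hc
        rcases h0.eq_or_lt with h1 | h1
        · rw [h1, sign_zero, sign_eq_zero_iff] at this; simp [this]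
        · rw [sign_neg h1, sign_eq_neg_one_iff] at this; linarith)
    apply le_antisymm
    · exact SignType.sign.monotone (neg_le_neg_iff.1 (hm hu hc hc.1))
    · rw [he]; exact SignType.sign.monotone (neg_le_neg_iff.1 (hm hc hv hc.2))

/-- Thom's lemma. -/
lemma qe_thom {R : Type*} [CommRing R] (E : Finset R[X])
    (hE : ∀ f ∈ E, 1 ≤ f.natDegree → derivative f ∈ E) (x : R →+* ℝ) (u v : ℝ) (huv : u ≤ v)
    (N : ℕ)
    (h : ∀ f ∈ E, f.natDegree ≤ N → SignType.sign (f.eval₂ x u) = SignType.sign (f.eval₂ x v)) :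
    ∀ f ∈ E, f.natDegree ≤ N → ∀ c ∈ Set.Icc u v,
      SignType.sign (f.eval₂ x c) = SignType.sign (f.eval₂ x u) := by
  induction N with
  | zero =>
    intro f _ hN c _
    rw [eq_C_of_natDegree_le_zero hN]; simp
  | succ N ih =>
    intro f hf hN
    by_cases h1 : 1 ≤ f.natDegree
    · refine qe_const_sign (qe_hasDeriv x f) huv ?_ (h f hf hN)
      have := natDegree_derivative_lt (p := f) (by omega)
      exact ih (fun g hg hgN => h g hg (by omega)) _ (hE f hf h1) (by omega)
    · intro c _
      rw [eq_C_of_natDegree_le_zero (p := f) (by omega)]; simp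

/-- The order of cells is determined by the sign vectors. -/
lemma qe_order {R : Type*} [CommRing R] (E : Finset R[X])
    (hE : ∀ f ∈ E, 1 ≤ f.natDegree → derivative f ∈ E) (x y : R →+* ℝ) (u u' v v' : ℝ)
    (huu : u < u')
    (h1 : ∀ f ∈ E, SignType.sign (f.eval₂ x u) = SignType.sign (f.eval₂ y v))
    (h2 : ∀ f ∈ E, SignType.sign (f.eval₂ x u') = SignType.sign (f.eval₂ y v'))
    (hne : ∃ f ∈ E, SignType.sign (f.eval₂ x u) ≠ SignType.sign (f.eval₂ x u')) : v < v' := by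
  classical
  by_contra hvv
  push Not at hvv
  have hex : ∃ N, ∃ f ∈ E, f.natDegree = N ∧
      SignType.sign (f.eval₂ x u) ≠ SignType.sign (f.eval₂ x u') := by
    obtain ⟨f, hf, h⟩ := hne
    exact ⟨_, f, hf, rfl, h⟩
  obtain ⟨f, hf, hfN, hfne⟩ := Nat.find_spec hex
  have hmin : ∀ g ∈ E, g.natDegree < f.natDegree →
      SignType.sign (g.eval₂ x u) = SignType.sign (g.eval₂ x u') := by
    intro g hg hlt
    by_contra hc
    exact Nat.find_min hex (hfN ▸ hlt) ⟨g, hg, rfl, hc⟩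
  have hd : 1 ≤ f.natDegree := by
    by_contra hd
    apply hfne
    rw [eq_C_of_natDegree_le_zero (p := f) (by omega)]; simp
  have hdE := hE f hf hd
  have hdd := natDegree_derivative_lt (p := f) (by omega)
  have cx := qe_thom E hE x u u' huu.le (f.natDegree - 1) (fun g hg hgN => hmin g hg (by omega))
    _ hdE (by omega)
  have cy := qe_thom E hE y v' v hvv (f.natDegree - 1)
    (fun g hg hgN => by rw [← h1 g hg, ← h2 g hg]; exact (hmin g hg (by omega)).symm)
    _ hdE (by omega)
  have e1 : SignType.sign ((derivative f).eval₂ y v') =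
      SignType.sign ((derivative f).eval₂ x u) := by
    rw [← h2 _ hdE, hmin _ hdE (by omega)]
  have hu : u ∈ Set.Icc u u' := ⟨le_rfl, huu.le⟩
  have hu' : u' ∈ Set.Icc u u' := ⟨huu.le, le_rfl⟩
  have hv : v ∈ Set.Icc v' v := ⟨hvv, le_rfl⟩
  have hv' : v' ∈ Set.Icc v' v := ⟨le_rfl, hvv⟩
  rw [e1] at cy
  apply hfne
  rcases le_total 0 ((derivative f).eval₂ x u) with h0 | h0
  · have nn : ∀ r : ℝ, SignType.sign r = SignType.sign ((derivative f).eval₂ x u) → 0 ≤ r := by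
      intro r this
      rcases h0.eq_or_lt with h1 | h1
      · rw [← h1, sign_zero, sign_eq_zero_iff] at this; exact this.ge
      · rw [sign_pos h1, sign_eq_one_iff] at this; exact this.le
    have mx := qe_monotone_sign (qe_hasDeriv x f) (fun c hc => nn _ (cx c hc))
    have my := qe_monotone_sign (qe_hasDeriv y f) (fun c hc => nn _ (cy c hc))
    apply le_antisymm
    · exact SignType.sign.monotone (mx hu hu' huu.le)
    · rw [h1 f hf, h2 f hf]; exact SignType.sign.monotone (my hv' hv hvv)
  · have nn : ∀ r : ℝ, SignType.sign r = SignType.sign ((derivative f).eval₂ x u) → 0 ≤ -r := by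
      intro r this
      rcases h0.eq_or_lt with h1 | h1
      · rw [h1, sign_zero, sign_eq_zero_iff] at this; simp [this]
      · rw [sign_neg h1, sign_eq_neg_one_iff] at this; linarith
    have mx := qe_monotone_sign (fun t => (qe_hasDeriv x f t).neg) (fun c hc => nn _ (cx c hc))
    have my := qe_monotone_sign (fun t => (qe_hasDeriv y f t).neg) (fun c hc => nn _ (cy c hc))
    apply le_antisymm
    · rw [h1 f hf, h2 f hf]
      exact SignType.sign.monotone (neg_le_neg_iff.1 (my hv' hv hvv))
    · exact SignType.sign.monotone (neg_le_neg_iff.1 (mx hu hu' huu.le))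

/-- The analytic core of the elimination step. -/
lemma qe_core {S : Type*} (a b : ℝ → S) (P Q P' Q' : ℝ → ℝ) (t s : ℝ) (hst : b s = a t)
    (hP : ∀ u, HasDerivAt P (P' u) u) (hQ : ∀ u, HasDerivAt Q (Q' u) u)
    (hP' : ∀ u, a u = a t → 0 < P' u) (hQ' : ∀ u, b u = b s → 0 < Q' u)
    (H1 : ∀ u, ∃ v, b v = a u) (H2 : ∀ v, ∃ u, a u = b v)
    (Ord : ∀ u u' v v', u < u' → a u ≠ a u' → b v = a u → b v' = a u' → v < v')
    (sp : ℝ → Prop) (Nsp : ∀ v, ¬ sp v → ∀ᶠ w in 𝓝 v, b w = b v)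
    (Sp1 : ∀ v z, sp v → a z = b v → Q v ≤ 0 → P z ≤ 0)
    (Sp2 : ∀ v z, sp v → a z = b v → ∀ u, a u = a z → u = z)
    (hJ : ∀ v, b v = b s → ¬ sp v)
    (Unb : ∀ B : ℝ, ∃ v ≥ s, B < |Q v|)
    (hPt : 0 ≤ P t) (hQJ : ∀ v, b v = b s → Q v ≤ 0) : False := by
  by_cases hne : ∃ v, s ≤ v ∧ b v ≠ b s
  swap
  · push Not at hne
    obtain ⟨v, hv, hB⟩ := Unb |Q s|
    have hm := qe_monotone_sign hQ (u := s) (v := v) (fun c hc => (hQ' c (hne c hc.1)).le)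
    have h1 : Q s ≤ Q v := hm ⟨le_rfl, hv⟩ ⟨hv, le_rfl⟩ hv
    have h2 := hQJ v (hne v hv)
    have h3 := hQJ s rfl
    rw [abs_of_nonpos h2, abs_of_nonpos h3] at hB
    linarith
  set T := {v | s ≤ v ∧ b v ≠ b s} with hT
  have hbdd : BddBelow T := ⟨s, fun v hv => hv.1⟩
  have hTne : T.Nonempty := hne
  set w := sInf T with hw
  have hsw : s ≤ w := le_csInf hTne fun v hv => hv.1
  have hlt : ∀ v, s ≤ v → v < w → b v = b s := by
    intro v h1 h2
    by_contra h3
    exact absurd (csInf_le hbdd (show v ∈ T from ⟨h1, h3⟩)) (not_le.2 h2)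
  have hbw : b w ≠ b s := by
    intro h
    have h1 := Nsp w (hJ w h)
    obtain ⟨ε, hε, h2⟩ := Metric.eventually_nhds_iff.1 h1
    obtain ⟨v, hv, hvw⟩ := exists_lt_of_csInf_lt hTne (show sInf T < w + ε by linarith)
    have hwv : w ≤ v := csInf_le hbdd hv
    apply hv.2
    rw [← h]
    apply h2
    rw [Real.dist_eq, abs_of_nonneg (by linarith)]; linarith
  have hsw' : s < w := lt_of_le_of_ne hsw fun h => hbw (by rw [← h])
  have hspw : sp w := by
    by_contra hns
    obtain ⟨ε, hε, h2⟩ := Metric.eventually_nhds_iff.1 (Nsp w hns)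
    have hm : max s (w - ε / 2) < w := max_lt hsw' (by linarith)
    apply hbw
    rw [← hlt (max s (w - ε / 2)) (le_max_left _ _) hm]
    symm
    apply h2
    rw [Real.dist_eq, abs_of_nonpos (by linarith)]
    have := le_max_right s (w - ε / 2)
    linarith
  have hQw : Q w ≤ 0 := by
    have hc : ContinuousWithinAt Q (Set.Iio w) w := (hQ w).continuousAt.continuousWithinAt
    refine le_of_tendsto hc ?_
    filter_upwards [Ioo_mem_nhdsLT hsw'] with v hv
    exact hQJ v (hlt v hv.1.le hv.2)
  obtain ⟨z, hz⟩ := H2 w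
  have hPz := Sp1 w z hspw hz hQw
  have hzt : a z ≠ a t := by rw [hz, ← hst]; exact hbw
  have htz : t < z := by
    by_contra h
    push Not at h
    have h' : z < t := lt_of_le_of_ne h fun h => hzt (by rw [h])
    have := Ord z t w s h' hzt hz.symm hst
    linarith
  have hcst : ∀ u, t < u → u < z → a u = a t := by
    intro u h1 h2
    by_contra h3
    obtain ⟨v, hv⟩ := H1 u
    have h4 := Ord t u s v h1 (Ne.symm h3) hst hv
    have h5 := Ord u z v w h2 (fun h => h2.ne (Sp2 w z hspw hz u h)) hv hz.symm
    exact h3 (by rw [← hv, hlt v h4.le h5, hst])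
  have hmono : StrictMonoOn P (Set.Icc t z) := by
    apply strictMonoOn_of_deriv_pos (convex_Icc t z)
    · exact fun x _ => (hP x).continuousAt.continuousWithinAt
    · intro u hu
      rw [interior_Icc] at hu
      rw [(hP u).deriv]
      exact hP' u (hcst u hu.1 hu.2)
  have := hmono ⟨le_rfl, htz.le⟩ ⟨htz.le, le_rfl⟩ htz
  linarith

/-- The core, in both directions. -/
lemma qe_core2 {S : Type*} (a b : ℝ → S) (P Q P' Q' : ℝ → ℝ) (t s : ℝ) (hst : b s = a t)
    (hP : ∀ u, HasDerivAt P (P' u) u) (hQ : ∀ u, HasDerivAt Q (Q' u) u)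
    (hPQ : ((∀ u, a u = a t → 0 < P' u) ∧ (∀ u, b u = b s → 0 < Q' u)) ∨
      ((∀ u, a u = a t → P' u < 0) ∧ (∀ u, b u = b s → Q' u < 0)))
    (H1 : ∀ u, ∃ v, b v = a u) (H2 : ∀ v, ∃ u, a u = b v)
    (Ord : ∀ u u' v v', u < u' → a u ≠ a u' → b v = a u → b v' = a u' → v < v')
    (sp : ℝ → Prop) (Nsp : ∀ v, ¬ sp v → ∀ᶠ w in 𝓝 v, b w = b v)
    (Sp1 : ∀ v z, sp v → a z = b v → Q v ≤ 0 → P z ≤ 0)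
    (Sp2 : ∀ v z, sp v → a z = b v → ∀ u, a u = a z → u = z)
    (hJ : ∀ v, b v = b s → ¬ sp v)
    (Unb : ∀ B : ℝ, ∃ v ≥ s, B < |Q v|) (Unb' : ∀ B : ℝ, ∃ v ≤ s, B < |Q v|)
    (hPt : 0 ≤ P t) (hQJ : ∀ v, b v = b s → Q v ≤ 0) : False := by
  rcases hPQ with ⟨h1, h2⟩ | ⟨h1, h2⟩
  · exact qe_core a b P Q P' Q' t s hst hP hQ h1 h2 H1 H2 Ord sp Nsp Sp1 Sp2 hJ Unb hPt hQJ
  · refine qe_core (fun u => a (-u)) (fun u => b (-u)) (fun u => P (-u)) (fun u => Q (-u))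
      (fun u => - P' (-u)) (fun u => - Q' (-u)) (-t) (-s) (by simpa using hst)
      (fun u => ?_) (fun u => ?_) (fun u hu => ?_) (fun u hu => ?_) (fun u => ?_) (fun u => ?_)
      ?_ (fun u => sp (-u)) (fun v hv => ?_) (fun v z => Sp1 (-v) (-z)) (fun v z h3 h4 u h5 => ?_)
      (fun v hv => hJ (-v) (by simpa using hv)) (fun B => ?_) (by simpa using hPt)
      (fun v hv => hQJ (-v) (by simpa using hv))
    · have := (hP (-u)).comp u (hasDerivAt_neg u)
      rw [mul_neg_one] at this
      exact this
    · have := (hQ (-u)).comp u (hasDerivAt_neg u)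
      rw [mul_neg_one] at this
      exact this
    · have := h1 (-u) (by simpa using hu); linarith
    · have := h2 (-u) (by simpa using hu); linarith
    · obtain ⟨v, hv⟩ := H1 (-u); exact ⟨-v, by simpa using hv⟩
    · obtain ⟨v, hv⟩ := H2 (-u); exact ⟨-v, by simpa using hv⟩
    · intro u u' v v' h3 h4 h5 h6
      have := Ord (-u') (-u) (-v') (-v) (by linarith) (Ne.symm h4) h6 h5
      linarith
    · have := (continuous_neg.tendsto v).eventually (Nsp (-v) hv)
      exact this
    · have := Sp2 (-v) (-z) h3 h4 (-u) h5
      linarith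
    · obtain ⟨v, hv, hB⟩ := Unb' B
      exact ⟨-v, by simpa using hv, by simpa using hB⟩

lemma qe_unb (Q : ℝ[X]) (hQ : 1 ≤ Q.natDegree) (s : ℝ) :
    (∀ B : ℝ, ∃ v ≥ s, B < |Q.eval v|) ∧ (∀ B : ℝ, ∃ v ≤ s, B < |Q.eval v|) := by
  have hd : 0 < Q.degree := natDegree_pos_iff_degree_pos.1 hQ
  constructor
  · intro B
    obtain ⟨v, h1, h2⟩ := ((eventually_ge_atTop s).and
      ((Q.abs_tendsto_atTop hd).eventually (eventually_gt_atTop B))).exists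
    exact ⟨v, h1, h2⟩
  · intro B
    obtain ⟨v, h1, h2⟩ := ((eventually_le_atBot s).and
      ((Q.abs_tendsto_atBot hd).eventually (eventually_gt_atTop B))).exists
    exact ⟨v, h1, h2⟩

end QE

section QE2
open Polynomial Filter Topology

lemma qe_reduce {R : Type*} [CommRing R] (E : Finset R[X]) (hE : QEClosed 0 E) (x : R →+* ℝ)
    (z : ℝ) (N : ℕ) : ∀ f ∈ E, f.natDegree ≤ N → f.map x ≠ 0 → f.eval₂ x z = 0 →
      ∃ g ∈ E, x g.leadingCoeff ≠ 0 ∧ 1 ≤ g.natDegree ∧ g.eval₂ x z = 0 := by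
  induction N with
  | zero =>
    intro f _ hN hne h0
    rw [eq_C_of_natDegree_le_zero hN] at hne h0
    simp at hne h0
    exact absurd h0 hne
  | succ N ih =>
    intro f hf hN hne h0
    by_cases h1 : 1 ≤ f.natDegree
    · by_cases hl : x f.leadingCoeff = 0
      · have hm : f.eraseLead.map x = f.map x := by
          conv_rhs => rw [← eraseLead_add_C_mul_X_pow f]
          rw [Polynomial.map_add, Polynomial.map_mul, map_C, hl, C_0, zero_mul, add_zero]
        refine ih f.eraseLead (hE f hf (Nat.zero_le _) h1).2.1 ?_ (by rwa [hm]) ?_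
        · have := eraseLead_natDegree_le f; omega
        · rw [← eval_map, hm, eval_map, h0]
      · exact ⟨f, hf, hl, h1, h0⟩
    · rw [eq_C_of_natDegree_le_zero (p := f) (by omega)] at hne h0
      simp at hne h0
      exact absurd h0 hne

lemma qe_step {R : Type*} [CommRing R] (E' : Finset R[X]) (p : R[X])
    (hE' : QEClosed 0 E') (hpd : 1 ≤ p.natDegree) (hder : derivative p ∈ E')
    (hrem : ∀ f ∈ E', 1 ≤ f.natDegree → ∃ r ∈ E', QERem f p r)
    (x y : R →+* ℝ)
    (hlc : ∀ f ∈ E', SignType.sign (x f.leadingCoeff) = SignType.sign (y f.leadingCoeff))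
    (hpx : x p.leadingCoeff ≠ 0) (hpy : y p.leadingCoeff ≠ 0)
    (H1 : ∀ t, ∃ s, ∀ f ∈ E', SignType.sign (f.eval₂ y s) = SignType.sign (f.eval₂ x t))
    (H2 : ∀ t, ∃ s, ∀ f ∈ E', SignType.sign (f.eval₂ x s) = SignType.sign (f.eval₂ y t)) (t : ℝ) :
    ∃ s, (∀ f ∈ E', SignType.sign (f.eval₂ y s) = SignType.sign (f.eval₂ x t)) ∧
      SignType.sign (p.eval₂ y s) = SignType.sign (p.eval₂ x t) := by
  classical
  set a : ℝ → (E' → SignType) := fun u f => SignType.sign (f.1.eval₂ x u) with ha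
  set b : ℝ → (E' → SignType) := fun u f => SignType.sign (f.1.eval₂ y u) with hb
  have hab : ∀ u v, b v = a u ↔
      ∀ f ∈ E', SignType.sign (f.eval₂ y v) = SignType.sign (f.eval₂ x u) := by
    intro u v
    simp only [ha, hb, funext_iff, Subtype.forall]
  have hdE : ∀ f ∈ E', 1 ≤ f.natDegree → derivative f ∈ E' :=
    fun f hf h1 => (hE' f hf (Nat.zero_le _) h1).1
  set sp : ℝ → Prop := fun v => ∃ g ∈ E', y g.leadingCoeff ≠ 0 ∧ 1 ≤ g.natDegree ∧
    g.eval₂ y v = 0 with hsp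
  have hlc0 : ∀ f ∈ E', x f.leadingCoeff ≠ 0 ↔ y f.leadingCoeff ≠ 0 := by
    intro f hf
    have := hlc f hf
    rw [← sign_ne_zero (a := x f.leadingCoeff), this, sign_ne_zero]
  have hremsign : ∀ v z, sp v → a z = b v →
      SignType.sign (p.eval₂ x z) = SignType.sign (p.eval₂ y v) := by
    rintro v z ⟨g, hg, hgl, hg1, hg0⟩ hzv
    have hs := (hab z v).1 hzv.symm
    obtain ⟨r, hr, ⟨k, q, hq⟩, -⟩ := hrem g hg hg1
    have hgx : g.eval₂ x z = 0 := by
      have := hs g hg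
      rw [hg0, sign_zero] at this
      exact sign_eq_zero_iff.1 this.symm
    have aux : ∀ (w : R →+* ℝ) (c : ℝ), w g.leadingCoeff ≠ 0 → g.eval₂ w c = 0 →
        SignType.sign (p.eval₂ w c) = SignType.sign (r.eval₂ w c) := by
      intro w c h1 h2
      have h3 : eval₂ w c _ = eval₂ w c _ := congrArg (fun f => f.eval₂ w c) hq
      rw [eval₂_mul, eval₂_add, eval₂_C, eval₂_mul, h2, mul_zero, zero_add, map_mul,
        map_pow] at h3
      have h4 : 0 < w g.leadingCoeff ^ k * w g.leadingCoeff ^ k :=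
        mul_self_pos.2 (pow_ne_zero _ h1)
      rw [← h3, sign_mul, sign_pos h4, one_mul]
    rw [aux x z ((hlc0 g hg).2 hgl) hgx, aux y v hgl hg0, hs r hr]
  have H1' : ∀ u, ∃ v, b v = a u := fun u => by
    obtain ⟨s, hs⟩ := H1 u; exact ⟨s, (hab u s).2 hs⟩
  have H2' : ∀ v, ∃ u, a u = b v := fun v => by
    obtain ⟨s, hs⟩ := H2 v; exact ⟨s, ((hab s v).2 fun f hf => (hs f hf).symm).symm⟩
  obtain ⟨s, hst⟩ := H1' t
  by_cases hsps : sp s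
  · exact ⟨s, (hab t s).1 hst, (hremsign s t hsps hst.symm).symm⟩
  have hJ : ∀ v, b v = b s → ¬ sp v := by
    rintro v hv ⟨g, hg, hgl, hg1, hg0⟩
    refine hsps ⟨g, hg, hgl, hg1, ?_⟩
    have := congrFun hv ⟨g, hg⟩
    simp only [hb, hg0, sign_zero] at this
    exact sign_eq_zero_iff.1 this.symm
  have Ord : ∀ u u' v v', u < u' → a u ≠ a u' → b v = a u → b v' = a u' → v < v' := by
    intro u u' v v' h1 h2 h3 h4
    refine qe_order E' hdE x y u u' v v' h1 (fun f hf => ((hab _ _).1 h3 f hf).symm)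
      (fun f hf => ((hab _ _).1 h4 f hf).symm) ?_
    obtain ⟨f, hf⟩ := Function.ne_iff.1 h2
    exact ⟨f.1, f.2, hf⟩
  have Nsp : ∀ v, ¬ sp v → ∀ᶠ w in 𝓝 v, b w = b v := by
    intro v hv
    have : ∀ f : E', ∀ᶠ w in 𝓝 v, b w f = b v f := by
      rintro ⟨f, hf⟩
      by_cases hm : f.map y = 0
      · refine Eventually.of_forall fun w => ?_
        simp only [hb, ← eval_map, hm, eval_zero]
      · have h0 : f.eval₂ y v ≠ 0 := fun h0 => hv (qe_reduce E' hE' y v _ f hf le_rfl hm h0)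
        have hc : ContinuousAt (fun w => f.eval₂ y w) v := (qe_hasDeriv y f v).continuousAt
        rcases lt_or_gt_of_ne h0 with h | h
        · filter_upwards [hc.eventually (gt_mem_nhds h)] with w hw
          simp only [hb, sign_neg h, sign_neg hw]
        · filter_upwards [hc.eventually (lt_mem_nhds h)] with w hw
          simp only [hb, sign_pos h, sign_pos hw]
    filter_upwards [eventually_all.2 this] with w hw
    exact funext hw
  have Sp2 : ∀ v z, sp v → a z = b v → ∀ u, a u = a z → u = z := by
    rintro v z ⟨g, hg, hgl, hg1, hg0⟩ hzv u huz
    have hgx : g.eval₂ x z = 0 := by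
      have := congrFun hzv ⟨g, hg⟩
      simp only [ha, hb, hg0, sign_zero] at this
      exact sign_eq_zero_iff.1 this
    have hgu : g.eval₂ x u = 0 := by
      have := congrFun huz ⟨g, hg⟩
      simp only [ha, hgx, sign_zero] at this
      exact sign_eq_zero_iff.1 this
    have hgm : g.map x ≠ 0 := by
      intro h
      have h1 := congrArg (fun f => f.coeff g.natDegree) h
      simp only [coeff_map, coeff_zero, coeff_natDegree] at h1
      exact (hlc0 g hg).2 hgl h1
    have aux : ∀ u z, u < z → a u = a z → g.eval₂ x u = 0 → False := by
      intro u z huz h h0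
      have h1 := qe_thom E' hdE x u z huz.le g.natDegree
        (fun f hf _ => congrFun h ⟨f, hf⟩) g hg le_rfl
      apply hgm
      refine eq_zero_of_infinite_isRoot _ ((Set.Icc_infinite huz).mono fun c hc => ?_)
      have h2 := h1 c hc
      rw [h0, sign_zero, sign_eq_zero_iff] at h2
      simpa [IsRoot, eval_map] using h2
    rcases lt_trichotomy u z with h | h | h
    · exact (aux u z h huz hgu).elim
    · exact h
    · exact (aux z u h huz.symm hgx).elim
  -- degrees of the specialised polynomials
  have hdegx : (p.map x).natDegree = p.natDegree := natDegree_map_of_leadingCoeff_ne_zero _ hpx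
  have hdegy : (p.map y).natDegree = p.natDegree := natDegree_map_of_leadingCoeff_ne_zero _ hpy
  have hd0 : (derivative p).eval₂ y s ≠ 0 := by
    intro h0
    refine hsps (qe_reduce E' hE' y s _ _ hder le_rfl ?_ h0)
    rw [← derivative_map]
    intro h
    have := derivative_eq_zero.1 h
    omega
  have hdx : ∀ u, a u = a t → SignType.sign ((derivative p).eval₂ x u) =
      SignType.sign ((derivative p).eval₂ y s) := by
    intro u hu
    exact ((hab u s).1 (hst.trans hu.symm) _ hder).symm
  have hdy : ∀ u, b u = b s → SignType.sign ((derivative p).eval₂ y u) =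
      SignType.sign ((derivative p).eval₂ y s) := by
    intro u hu
    exact congrFun hu ⟨_, hder⟩
  have hunb := qe_unb (p.map y) (by omega) s
  simp only [eval_map] at hunb
  have hcore1 : 0 ≤ p.eval₂ x t → (∀ v, b v = b s → p.eval₂ y v ≤ 0) → False := by
    refine qe_core2 a b (fun u => p.eval₂ x u) (fun u => p.eval₂ y u)
      (fun u => (derivative p).eval₂ x u) (fun u => (derivative p).eval₂ y u) t s hst
      (qe_hasDeriv x p) (qe_hasDeriv y p) ?_ H1' H2' Ord sp Nsp ?_ Sp2 hJ hunb.1 hunb.2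
    · rcases lt_or_gt_of_ne hd0 with h | h
      · refine Or.inr ⟨fun u hu => ?_, fun u hu => ?_⟩
        · have := hdx u hu; rw [sign_neg h] at this; exact sign_eq_neg_one_iff.1 this
        · have := hdy u hu; rw [sign_neg h] at this; exact sign_eq_neg_one_iff.1 this
      · refine Or.inl ⟨fun u hu => ?_, fun u hu => ?_⟩
        · have := hdx u hu; rw [sign_pos h] at this; exact sign_eq_one_iff.1 this
        · have := hdy u hu; rw [sign_pos h] at this; exact sign_eq_one_iff.1 this
    · intro v z h1 h2 h3
      have := hremsign v z h1 h2
      by_contra hc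
      push Not at hc
      rw [sign_pos hc] at this
      have := sign_eq_one_iff.1 this.symm
      linarith
  have hcore2 : p.eval₂ x t ≤ 0 → (∀ v, b v = b s → 0 ≤ p.eval₂ y v) → False := by
    intro h1 h2
    refine qe_core2 a b (fun u => -p.eval₂ x u) (fun u => -p.eval₂ y u)
      (fun u => -(derivative p).eval₂ x u) (fun u => -(derivative p).eval₂ y u) t s hst
      (fun u => (qe_hasDeriv x p u).neg) (fun u => (qe_hasDeriv y p u).neg)
      ?_ H1' H2' Ord sp Nsp ?_ Sp2 hJ ?_ ?_ (by linarith) (fun v hv => by linarith [h2 v hv])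
    · rcases lt_or_gt_of_ne hd0 with h | h
      · refine Or.inl ⟨fun u hu => ?_, fun u hu => ?_⟩
        · have := hdx u hu; rw [sign_neg h] at this; linarith [sign_eq_neg_one_iff.1 this]
        · have := hdy u hu; rw [sign_neg h] at this; linarith [sign_eq_neg_one_iff.1 this]
      · refine Or.inr ⟨fun u hu => ?_, fun u hu => ?_⟩
        · have := hdx u hu; rw [sign_pos h] at this; linarith [sign_eq_one_iff.1 this]
        · have := hdy u hu; rw [sign_pos h] at this; linarith [sign_eq_one_iff.1 this]
    · intro v z h1 h2 h3
      have := hremsign v z h1 h2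
      by_contra hc
      push Not at hc
      have hc' : p.eval₂ x z < 0 := by linarith
      rw [sign_neg hc'] at this
      have := sign_eq_neg_one_iff.1 this.symm
      linarith
    · simpa only [abs_neg] using hunb.1
    · simpa only [abs_neg] using hunb.2
  have hcy : Continuous fun v => p.eval₂ y v :=
    continuous_iff_continuousAt.2 fun v => (qe_hasDeriv y p v).continuousAt
  suffices h : ∃ v, b v = b s ∧ SignType.sign (p.eval₂ y v) = SignType.sign (p.eval₂ x t) by
    obtain ⟨v, h1, h2⟩ := h
    exact ⟨v, (hab t v).1 (h1.trans hst), h2⟩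
  by_contra hno
  push Not at hno
  rcases lt_trichotomy (p.eval₂ x t) 0 with h | h | h
  · refine hcore2 h.le fun v hv => ?_
    by_contra hc
    push Not at hc
    exact hno v hv (by rw [sign_neg h, sign_neg hc])
  · by_cases hall : ∀ v, b v = b s → p.eval₂ y v ≤ 0
    · exact hcore1 h.ge hall
    by_cases hall' : ∀ v, b v = b s → 0 ≤ p.eval₂ y v
    · exact hcore2 h.le hall'
    push Not at hall hall'
    obtain ⟨v, hv, hv0⟩ := hall
    obtain ⟨w, hw, hw0⟩ := hall'
    obtain ⟨c, hc, hc0⟩ := intermediate_value_uIcc (a := v) (b := w) hcy.continuousOn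
      (show (0 : ℝ) ∈ Set.uIcc (p.eval₂ y v) (p.eval₂ y w) from by
        rw [Set.mem_uIcc]; exact Or.inr ⟨hw0.le, hv0.le⟩)
    refine hno c ?_ (by simp only at hc0; rw [hc0, h])
    have cv : ∀ v w c, b v = b s → b w = b s → v ≤ c → c ≤ w → b c = b s := by
      intro v w c h1 h2 h3 h4
      rw [← h1]
      funext f
      exact qe_thom E' hdE y v w (h3.trans h4) f.1.natDegree
        (fun g hg _ => congrFun (h1.trans h2.symm) ⟨g, hg⟩) f.1 f.2 le_rfl c ⟨h3, h4⟩
    rcases Set.mem_uIcc.1 hc with h5 | h5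
    · exact cv v w c hv hw h5.1 h5.2
    · exact cv w v c hw hv h5.1 h5.2
  · refine hcore1 h.le fun v hv => ?_
    by_contra hc
    push Not at hc
    exact hno v hv (by rw [sign_pos h, sign_pos hc])

lemma qe_closed_main {R : Type*} [CommRing R] (N : ℕ) : ∀ (E : Finset R[X]), E.card = N →
    QEClosed 0 E → ∀ (x y : R →+* ℝ),
    (∀ f ∈ E, SignType.sign (x f.leadingCoeff) = SignType.sign (y f.leadingCoeff)) →
    ∀ t, ∃ s, ∀ f ∈ E, SignType.sign (f.eval₂ y s) = SignType.sign (f.eval₂ x t) := by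
  classical
  induction N with
  | zero =>
    intro E hE _ x y _ t
    rw [Finset.card_eq_zero] at hE
    subst hE
    exact ⟨0, by simp⟩
  | succ N ih =>
    intro E hcard hE x y hlc t
    obtain ⟨p, hpE, hmax⟩ := Finset.exists_max_image E natDegree
      (Finset.card_pos.1 (by omega))
    set E' := E.erase p with hE'def
    have hcard' : E'.card = N := by rw [Finset.card_erase_of_mem hpE, hcard]; rfl
    have hmem : ∀ f ∈ E, f.natDegree < p.natDegree → f ∈ E' := by
      intro f hf h
      exact Finset.mem_erase.2 ⟨fun h' => by rw [h'] at h; exact lt_irrefl _ h, hf⟩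
    have hE' : QEClosed 0 E' := by
      intro f hf _ h1
      have hfE := Finset.mem_of_mem_erase hf
      have hfp := hmax f hfE
      obtain ⟨h2, h3, h4⟩ := hE f hfE (Nat.zero_le _) h1
      refine ⟨hmem _ h2 ?_, hmem _ h3 ?_, fun q hq hfq => ?_⟩
      · have := natDegree_derivative_lt (p := f) (by omega); omega
      · have := eraseLead_natDegree_le f; omega
      · obtain ⟨r, hr, hr'⟩ := h4 q (Finset.mem_of_mem_erase hq) hfq
        exact ⟨r, hmem r hr (hr'.2.trans_le hfp), hr'⟩
    have hlc' : ∀ f ∈ E', SignType.sign (x f.leadingCoeff) = SignType.sign (y f.leadingCoeff) :=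
      fun f hf => hlc f (Finset.mem_of_mem_erase hf)
    have H1 := ih E' hcard' hE' x y hlc'
    have H2 := ih E' hcard' hE' y x (fun f hf => (hlc' f hf).symm)
    suffices h : ∃ s, (∀ f ∈ E', SignType.sign (f.eval₂ y s) = SignType.sign (f.eval₂ x t)) ∧
        SignType.sign (p.eval₂ y s) = SignType.sign (p.eval₂ x t) by
      obtain ⟨s, h1, h2⟩ := h
      refine ⟨s, fun f hf => ?_⟩
      by_cases hfp : f = p
      · rw [hfp, h2]
      · exact h1 f (Finset.mem_erase.2 ⟨hfp, hf⟩)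
    by_cases h1 : 1 ≤ p.natDegree
    · obtain ⟨h2, h3, h4⟩ := hE p hpE (Nat.zero_le _) h1
      by_cases hl : x p.leadingCoeff = 0
      · have hl' : y p.leadingCoeff = 0 := by
          have := hlc p hpE
          rw [hl, sign_zero] at this
          exact sign_eq_zero_iff.1 this.symm
        have aux : ∀ (w : R →+* ℝ) (c : ℝ), w p.leadingCoeff = 0 →
            p.eval₂ w c = p.eraseLead.eval₂ w c := by
          intro w c h
          conv_lhs => rw [← eraseLead_add_C_mul_X_pow p]
          rw [eval₂_add, eval₂_mul, eval₂_C, h, zero_mul, add_zero]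
        obtain ⟨s, hs⟩ := H1 t
        refine ⟨s, hs, ?_⟩
        rw [aux x t hl, aux y s hl']
        refine hs _ (hmem _ h3 ?_)
        have := eraseLead_natDegree_le p; omega
      · have hl' : y p.leadingCoeff ≠ 0 := by
          have := hlc p hpE
          rw [← sign_ne_zero, ← this, sign_ne_zero]
          exact hl
        refine qe_step E' p hE' h1 (hmem _ h2 (natDegree_derivative_lt (by omega))) ?_ x y hlc'
          hl hl' H1 H2 t
        intro f hf hf1
        have hfE := Finset.mem_of_mem_erase hf
        have hfp := hmax f hfE
        obtain ⟨r, hr, hr'⟩ := (hE f hfE (Nat.zero_le _) hf1).2.2 p hpE hfp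
        exact ⟨r, hmem r hr (hr'.2.trans_le hfp), hr'⟩
    · obtain ⟨s, hs⟩ := H1 t
      refine ⟨s, hs, ?_⟩
      have hp0 : p.natDegree = 0 := by omega
      have := hlc p hpE
      rw [leadingCoeff, hp0] at this
      rw [eq_C_of_natDegree_eq_zero hp0]
      simpa using this.symm

/-- One-variable elimination. -/
theorem qe_one {R : Type*} [CommRing R] (F : Finset R[X]) :
    ∃ G : Finset R, ∀ (x y : R →+* ℝ),
      (∀ g ∈ G, SignType.sign (x g) = SignType.sign (y g)) →
      ∀ t, ∃ s, ∀ f ∈ F, SignType.sign (f.eval₂ y s) = SignType.sign (f.eval₂ x t) := by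
  classical
  obtain ⟨E, hFE, hE⟩ := qe_exists_closed F
  refine ⟨E.image leadingCoeff, fun x y h t => ?_⟩
  obtain ⟨s, hs⟩ := qe_closed_main _ E rfl hE x y
    (fun f hf => h _ (Finset.mem_image_of_mem _ hf)) t
  exact ⟨s, fun f hf => hs f (hFE hf)⟩

/-- Elimination of several variables. -/
theorem qe_fin (n : ℕ) : ∀ {R : Type*} [CommRing R] (F : Finset (MvPolynomial (Fin n) R)),
    ∃ G : Finset R, ∀ (x y : R →+* ℝ),
      (∀ g ∈ G, SignType.sign (x g) = SignType.sign (y g)) →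
      ∀ t : Fin n → ℝ, ∃ s : Fin n → ℝ, ∀ f ∈ F,
        SignType.sign (MvPolynomial.eval₂Hom y s f) =
          SignType.sign (MvPolynomial.eval₂Hom x t f) := by
  classical
  induction n with
  | zero =>
    intro R _ F
    refine ⟨F.image (MvPolynomial.coeff 0), fun x y h t => ⟨t, fun f hf => ?_⟩⟩
    have := h _ (Finset.mem_image_of_mem _ hf)
    rw [MvPolynomial.eq_C_of_isEmpty f, MvPolynomial.eval₂Hom_C, MvPolynomial.eval₂Hom_C]
    exact this.symm
  | succ n ih =>
    intro R _ F
    obtain ⟨G1, hG1⟩ := qe_one (F.image (MvPolynomial.finSuccEquiv R n))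
    obtain ⟨G, hG⟩ := ih G1
    refine ⟨G, fun x y h t => ?_⟩
    obtain ⟨s', hs'⟩ := hG x y h (fun i => t i.succ)
    obtain ⟨s0, hs0⟩ := hG1 (MvPolynomial.eval₂Hom x (fun i => t i.succ))
      (MvPolynomial.eval₂Hom y s') (fun g hg => (hs' g hg).symm) (t 0)
    have aux : ∀ (w : R →+* ℝ) (c : Fin n → ℝ) (c0 : ℝ) (f : MvPolynomial (Fin (n + 1)) R),
        (MvPolynomial.finSuccEquiv R n f).eval₂ (MvPolynomial.eval₂Hom w c) c0 =
          MvPolynomial.eval₂Hom w (Fin.cons c0 c) f := by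
      intro w c c0 f
      have : ((eval₂RingHom (MvPolynomial.eval₂Hom w c) c0).comp
          (MvPolynomial.finSuccEquiv R n : MvPolynomial (Fin (n + 1)) R →+* _)) =
          MvPolynomial.eval₂Hom w (Fin.cons c0 c) := by
        apply MvPolynomial.ringHom_ext
        · intro r
          simp [MvPolynomial.finSuccEquiv_apply]
        · intro i
          refine Fin.cases ?_ (fun i => ?_) i
          · simp [MvPolynomial.finSuccEquiv_apply]
          · simp [MvPolynomial.finSuccEquiv_apply]
      exact congrArg (fun φ => φ f) this
    refine ⟨Fin.cons s0 s', fun f hf => ?_⟩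
    have := hs0 _ (Finset.mem_image_of_mem _ hf)
    rw [aux, aux] at this
    rw [this]
    congr 2
    congr 1
    exact Fin.cons_self_tail t

end QE2

section SA
open Filter Topology

/-- A set is a union of sign classes of finitely many polynomials. -/
def SASet {ι : Type} (S : Set (ι → ℝ)) : Prop :=
  ∃ G : Finset (MvPolynomial ι ℝ), ∀ x y : ι → ℝ,
    (∀ g ∈ G, SignType.sign (MvPolynomial.eval x g) = SignType.sign (MvPolynomial.eval y g)) →
    x ∈ S → y ∈ S

/-- Polynomial functions. -/
def PolyFun {ι : Type} (f : (ι → ℝ) → ℝ) : Prop :=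
  ∃ P : MvPolynomial ι ℝ, ∀ x, MvPolynomial.eval x P = f x

lemma SASet.compl {ι : Type} {S : Set (ι → ℝ)} (h : SASet S) : SASet {x | x ∉ S} := by
  obtain ⟨G, hG⟩ := h
  exact ⟨G, fun x y hxy hx hy => hx (hG y x (fun g hg => (hxy g hg).symm) hy)⟩

lemma SASet.inter {ι : Type} {S T : Set (ι → ℝ)} (h : SASet S) (h' : SASet T) :
    SASet {x | x ∈ S ∧ x ∈ T} := by
  classical
  obtain ⟨G, hG⟩ := h
  obtain ⟨G', hG'⟩ := h'
  refine ⟨G ∪ G', fun x y hxy hx => ⟨hG x y (fun g hg => hxy g ?_) hx.1,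
    hG' x y (fun g hg => hxy g ?_) hx.2⟩⟩
  · exact Finset.mem_union_left _ hg
  · exact Finset.mem_union_right _ hg

lemma SASet.forall_fin {ι : Type} {κ : Type} [Fintype κ] {S : κ → Set (ι → ℝ)}
    (h : ∀ j, SASet (S j)) : SASet {x | ∀ j, x ∈ S j} := by
  classical
  choose G hG using h
  refine ⟨Finset.univ.biUnion G, fun x y hxy hx j => hG j x y (fun g hg => hxy g ?_) (hx j)⟩
  exact Finset.mem_biUnion.2 ⟨j, Finset.mem_univ _, hg⟩

lemma SASet.comap {ι κ : Type} {S : Set (ι → ℝ)} (h : SASet S) (σ : ι → κ) :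
    SASet {x : κ → ℝ | (fun i => x (σ i)) ∈ S} := by
  classical
  obtain ⟨G, hG⟩ := h
  refine ⟨G.image (MvPolynomial.rename σ), fun x y hxy hx => hG _ _ (fun g hg => ?_) hx⟩
  have := hxy _ (Finset.mem_image_of_mem _ hg)
  simpa [MvPolynomial.eval_rename, Function.comp_def] using this

lemma PolyFun.sa_lt {ι : Type} {f g : (ι → ℝ) → ℝ} (hf : PolyFun f) (hg : PolyFun g) :
    SASet {x | f x < g x} := by
  obtain ⟨P, hP⟩ := hf
  obtain ⟨Q, hQ⟩ := hg
  refine ⟨{Q - P}, fun x y hxy hx => ?_⟩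
  have h1 := hxy _ (Finset.mem_singleton_self _)
  simp only [map_sub, hP, hQ] at h1
  have hx' : f x < g x := hx
  rw [sign_pos (sub_pos.2 hx')] at h1
  have := sign_eq_one_iff.1 h1.symm
  exact sub_pos.1 this

lemma PolyFun.sa_eq {ι : Type} {f g : (ι → ℝ) → ℝ} (hf : PolyFun f) (hg : PolyFun g) :
    SASet {x | f x = g x} := by
  obtain ⟨P, hP⟩ := hf
  obtain ⟨Q, hQ⟩ := hg
  refine ⟨{Q - P}, fun x y hxy hx => ?_⟩
  have h1 := hxy _ (Finset.mem_singleton_self _)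
  simp only [map_sub, hP, hQ] at h1
  have hx' : f x = g x := hx
  rw [hx', sub_self, sign_zero] at h1
  have := sign_eq_zero_iff.1 h1.symm
  exact (sub_eq_zero.1 this).symm

lemma SASet.exists {ι κ : Type} [Fintype κ] {T : Set (κ ⊕ ι → ℝ)} (h : SASet T) :
    SASet {x : ι → ℝ | ∃ t : κ → ℝ, Sum.elim t x ∈ T} := by
  classical
  obtain ⟨F, hF⟩ := h
  let e := Fintype.equivFin κ
  let φ : MvPolynomial (κ ⊕ ι) ℝ →+*
      MvPolynomial (Fin (Fintype.card κ)) (MvPolynomial ι ℝ) :=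
    MvPolynomial.eval₂Hom (MvPolynomial.C.comp MvPolynomial.C)
      (Sum.elim (fun k => MvPolynomial.X (e k)) (fun i => MvPolynomial.C (MvPolynomial.X i)))
  have hφ : ∀ (x : ι → ℝ) (t : Fin (Fintype.card κ) → ℝ) (f : MvPolynomial (κ ⊕ ι) ℝ),
      MvPolynomial.eval₂Hom (MvPolynomial.eval x) t (φ f) =
        MvPolynomial.eval (Sum.elim (fun k => t (e k)) x) f := by
    intro x t f
    have : (MvPolynomial.eval₂Hom (MvPolynomial.eval x) t).comp φ =
        MvPolynomial.eval (Sum.elim (fun k => t (e k)) x) := by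
      apply MvPolynomial.ringHom_ext
      · intro r; simp [φ]
      · rintro (k | i) <;> simp [φ]
    exact congrArg (fun ψ => ψ f) this
  obtain ⟨G, hG⟩ := qe_fin _ (F.image φ)
  refine ⟨G, fun x y hxy hx => ?_⟩
  obtain ⟨t, ht⟩ := hx
  obtain ⟨s, hs⟩ := hG (MvPolynomial.eval x) (MvPolynomial.eval y) hxy (fun i => t (e.symm i))
  refine ⟨fun k => s (e k), hF _ _ (fun f hf => ?_) ht⟩
  have := hs _ (Finset.mem_image_of_mem _ hf)
  rw [hφ, hφ] at this
  simpa using this.symm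

lemma PolyFun.const {ι : Type} (c : ℝ) : PolyFun (fun _ : ι → ℝ => c) :=
  ⟨MvPolynomial.C c, by simp⟩

lemma PolyFun.coord {ι : Type} (i : ι) : PolyFun (fun x : ι → ℝ => x i) :=
  ⟨MvPolynomial.X i, by simp⟩

lemma PolyFun.add {ι : Type} {f g : (ι → ℝ) → ℝ} (hf : PolyFun f) (hg : PolyFun g) :
    PolyFun (fun x => f x + g x) := by
  obtain ⟨P, hP⟩ := hf
  obtain ⟨Q, hQ⟩ := hg
  exact ⟨P + Q, by simp [hP, hQ]⟩

lemma PolyFun.mul {ι : Type} {f g : (ι → ℝ) → ℝ} (hf : PolyFun f) (hg : PolyFun g) :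
    PolyFun (fun x => f x * g x) := by
  obtain ⟨P, hP⟩ := hf
  obtain ⟨Q, hQ⟩ := hg
  exact ⟨P * Q, by simp [hP, hQ]⟩

lemma PolyFun.pow {ι : Type} {f : (ι → ℝ) → ℝ} (hf : PolyFun f) (k : ℕ) :
    PolyFun (fun x => f x ^ k) := by
  obtain ⟨P, hP⟩ := hf
  exact ⟨P ^ k, by simp [hP]⟩

lemma PolyFun.sum {ι κ : Type} (s : Finset κ) {f : κ → (ι → ℝ) → ℝ} (hf : ∀ k, PolyFun (f k)) :
    PolyFun (fun x => ∑ k ∈ s, f k x) := by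
  choose P hP using hf
  exact ⟨∑ k ∈ s, P k, by simp [hP]⟩

lemma PolyFun.prod {ι κ : Type} (s : Finset κ) {f : κ → (ι → ℝ) → ℝ} (hf : ∀ k, PolyFun (f k)) :
    PolyFun (fun x => ∏ k ∈ s, f k x) := by
  choose P hP using hf
  exact ⟨∏ k ∈ s, P k, fun x => by simp [MvPolynomial.eval_prod, hP]⟩

lemma PolyFun.det {ι κ : Type} [Fintype κ] [DecidableEq κ] {M : (ι → ℝ) → Matrix κ κ ℝ}
    (hM : ∀ r c, PolyFun (fun x => M x r c)) : PolyFun (fun x => (M x).det) := by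
  simp only [Matrix.det_apply', ]
  exact PolyFun.sum _ fun σ => (PolyFun.const _).mul (PolyFun.prod _ fun i => hM _ _)

lemma PolyFun.matMul {ι κ μ ν : Type} [Fintype μ] {M : (ι → ℝ) → Matrix κ μ ℝ}
    {N : (ι → ℝ) → Matrix μ ν ℝ} (hM : ∀ r c, PolyFun (fun x => M x r c))
    (hN : ∀ r c, PolyFun (fun x => N x r c)) : ∀ r c, PolyFun (fun x => (M x * N x) r c) := by
  intro r c
  simp only [Matrix.mul_apply]
  exact PolyFun.sum _ fun i => (hM _ _).mul (hN _ _)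

lemma SASet.isSemialgebraic {ι : Type} [Fintype ι] {S : Set (ι → ℝ)} (h : SASet S) :
    IsSemialgebraic S := by
  classical
  obtain ⟨G, hG⟩ := h
  let T := {τ : G → SignType // ∃ x ∈ S, ∀ g : G, SignType.sign (MvPolynomial.eval x g.1) = τ g}
  let eT := Fintype.equivFin T
  let eG := Fintype.equivFin G
  refine ⟨Fintype.card T, Fintype.card G,
    fun t l => if (eT.symm t).1 (eG.symm l) = -1 then -(eG.symm l).1 else (eG.symm l).1,
    fun t l => decide ((eT.symm t).1 (eG.symm l) = 0), ?_⟩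
  have key : ∀ (τ : G → SignType) (x : ι → ℝ) (g : G),
      (if (decide (τ g = 0) : Bool) = true then
        MvPolynomial.eval x (if τ g = -1 then -g.1 else g.1) = 0
      else 0 < MvPolynomial.eval x (if τ g = -1 then -g.1 else g.1)) ↔
      SignType.sign (MvPolynomial.eval x g.1) = τ g := by
    intro τ x g
    generalize τ g = s
    cases s
    · simp [sign_eq_zero_iff]
    · simp [sign_eq_neg_one_iff]
    · simp [sign_eq_one_iff]
  ext x
  simp only [Set.mem_iUnion, Set.mem_setOf_eq]
  constructor
  · intro hx
    let τ : T := ⟨fun g => SignType.sign (MvPolynomial.eval x g.1), x, hx, fun g => rfl⟩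
    refine ⟨eT τ, fun l => ?_⟩
    rw [key, Equiv.symm_apply_apply]
  · rintro ⟨t, ht⟩
    obtain ⟨z, hz, hz'⟩ := (eT.symm t).2
    refine hG z x (fun g hg => ?_) hz
    have h1 := (key _ _ _).1 (ht (eG ⟨g, hg⟩))
    rw [Equiv.symm_apply_apply] at h1
    rw [h1, ← hz']

lemma SASet.exists_poly {ι : Type} [Fintype ι] {S : Set (ι → ℝ)} (h : SASet S)
    (hS : ∀ y ∈ S, ¬ ∀ᶠ z in 𝓝 y, z ∈ S) :
    ∃ P : MvPolynomial ι ℝ, P ≠ 0 ∧ ∀ y ∈ S, MvPolynomial.eval y P = 0 := by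
  classical
  obtain ⟨G, hG⟩ := h
  refine ⟨∏ g ∈ G.filter (· ≠ 0), g, Finset.prod_ne_zero_iff.2 fun g hg =>
    (Finset.mem_filter.1 hg).2, fun y hy => ?_⟩
  by_contra hne
  rw [MvPolynomial.eval_prod] at hne
  replace hne := Finset.prod_ne_zero_iff.1 hne
  apply hS y hy
  have : ∀ g ∈ G, ∀ᶠ z in 𝓝 y,
      SignType.sign (MvPolynomial.eval y g) = SignType.sign (MvPolynomial.eval z g) := by
    intro g hg
    by_cases h0 : g = 0
    · simp [h0]
    · have h1 := hne g (Finset.mem_filter.2 ⟨hg, h0⟩)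
      have hc : ContinuousAt (fun z => MvPolynomial.eval z g) y :=
        (MvPolynomial.continuous_eval g).continuousAt
      rcases lt_or_gt_of_ne h1 with h | h
      · filter_upwards [hc.eventually (gt_mem_nhds h)] with w hw
        rw [sign_neg h, sign_neg hw]
      · filter_upwards [hc.eventually (lt_mem_nhds h)] with w hw
        rw [sign_pos h, sign_pos hw]
  filter_upwards [(Finset.eventually_all G).2 this] with z hz
  exact hG y z hz hy

end SA

section Cap

lemma cap_common_den {m : ℕ} (p : Fin m → ℚ) (hp : ∀ j, 0 < p j) :
    ∃ L : ℕ, L ≠ 0 ∧ ∃ q : Fin m → ℕ, ∀ j, (p j : ℝ) * L = q j := by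
  refine ⟨∏ j, (p j).den, Finset.prod_ne_zero_iff.2 fun j _ => (p j).den_nz, ?_⟩
  have : ∀ j, ∃ q : ℕ, (p j : ℝ) * (∏ j, (p j).den : ℕ) = q := by
    intro j
    obtain ⟨c, hc⟩ := Finset.dvd_prod_of_mem (fun j => (p j).den) (Finset.mem_univ j)
    refine ⟨(p j).num.toNat * c, ?_⟩
    rw [hc]
    have h1 : ((p j).num.toNat : ℤ) = (p j).num :=
      Int.toNat_of_nonneg (Rat.num_nonneg.2 (hp j).le)
    have h2 : ((p j).num.toNat : ℚ) = p j * (p j).den := by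
      rw [Rat.mul_den_eq_num]; exact_mod_cast h1
    have h3 : ((p j).num.toNat : ℝ) = p j * (p j).den := by exact_mod_cast h2
    push_cast
    rw [h3]; ring
  choose q hq using this
  exact ⟨q, hq⟩

open scoped MatrixOrder in
lemma posDef_iff_factor {n : ℕ} (Y : Matrix (Fin n) (Fin n) ℝ) :
    Y.PosDef ↔ ∃ B : Matrix (Fin n) (Fin n) ℝ, B.det ≠ 0 ∧ Y = Bᵀ * B := by
  constructor
  · intro h
    obtain ⟨B, hB⟩ := CStarAlgebra.nonneg_iff_eq_star_mul_self.mp h.posSemidef.nonneg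
    have hB' : Y = Bᵀ * B := by rw [hB, Matrix.star_eq_conjTranspose, Matrix.conjTranspose_eq_transpose_of_trivial]
    refine ⟨B, fun h0 => ?_, hB'⟩
    have := h.det_pos
    rw [hB', Matrix.det_mul, h0, mul_zero] at this
    exact lt_irrefl _ this
  · rintro ⟨B, hB, rfl⟩
    have h1 : (Bᵀ * B).PosSemidef := by
      have := Matrix.posSemidef_conjTranspose_mul_self B
      rwa [Matrix.conjTranspose_eq_transpose_of_trivial] at this
    rw [h1.posDef_iff_det_ne_zero, Matrix.det_mul, Matrix.det_transpose]
    exact mul_ne_zero hB hB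

/-- The numerator of the capacity functional. -/
noncomputable def capNum {k m : ℕ} {d : Fin k → ℕ} {n : Fin m → ℕ} {A : Fin k → Fin m → ℕ}
    (p : Fin m → ℝ)
    (V : ∀ i : Fin k, ∀ j : Fin m, Fin (A i j) → Matrix (Fin (n j)) (Fin (d i)) ℝ)
    (Y : ∀ j : Fin m, Matrix (Fin (n j)) (Fin (n j)) ℝ) : ℝ :=
  ∏ i : Fin k, (∑ j : Fin m, p j • ∑ a : Fin (A i j), (V i j a)ᵀ * Y j * V i j a).det

lemma capNum_nonneg {k m : ℕ} {d : Fin k → ℕ} {n : Fin m → ℕ} {A : Fin k → Fin m → ℕ}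
    (p : Fin m → ℝ) (hp : ∀ j, 0 ≤ p j)
    (V : ∀ i : Fin k, ∀ j : Fin m, Fin (A i j) → Matrix (Fin (n j)) (Fin (d i)) ℝ)
    (Y : ∀ j : Fin m, Matrix (Fin (n j)) (Fin (n j)) ℝ) (hY : ∀ j, (Y j).PosDef) :
    0 ≤ capNum p V Y := by
  refine Finset.prod_nonneg fun i _ => Matrix.PosSemidef.det_nonneg ?_
  refine Matrix.posSemidef_sum _ fun j _ => Matrix.PosSemidef.smul ?_ (hp j)
  refine Matrix.posSemidef_sum _ fun a _ => ?_
  have := (hY j).posSemidef.conjTranspose_mul_mul_same (V i j a)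
  rwa [Matrix.conjTranspose_eq_transpose_of_trivial] at this

lemma capVal_lt_iff {k m : ℕ} {d : Fin k → ℕ} {n : Fin m → ℕ} {A : Fin k → Fin m → ℕ}
    (p : Fin m → ℝ) (hp : ∀ j, 0 ≤ p j) (L : ℕ) (hL : L ≠ 0) (q : Fin m → ℕ)
    (hq : ∀ j, p j * L = q j)
    (V : ∀ i : Fin k, ∀ j : Fin m, Fin (A i j) → Matrix (Fin (n j)) (Fin (d i)) ℝ)
    (Y : ∀ j : Fin m, Matrix (Fin (n j)) (Fin (n j)) ℝ) (hY : ∀ j, (Y j).PosDef) (c : ℝ)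
    (hc : 0 < c) :
    capVal p V Y < c ↔ capNum p V Y ^ L < c ^ L * ∏ j, (Y j).det ^ q j := by
  have hD : 0 < ∏ j : Fin m, (Y j).det ^ (p j) :=
    Finset.prod_pos fun j _ => Real.rpow_pos_of_pos (hY j).det_pos _
  have hDL : (∏ j : Fin m, (Y j).det ^ (p j)) ^ L = ∏ j, (Y j).det ^ q j := by
    rw [← Finset.prod_pow]
    refine Finset.prod_congr rfl fun j _ => ?_
    rw [← Real.rpow_natCast, ← Real.rpow_mul (hY j).det_pos.le, hq, Real.rpow_natCast]
  have : capVal p V Y = capNum p V Y / ∏ j : Fin m, (Y j).det ^ (p j) := rfl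
  rw [this, div_lt_iff₀ hD, ← hDL, ← mul_pow,
    pow_lt_pow_iff_left₀ (capNum_nonneg p hp V Y hY) (by positivity) hL]

lemma capVal_nonneg {k m : ℕ} {d : Fin k → ℕ} {n : Fin m → ℕ} {A : Fin k → Fin m → ℕ}
    (p : Fin m → ℝ) (hp : ∀ j, 0 ≤ p j)
    (V : ∀ i : Fin k, ∀ j : Fin m, Fin (A i j) → Matrix (Fin (n j)) (Fin (d i)) ℝ)
    (Y : ∀ j : Fin m, Matrix (Fin (n j)) (Fin (n j)) ℝ) (hY : ∀ j, (Y j).PosDef) :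
    0 ≤ capVal p V Y :=
  div_nonneg (capNum_nonneg p hp V Y hY)
    (Finset.prod_nonneg fun j _ => Real.rpow_nonneg (hY j).det_pos.le _)

lemma le_cap_iff {k m : ℕ} {d : Fin k → ℕ} {n : Fin m → ℕ} {A : Fin k → Fin m → ℕ}
    (p : Fin m → ℝ) (hp : ∀ j, 0 ≤ p j)
    (V : ∀ i : Fin k, ∀ j : Fin m, Fin (A i j) → Matrix (Fin (n j)) (Fin (d i)) ℝ) (c : ℝ) :
    c ≤ cap p V ↔ ∀ Y : ∀ j : Fin m, Matrix (Fin (n j)) (Fin (n j)) ℝ,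
      (∀ j, (Y j).PosDef) → c ≤ capVal p V Y := by
  rw [cap, le_csInf_iff]
  · constructor
    · intro h Y hY
      exact h _ ⟨Y, hY, rfl⟩
    · rintro h _ ⟨Y, hY, rfl⟩
      exact h Y hY
  · refine ⟨0, ?_⟩
    rintro _ ⟨Y, hY, rfl⟩
    exact capVal_nonneg p hp V Y hY
  · exact ⟨_, fun j => 1, fun j => Matrix.PosDef.one, rfl⟩

/-- The set of `(V, c)` with `0 < c ≤ cap V` is semialgebraic. -/
lemma sa_le_cap {k m : ℕ} {d : Fin k → ℕ} {n : Fin m → ℕ} {A : Fin k → Fin m → ℕ}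
    (p : Fin m → ℚ) (hp : ∀ j, 0 < p j) :
    SASet { y : Option (QIdx k m d n A) → ℝ | 0 < y none ∧
      y none ≤ cap (fun j => (p j : ℝ)) (toDatum fun q => y (some q)) } := by
  obtain ⟨L, hL, q, hq⟩ := cap_common_den p hp
  have hp' : ∀ j, (0 : ℝ) ≤ (p j : ℝ) := fun j => by exact_mod_cast (hp j).le
  let κ : Type := (j : Fin m) × (Fin (n j) × Fin (n j))
  let B : (κ ⊕ Option (QIdx k m d n A) → ℝ) → ∀ j, Matrix (Fin (n j)) (Fin (n j)) ℝ :=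
    fun w j => Matrix.of fun r c => w (Sum.inl ⟨j, r, c⟩)
  let V : (κ ⊕ Option (QIdx k m d n A) → ℝ) → ∀ i : Fin k, ∀ j : Fin m, Fin (A i j) →
    Matrix (Fin (n j)) (Fin (d i)) ℝ := fun w => toDatum fun q => w (Sum.inr (some q))
  have hB : ∀ j r c, PolyFun (fun w => B w j r c) := fun j r c => PolyFun.coord _
  have hV : ∀ i j a r c, PolyFun (fun w => V w i j a r c) := fun i j a r c => PolyFun.coord _
  have hY : ∀ j r c, PolyFun (fun w => ((B w j)ᵀ * B w j) r c) := fun j =>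
    PolyFun.matMul (fun r c => hB j c r) (hB j)
  have hN : PolyFun (fun w => capNum (fun j => (p j : ℝ)) (V w) fun j => (B w j)ᵀ * B w j) := by
    unfold capNum
    refine PolyFun.prod _ fun i => PolyFun.det fun r c => ?_
    simp only [Matrix.sum_apply, Matrix.smul_apply, smul_eq_mul]
    refine PolyFun.sum _ fun j => (PolyFun.const _).mul (PolyFun.sum _ fun a => ?_)
    exact PolyFun.matMul (PolyFun.matMul (fun r c => hV i j a c r) (hY j)) (hV i j a) r c
  have hT : SASet {w | (∀ j, (B w j).det ≠ 0) ∧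
      (capNum (fun j => (p j : ℝ)) (V w) fun j => (B w j)ᵀ * B w j) ^ L <
        w (Sum.inr none) ^ L * ∏ j, ((B w j)ᵀ * B w j).det ^ q j} := by
    refine SASet.inter (SASet.forall_fin fun j => ?_) (PolyFun.sa_lt (hN.pow L) ?_)
    · exact ((PolyFun.det (hB j)).sa_eq (PolyFun.const 0)).compl
    · exact ((PolyFun.coord _).pow L).mul (PolyFun.prod _ fun j => (PolyFun.det (hY j)).pow _)
  have h1 := ((PolyFun.const 0).sa_lt (PolyFun.coord (none : Option (QIdx k m d n A)))).inter
    hT.exists.compl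
  convert h1 using 1
  ext y
  simp only [Set.mem_setOf_eq]
  refine and_congr_right fun hy => ?_
  rw [le_cap_iff _ hp']
  constructor
  · rintro h ⟨t, ht1, ht2⟩
    have hpd : ∀ j, ((B (Sum.elim t y) j)ᵀ * B (Sum.elim t y) j).PosDef :=
      fun j => (posDef_iff_factor _).2 ⟨_, ht1 j, rfl⟩
    exact absurd ((capVal_lt_iff _ hp' L hL q hq _ _ hpd _ hy).2 ht2) (not_lt.2 (h _ hpd))
  · intro h Y hYpd
    by_contra hlt
    push Not at hlt
    have hlt' := (capVal_lt_iff _ hp' L hL q hq _ _ hYpd _ hy).1 hlt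
    choose C hC hCY using fun j => (posDef_iff_factor _).1 (hYpd j)
    obtain rfl : Y = fun j => (C j)ᵀ * C j := funext hCY
    exact h ⟨fun s => C s.1 s.2.1 s.2.2, hC, hlt'⟩

lemma sa_graph {k m : ℕ} {d : Fin k → ℕ} {n : Fin m → ℕ} {A : Fin k → Fin m → ℕ}
    (p : Fin m → ℚ) (hp : ∀ j, 0 < p j) :
    SASet { y : Option (QIdx k m d n A) → ℝ |
      0 < cap (fun j => (p j : ℝ)) (toDatum fun q => y (some q)) ∧
      y none = cap (fun j => (p j : ℝ)) (toDatum fun q => y (some q)) } := by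
  have h1 := sa_le_cap (d := d) (n := n) (A := A) p hp
  have h2 := h1.comap (κ := Unit ⊕ Option (QIdx k m d n A))
    (fun o => o.elim (Sum.inl ()) (fun q => Sum.inr (some q)))
  have h3 := ((PolyFun.coord (Sum.inr none : Unit ⊕ Option (QIdx k m d n A))).sa_lt
    (PolyFun.coord (Sum.inl ()))).inter h2
  have h4 := h1.inter h3.exists.compl
  convert h4 using 1
  ext y
  simp only [Set.mem_setOf_eq, Sum.elim_inl, Sum.elim_inr, Option.elim]
  constructor
  · rintro ⟨h5, h6⟩
    refine ⟨⟨by rw [h6]; exact h5, h6.le⟩, ?_⟩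
    rintro ⟨t, h7, h8, h9⟩
    linarith
  · rintro ⟨⟨h5, h6⟩, h7⟩
    refine ⟨h5.trans_le h6, le_antisymm h6 ?_⟩
    by_contra hlt
    push Not at hlt
    exact h7 ⟨fun _ => cap (fun j => (p j : ℝ)) (toDatum fun q => y (some q)), hlt,
      h5.trans hlt, le_rfl⟩

end Cap

/-- Assume the weights are positive rationals. Then the graph of
`V ↦ cap(V, p)` on the set `𝒮` of feasible data is a semi-algebraic subset of
`ℝ^{D₁ + 1}`; in particular, there is a nonzero real polynomial `P` in `D₁ + 1` variables
with `P(V, cap(V, p)) = 0` for every `V ∈ 𝒮`. -/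
theorem cap_graph_semialgebraic_of_rational {k m : ℕ} (hk : 0 < k) (hm : 0 < m)
    {d : Fin k → ℕ} {n : Fin m → ℕ} {A : Fin k → Fin m → ℕ} (p : Fin m → ℚ)
    (hd : ∀ i, 0 < d i) (hn : ∀ j, 0 < n j) (hp : ∀ j, 0 < p j)
    (hbal : ∑ i : Fin k, (d i : ℝ) = ∑ j : Fin m, (p j : ℝ) * (n j : ℝ)) :
    IsSemialgebraic { y : Option (QIdx k m d n A) → ℝ |
      0 < cap (fun j => (p j : ℝ)) (toDatum fun q => y (some q)) ∧
      y none = cap (fun j => (p j : ℝ)) (toDatum fun q => y (some q)) } ∧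
    ∃ P : MvPolynomial (Option (QIdx k m d n A)) ℝ, P ≠ 0 ∧
      ∀ x : QIdx k m d n A → ℝ, 0 < cap (fun j => (p j : ℝ)) (toDatum x) →
        MvPolynomial.eval (fun o => o.elim (cap (fun j => (p j : ℝ)) (toDatum x)) x) P = 0 := by
  have hG := sa_graph (d := d) (n := n) (A := A) p hp
  refine ⟨hG.isSemialgebraic, ?_⟩
  obtain ⟨P, hP0, hP⟩ := hG.exists_poly (by
    rintro y ⟨hy1, hy2⟩ hev
    have hc : Continuous fun s : ℝ => Function.update y none s :=
      continuous_const.update none continuous_id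
    have h0 : Function.update y none (y none) = y := Function.update_eq_self _ _
    have h1 := (hc.tendsto (y none)).eventually (by rw [h0]; exact hev)
    obtain ⟨ε, hε, h2⟩ := Metric.eventually_nhds_iff.1 h1
    have h3 := (h2 (y := y none + ε / 2) (by
      rw [Real.dist_eq, add_sub_cancel_left, abs_of_pos (by linarith)]; linarith)).2
    simp only [Function.update_self, ne_eq, reduceCtorEq, not_false_eq_true,
      Function.update_of_ne] at h3
    linarith)
  refine ⟨P, hP0, fun x hx => hP _ ⟨hx, rfl⟩⟩
end

section
/- Assume p_1,…,p_m are positive rational numbers. A quiver datum (V, p) is feasible (i.e., cap(V, p) > 0) if and only if V is p-semi-stable. -/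
open Matrix BigOperators

/-- A representation `V` is `p`-semi-stable: every tuple of subspaces compatible with all
the linear maps `V_a` satisfies `∑_i dim U_i ≤ ∑_j p_j dim U_j`. -/
def Semistable {k m : ℕ} {d : Fin k → ℕ} {n : Fin m → ℕ} {A : Fin k → Fin m → ℕ}
    (p : Fin m → ℝ)
    (V : ∀ i : Fin k, ∀ j : Fin m, Fin (A i j) → Matrix (Fin (n j)) (Fin (d i)) ℝ) : Prop :=
  ∀ (U1 : ∀ i : Fin k, Submodule ℝ (Fin (d i) → ℝ))
    (U2 : ∀ j : Fin m, Submodule ℝ (Fin (n j) → ℝ)),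
    (∀ i j a, (U1 i).map (V i j a).mulVecLin ≤ U2 j) →
    ∑ i : Fin k, (Module.finrank ℝ (U1 i) : ℝ) ≤
      ∑ j : Fin m, p j * (Module.finrank ℝ (U2 j) : ℝ)


lemma one_le_det_one_add {N : Type*} [Fintype N] [DecidableEq N] {B : Matrix N N ℝ}
    (hB : B.PosSemidef) : 1 ≤ (1 + B).det := by
  have hs := hB.1.spectral_theorem
  set U : Matrix N N ℝ := (hB.1.eigenvectorUnitary : Matrix N N ℝ) with hU
  have hUU : U * star U = 1 := Unitary.coe_mul_star_self _
  have hUU' : star U * U = 1 := Unitary.coe_star_mul_self _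
  have h1 : 1 + B = U * diagonal (fun i => 1 + hB.1.eigenvalues i) * star U := by
    conv_lhs => rw [hs]
    rw [Unitary.conjStarAlgAut_apply]
    have : (diagonal (fun i => 1 + hB.1.eigenvalues i) : Matrix N N ℝ)
        = 1 + diagonal (RCLike.ofReal ∘ hB.1.eigenvalues) := by
      rw [← diagonal_one, diagonal_add]; rfl
    rw [this, mul_add, add_mul, mul_one, hUU]
  rw [h1, det_mul_right_comm, hUU, one_mul, det_diagonal]
  have hev := hB.eigenvalues_nonneg
  calc (1:ℝ) = ∏ i : N, (1:ℝ) := by simp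
    _ ≤ _ := Finset.prod_le_prod (fun _ _ => zero_le_one) fun i _ => by
      have := hev i; linarith

lemma det_lower {T N : Type*} [Fintype T] [DecidableEq T] [Fintype N] [DecidableEq N]
    (W : Matrix T N ℝ) (μ : T → ℝ) (hμ : ∀ t, 0 < μ t) (c : N → T) :
    (W.submatrix c id).det ^ 2 * ∏ x, μ (c x) ≤ (Wᵀ * diagonal μ * W).det := by
  classical
  have hps : ∀ ν : T → ℝ, (∀ t, 0 ≤ ν t) → (Wᵀ * diagonal ν * W).PosSemidef := by
    intro ν hν
    have := (PosSemidef.diagonal (n := T) (d := ν) hν).conjTranspose_mul_mul_same W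
    simpa using this
  by_cases hF : (W.submatrix c id).det = 0
  · rw [hF]; simpa using (hps μ fun t => (hμ t).le).det_nonneg
  have hinj : Function.Injective c := by
    intro a b hab
    by_contra hne
    exact hF (det_zero_of_row_eq hne (by ext y; simp [hab]))
  set F := W.submatrix c id with hFd
  let S : Matrix N N ℝ := diagonal fun x => Real.sqrt (μ (c x))
  let G := S * F
  have hS : S.det ^ 2 = ∏ x, μ (c x) := by
    simp only [S, det_diagonal, ← Finset.prod_pow]
    exact Finset.prod_congr rfl fun x _ => Real.sq_sqrt (hμ _).le
  have hG2 : G.det ^ 2 = F.det ^ 2 * ∏ x, μ (c x) := by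
    rw [det_mul, mul_pow, hS, mul_comm]
  have hG : G.det ≠ 0 := by
    intro h
    rw [h] at hG2
    have : 0 < F.det ^ 2 * ∏ x, μ (c x) := mul_pos (by positivity) (Finset.prod_pos fun x _ => hμ _)
    simp at hG2
    rcases hG2 with h | h
    · exact hF h
    · rw [h] at this; simp at this
  let ν : T → ℝ := fun t => if t ∈ Set.range c then 0 else μ t
  set B := Wᵀ * diagonal ν * W with hBd
  have hB : B.PosSemidef := hps ν fun t => by
    dsimp only [ν]; split_ifs; exacts [le_rfl, (hμ t).le]
  have hM : Wᵀ * diagonal μ * W = Gᵀ * G + B := by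
    ext x y
    have e1 : ∀ ν' : T → ℝ, (Wᵀ * diagonal ν' * W) x y = ∑ t, ν' t * (W t x * W t y) := by
      intro ν'
      rw [mul_apply]
      simp only [mul_diagonal, transpose_apply]
      exact Finset.sum_congr rfl fun t _ => by ring
    have e2 : (Gᵀ * G) x y = ∑ z, μ (c z) * (W (c z) x * W (c z) y) := by
      rw [mul_apply]
      simp only [transpose_apply, G, S, diagonal_mul, hFd, submatrix_apply, id]
      refine Finset.sum_congr rfl fun z _ => ?_
      have := Real.mul_self_sqrt (hμ (c z)).le
      linear_combination (W (c z) x * W (c z) y) * this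
    rw [Matrix.add_apply, e2, hBd, e1, e1]
    have e3 : ∑ z, μ (c z) * (W (c z) x * W (c z) y)
        = ∑ t, (if t ∈ Set.range c then μ t * (W t x * W t y) else 0) := by
      rw [← Finset.sum_filter, ← Finset.sum_image (s := Finset.univ) (g := c)
        (f := fun t => μ t * (W t x * W t y)) (fun a _ b _ h => hinj h)]
      refine Finset.sum_congr ?_ fun _ _ => rfl
      ext t; simp
    rw [e3, ← Finset.sum_add_distrib]
    refine Finset.sum_congr rfl fun t _ => ?_
    dsimp only [ν]; split_ifs <;> simp
  have hGu : IsUnit G.det := isUnit_iff_ne_zero.2 hG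
  have hB' : ((G⁻¹)ᵀ * B * G⁻¹).PosSemidef := by
    simpa using hB.conjTranspose_mul_mul_same G⁻¹
  have hM2 : Wᵀ * diagonal μ * W = Gᵀ * (1 + (G⁻¹)ᵀ * B * G⁻¹) * G := by
    rw [hM, mul_add, add_mul, mul_one]
    congr 1
    have h1 : Gᵀ * (G⁻¹)ᵀ = 1 := by rw [← transpose_mul, nonsing_inv_mul _ hGu, transpose_one]
    calc B = (Gᵀ * (G⁻¹)ᵀ) * B * (G⁻¹ * G) := by rw [h1, nonsing_inv_mul _ hGu]; simp
      _ = _ := by simp only [Matrix.mul_assoc]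
  rw [← hG2, hM2, det_mul _ G, det_mul Gᵀ, det_transpose]
  have := one_le_det_one_add hB'
  nlinarith [sq_nonneg G.det]

/-- Abel summation inequality. -/
lemma abel_ineq (b x : ℕ → ℝ) (r : ℕ) (hx : ∀ s, s + 1 < r → x (s + 1) ≤ x s)
    (hb : ∀ q, q ≤ r → 0 ≤ ∑ s ∈ Finset.range q, b s)
    (h0 : ∑ s ∈ Finset.range r, b s = 0) :
    0 ≤ ∑ s ∈ Finset.range r, b s * x s := by
  have key : ∀ q, q + 1 ≤ r → (∑ s ∈ Finset.range (q + 1), b s) * x q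
      ≤ ∑ s ∈ Finset.range (q + 1), b s * x s := by
    intro q
    induction q with
    | zero => intro _; simp
    | succ q ih =>
      intro hq
      rw [Finset.sum_range_succ, Finset.sum_range_succ (fun s => b s * x s)]
      have h1 := ih (by omega)
      have h2 := hx q (by omega)
      have h3 := hb (q + 1) (by omega)
      nlinarith
  rcases r with _ | q
  · simp
  · have := key q le_rfl
    rw [h0, zero_mul] at this
    exact this

lemma greedy_chain {T M : Type*} [AddCommGroup M] [Module ℝ M] (v : T → M) (ρ : T → ℕ) (q : ℕ) :
    ∃ B : Set T, LinearIndepOn ℝ v B ∧ B ⊆ {t | ρ t < q} ∧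
      ∀ s ≤ q, Submodule.span ℝ (v '' (B ∩ {t | ρ t < s})) = Submodule.span ℝ (v '' {t | ρ t < s}) := by
  induction q with
  | zero =>
    refine ⟨∅, linearIndepOn_empty _ _, by simp, ?_⟩
    intro s hs
    obtain rfl : s = 0 := by omega
    simp
  | succ q ih =>
    obtain ⟨B, hB, hBq, hsp⟩ := ih
    have hsub : B ⊆ {t | ρ t < q + 1} := fun t ht => Nat.lt_succ_of_lt (hBq ht)
    refine ⟨hB.extend hsub, hB.linearIndepOn_extend hsub, hB.extend_subset hsub, ?_⟩
    intro s hs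
    rcases Nat.lt_or_ge q s with h | h
    · obtain rfl : s = q + 1 := by omega
      rw [Set.inter_eq_left.2 (hB.extend_subset hsub)]
      exact hB.span_image_extend_eq_span_image hsub
    · apply le_antisymm
      · exact Submodule.span_mono (Set.image_mono Set.inter_subset_right)
      · rw [← hsp s h]
        exact Submodule.span_mono (Set.image_mono
          (Set.inter_subset_inter_left _ (hB.subset_extend hsub)))

lemma greedy {T N : Type*} [Fintype T] [DecidableEq T] [Fintype N] [DecidableEq N]
    (W : Matrix T N ℝ) (ρ : T → ℕ) (w : ℕ → ℝ) (r : ℕ) (hr : ∀ t, ρ t < r)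
    (hw : (Fintype.card N : ℝ) ≤ w r)
    (h : ∀ s ≤ r, w s ≤ (Module.finrank ℝ (Submodule.span ℝ (W.row '' {t | ρ t < s})) : ℝ)) :
    ∃ c : N → T, (W.submatrix c id).det ≠ 0 ∧
      ∀ s ≤ r, w s ≤ ((Finset.univ.filter fun x => ρ (c x) < s).card : ℝ) := by
  classical
  obtain ⟨B, hB, -, hsp⟩ := greedy_chain W.row ρ r
  have hcard : ∀ s ≤ r, Module.finrank ℝ (Submodule.span ℝ (W.row '' {t | ρ t < s}))
      = (Finset.univ.filter fun t => t ∈ B ∧ ρ t < s).card := by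
    intro s hs
    rw [← hsp s hs]
    have hi : LinearIndepOn ℝ W.row (B ∩ {t | ρ t < s}) := hB.mono Set.inter_subset_left
    have h2 := finrank_span_eq_card (R := ℝ) hi
    rw [← Set.image_eq_range] at h2
    rw [h2, Fintype.card_subtype]
    rfl
  have hBr : (Finset.univ.filter fun t => t ∈ B ∧ ρ t < r).card = Fintype.card B := by
    rw [Fintype.card_subtype]; congr 1; ext t; simp [hr t]
  have hBN : Fintype.card B = Fintype.card N := by
    apply le_antisymm
    · have := LinearIndependent.fintype_card_le_finrank hB
      simpa using this
    · have := (hw.trans (h r le_rfl))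
      rw [hcard r le_rfl, hBr] at this
      exact_mod_cast this
  let f : N ≃ B := (Fintype.equivOfCardEq hBN).symm
  refine ⟨fun x => (f x : T), ?_, ?_⟩
  · have hl : LinearIndependent ℝ (W.submatrix (fun x => (f x : T)) id).row :=
      LinearIndependent.comp hB f f.injective
    have := linearIndependent_rows_iff_isUnit.1 hl
    exact ((isUnit_iff_isUnit_det _).1 this).ne_zero
  · intro s hs
    refine (h s hs).trans ?_
    rw [hcard s hs]
    norm_cast
    apply le_of_eq
    symm
    refine Finset.card_bij (fun x _ => (f x : T)) ?_ ?_ ?_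
    · intro x hx; simpa using hx
    · intro x _ y _ hxy; exact f.injective (Subtype.ext hxy)
    · intro t ht
      simp only [Finset.mem_filter, Finset.mem_univ, true_and] at ht
      refine ⟨f.symm ⟨t, ht.1⟩, ?_, by simp⟩
      simpa using ht.2

/-- Combinatorial admissibility of a selection `c` of rows with respect to an ordering `ρ`. -/
def Adm {T N E : Type*} [Fintype N] [Fintype E] (lab : T → E) (w : E → ℝ)
    (ρ : E ≃ Fin (Fintype.card E)) (c : N → T) : Prop :=
  ∀ s ≤ Fintype.card E, ∑ e with (ρ e : ℕ) < s, w e ≤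
    ((Finset.univ.filter fun x => (ρ (lab (c x)) : ℕ) < s).card : ℝ)

lemma adm_prod {T N E : Type*} [Fintype N] [Fintype E] (lab : T → E) (w : E → ℝ)
    (ρ : E ≃ Fin (Fintype.card E)) (c : N → T) (hc : Adm lab w ρ c)
    (hw : ∑ e, w e = Fintype.card N) (lam : E → ℝ) (hpos : ∀ e, 0 < lam e)
    (hanti : ∀ e e', ρ e ≤ ρ e' → lam e' ≤ lam e) :
    ∏ e, lam e ^ w e ≤ ∏ x, lam (lab (c x)) := by
  classical
  let cnt : E → ℝ := fun e => ((Finset.univ.filter fun x => lab (c x) = e).card : ℝ)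
  have hcnt : ∀ g : E → ℝ, ∑ x, g (lab (c x)) = ∑ e, cnt e * g e := by
    intro g
    rw [← Finset.sum_fiberwise (s := Finset.univ) (g := fun x => lab (c x))]
    refine Finset.sum_congr rfl fun e _ => ?_
    rw [Finset.sum_congr rfl (g := fun _ => g e)]
    · simp [cnt]
    · intro x hx; simp at hx; rw [hx]
  let b : ℕ → ℝ := fun s => ∑ e with (ρ e : ℕ) = s, (cnt e - w e)
  let x : ℕ → ℝ := fun s => if h : s < Fintype.card E then Real.log (lam (ρ.symm ⟨s, h⟩)) else 0
  have hxρ : ∀ e, x (ρ e) = Real.log (lam e) := by intro e; simp [x]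
  have hbs : ∀ q, ∑ s ∈ Finset.range q, b s = ∑ e with (ρ e : ℕ) < q, (cnt e - w e) := by
    intro q
    rw [← Finset.sum_fiberwise_of_maps_to (s := Finset.univ.filter fun e => (ρ e : ℕ) < q)
      (t := Finset.range q) (g := fun e => (ρ e : ℕ)) (by intro e he; simpa using he)]
    refine Finset.sum_congr rfl fun s hs => ?_
    simp only [b, Finset.filter_filter]
    refine Finset.sum_congr ?_ fun _ _ => rfl
    ext e
    simp at hs ⊢
    omega
  have hfull : (Finset.univ.filter fun e => (ρ e : ℕ) < Fintype.card E) = Finset.univ := by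
    ext e; simp
  have key := abel_ineq b x (Fintype.card E) ?_ ?_ ?_
  · have h1 : ∑ s ∈ Finset.range (Fintype.card E), b s * x s
        = ∑ e, (cnt e - w e) * Real.log (lam e) := by
      rw [← Finset.sum_fiberwise_of_maps_to (s := Finset.univ)
        (t := Finset.range (Fintype.card E)) (g := fun e => (ρ e : ℕ)) (by intro e he; simp)]
      refine Finset.sum_congr rfl fun s hs => ?_
      rw [Finset.sum_mul]
      refine Finset.sum_congr rfl fun e he => ?_
      simp at he
      rw [← he, hxρ]
    rw [h1] at key
    simp only [sub_mul, Finset.sum_sub_distrib] at key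
    rw [← hcnt (fun e => Real.log (lam e))] at key
    have e1 : ∏ e, lam e ^ w e = Real.exp (∑ e, w e * Real.log (lam e)) := by
      rw [Real.exp_sum]
      exact Finset.prod_congr rfl fun e _ => by rw [Real.rpow_def_of_pos (hpos e), mul_comm]
    have e2 : ∏ x, lam (lab (c x)) = Real.exp (∑ x, Real.log (lam (lab (c x)))) := by
      rw [Real.exp_sum]
      exact Finset.prod_congr rfl fun e _ => by rw [Real.exp_log (hpos _)]
    rw [e1, e2]
    exact Real.exp_le_exp.2 (by linarith)
  · intro s hs
    have h2 : s < Fintype.card E := by omega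
    simp only [x, hs, h2, dif_pos]
    refine Real.log_le_log (hpos _) (hanti _ _ ?_)
    simp [Fin.le_def]
  · intro q hq
    rw [hbs]
    have h3 := hc q hq
    have h4 : ((Finset.univ.filter fun x => (ρ (lab (c x)) : ℕ) < q).card : ℝ)
        = ∑ e with (ρ e : ℕ) < q, cnt e := by
      have := hcnt fun e => if (ρ e : ℕ) < q then 1 else 0
      simp only [mul_ite, mul_one, mul_zero, ← Finset.sum_filter] at this
      rw [← this]; simp
    rw [Finset.sum_sub_distrib, ← h4]
    linarith
  · rw [hbs, hfull, Finset.sum_sub_distrib, hw]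
    have := hcnt fun _ => 1
    simp at this
    rw [← this]; simp

lemma exists_order {E : Type*} [Fintype E] (lam : E → ℝ) :
    ∃ ρ : E ≃ Fin (Fintype.card E), ∀ e e', ρ e ≤ ρ e' → lam e' ≤ lam e := by
  let e0 := Fintype.equivFin E
  let f : Fin (Fintype.card E) → ℝ := fun i => - lam (e0.symm i)
  refine ⟨e0.trans (Tuple.sort f).symm, ?_⟩
  intro e e' h
  have := Tuple.monotone_sort f h
  simpa [f] using this

lemma uniform_lower {X T N E : Type*} [TopologicalSpace X] [Fintype T] [DecidableEq T]
    [Fintype N] [DecidableEq N] [Fintype E] (K : Set X) (hK : IsCompact K)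
    (W : X → Matrix T N ℝ) (hW : Continuous W) (lab : T → E) (w : E → ℝ)
    (hw : ∑ e, w e = Fintype.card N)
    (hrank : ∀ u ∈ K, ∀ S : Finset E, ∑ e ∈ S, w e ≤
      (Module.finrank ℝ (Submodule.span ℝ ((W u).row '' {t | lab t ∈ S})) : ℝ)) :
    ∃ δ > 0, ∀ u ∈ K, ∀ lam : E → ℝ, (∀ e, 0 < lam e) →
      δ * ∏ e, lam e ^ w e ≤ ((W u)ᵀ * diagonal (fun t => lam (lab t)) * W u).det := by
  classical
  let G : (E ≃ Fin (Fintype.card E)) → X → ℝ := fun ρ u =>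
    ∑ c : N → T with Adm lab w ρ c, ((W u).submatrix c id).det ^ 2
  have hGc : ∀ ρ, Continuous (G ρ) := by
    intro ρ
    refine continuous_finsetSum _ fun c _ => ?_
    exact ((hW.matrix_submatrix c id).matrix_det).pow 2
  have hGpos : ∀ ρ, ∀ u ∈ K, 0 < G ρ u := by
    intro ρ u hu
    obtain ⟨c, hc, hadm⟩ := greedy (W u) (fun t => (ρ (lab t) : ℕ))
      (fun s => ∑ e with (ρ e : ℕ) < s, w e) (Fintype.card E) (fun t => (ρ (lab t)).2)
      (by
        have hfull : (Finset.univ.filter fun e => (ρ e : ℕ) < Fintype.card E) = Finset.univ := by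
          ext e; simp
        simp only [hfull, hw, le_refl])
      (by
        intro s hs
        have := hrank u hu (Finset.univ.filter fun e => (ρ e : ℕ) < s)
        have hset : {t | lab t ∈ Finset.univ.filter fun e => (ρ e : ℕ) < s}
            = {t | (ρ (lab t) : ℕ) < s} := by ext t; simp
        rw [hset] at this
        exact this)
    refine Finset.sum_pos' (fun _ _ => sq_nonneg _) ⟨c, ?_, by positivity⟩
    exact Finset.mem_filter.2 ⟨Finset.mem_univ _, hadm⟩
  have hδ : ∀ ρ, ∃ δ > 0, ∀ u ∈ K, δ ≤ G ρ u := by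
    intro ρ
    rcases K.eq_empty_or_nonempty with rfl | hne
    · exact ⟨1, one_pos, by simp⟩
    · obtain ⟨u0, hu0, hmin⟩ := hK.exists_isMinOn hne (hGc ρ).continuousOn
      exact ⟨G ρ u0, hGpos ρ u0 hu0, fun u hu => hmin hu⟩
  choose δ hδ0 hδle using hδ
  have : Nonempty (E ≃ Fin (Fintype.card E)) := ⟨Fintype.equivFin E⟩
  obtain ⟨ρ0, hρ0⟩ := Finite.exists_min δ
  let C : ℝ := Fintype.card (N → T) + 1
  have hC : 0 < C := by positivity
  refine ⟨δ ρ0 / C, div_pos (hδ0 _) hC, ?_⟩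
  intro u hu lam hpos
  obtain ⟨ρ, hρ⟩ := exists_order lam
  set D := ((W u)ᵀ * diagonal (fun t => lam (lab t)) * W u).det with hD
  have hdet : ∀ c : N → T, ((W u).submatrix c id).det ^ 2 * ∏ x, lam (lab (c x)) ≤ D := fun c =>
    det_lower (W u) (fun t => lam (lab t)) (fun t => hpos _) c
  have hP : 0 < ∏ e, lam e ^ w e := Finset.prod_pos fun e _ => Real.rpow_pos_of_pos (hpos e) _
  have hD0 : 0 ≤ D := by
    have := (PosSemidef.diagonal (n := T) (d := fun t => lam (lab t))
      (fun t => (hpos _).le)).conjTranspose_mul_mul_same (W u)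
    simpa using this.det_nonneg
  have h1 : G ρ u * ∏ e, lam e ^ w e ≤ C * D := by
    simp only [G, Finset.sum_mul]
    calc _ ≤ ∑ c : N → T with Adm lab w ρ c, D := by
          refine Finset.sum_le_sum fun c hc => ?_
          refine le_trans ?_ (hdet c)
          refine mul_le_mul_of_nonneg_left ?_ (sq_nonneg _)
          exact adm_prod lab w ρ c (Finset.mem_filter.1 hc).2 hw lam hpos hρ
      _ ≤ ∑ c : N → T, D := Finset.sum_le_sum_of_subset_of_nonneg (Finset.filter_subset _ _)
          fun _ _ _ => hD0
      _ = Fintype.card (N → T) * D := by simp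
      _ ≤ C * D := mul_le_mul_of_nonneg_right (by simp [C]) hD0
  rw [div_mul_eq_mul_div, div_le_iff₀ hC, mul_comm D]
  refine le_trans ?_ h1
  exact mul_le_mul_of_nonneg_right ((hρ0 ρ).trans (hδle ρ u hu)) hP.le

lemma det_blockDiag_sigma {k : ℕ} {d : Fin k → ℕ} (M : ∀ i, Matrix (Fin (d i)) (Fin (d i)) ℝ) :
    (blockDiagonal' M).det = ∏ i, (M i).det := by
  rw [(blockTriangular_blockDiagonal' M).det_fintype]
  refine Finset.prod_congr rfl fun i _ => ?_
  let e : Fin (d i) ≃ {s : Σ i, Fin (d i) // s.1 = i} :=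
    { toFun := fun x => ⟨⟨i, x⟩, rfl⟩
      invFun := fun s => Fin.cast (congrArg d s.2) s.1.2
      left_inv := fun x => rfl
      right_inv := by rintro ⟨⟨i', x⟩, rfl⟩; rfl }
  rw [← det_submatrix_equiv_self e]
  congr 1
  ext x y
  exact blockDiagonal'_apply_eq M i x y

/-- The matrix of all (scaled) row vectors `V_aᵀ u_{jl}`. -/
noncomputable def bigW {k m : ℕ} {d : Fin k → ℕ} {n : Fin m → ℕ} {A : Fin k → Fin m → ℕ}
    (p : Fin m → ℝ)
    (V : ∀ i : Fin k, ∀ j : Fin m, Fin (A i j) → Matrix (Fin (n j)) (Fin (d i)) ℝ)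
    (u : ∀ j : Fin m, Matrix (Fin (n j)) (Fin (n j)) ℝ) :
    Matrix (Σ i : Fin k, Σ j : Fin m, Fin (A i j) × Fin (n j)) (Σ i : Fin k, Fin (d i)) ℝ :=
  blockDiagonal' fun i => Matrix.of fun (t : Σ j : Fin m, Fin (A i j) × Fin (n j)) y =>
    Real.sqrt (p t.1) * ((u t.1)ᵀ * V i t.1 t.2.1) t.2.2 y

/-- The label of a row. -/
def bigLab {k m : ℕ} {n : Fin m → ℕ} {A : Fin k → Fin m → ℕ}
    (t : Σ i : Fin k, Σ j : Fin m, Fin (A i j) × Fin (n j)) : Σ j : Fin m, Fin (n j) :=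
  ⟨t.2.1, t.2.2.2⟩

section
variable {k m : ℕ} {d : Fin k → ℕ} {n : Fin m → ℕ} {A : Fin k → Fin m → ℕ}
    (p : Fin m → ℝ)
    (V : ∀ i : Fin k, ∀ j : Fin m, Fin (A i j) → Matrix (Fin (n j)) (Fin (d i)) ℝ)

lemma bigW_continuous : Continuous (bigW p V) := by
  unfold bigW
  refine Continuous.matrix_blockDiagonal' ?_
  refine continuous_pi fun i => ?_
  refine continuous_matrix fun t y => ?_
  simp only [of_apply, mul_apply, transpose_apply]
  fun_prop

lemma bigW_det (hp : ∀ j, 0 ≤ p j) (u : ∀ j : Fin m, Matrix (Fin (n j)) (Fin (n j)) ℝ)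
    (lam : (Σ j : Fin m, Fin (n j)) → ℝ) :
    ((bigW p V u).transpose * (diagonal (fun t => lam (bigLab t)) :
      Matrix (Σ i : Fin k, Σ j : Fin m, Fin (A i j) × Fin (n j))
        (Σ i : Fin k, Σ j : Fin m, Fin (A i j) × Fin (n j)) ℝ) * bigW p V u).det =
      ∏ i : Fin k, (∑ j : Fin m, p j • ∑ a : Fin (A i j), (V i j a)ᵀ *
        (u j * diagonal (fun l => lam ⟨j, l⟩) * (u j)ᵀ) * V i j a).det := by
  have h : (diagonal (fun t => lam (bigLab t)) :
      Matrix (Σ i : Fin k, Σ j : Fin m, Fin (A i j) × Fin (n j)) _ ℝ) =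
      blockDiagonal' fun i => diagonal fun (t : Σ j : Fin m, Fin (A i j) × Fin (n j)) =>
        lam ⟨t.1, t.2.2⟩ := by
    rw [blockDiagonal'_diagonal]; rfl
  rw [h]
  unfold bigW
  rw [blockDiagonal'_transpose, ← blockDiagonal'_mul, ← blockDiagonal'_mul,
    det_blockDiag_sigma]
  refine Finset.prod_congr rfl fun i _ => ?_
  congr 1
  ext x y
  rw [mul_apply]
  simp only [mul_diagonal, transpose_apply, of_apply]
  rw [Fintype.sum_sigma, Matrix.sum_apply]
  refine Finset.sum_congr rfl fun j _ => ?_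
  rw [Fintype.sum_prod_type, Matrix.smul_apply, Matrix.sum_apply, smul_eq_mul, Finset.mul_sum]
  refine Finset.sum_congr rfl fun a _ => ?_
  have e : (V i j a)ᵀ * (u j * diagonal (fun l => lam ⟨j, l⟩) * (u j)ᵀ) * V i j a
      = ((u j)ᵀ * V i j a)ᵀ * diagonal (fun l => lam ⟨j, l⟩) * ((u j)ᵀ * V i j a) := by
    rw [transpose_mul, transpose_transpose]; simp only [Matrix.mul_assoc]
  rw [e, mul_apply (M := ((u j)ᵀ * V i j a)ᵀ * diagonal (fun l => lam ⟨j, l⟩)), Finset.mul_sum]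
  refine Finset.sum_congr rfl fun l _ => ?_
  simp only [mul_diagonal, transpose_apply]
  have := Real.mul_self_sqrt (hp j)
  linear_combination (((u j)ᵀ * V i j a) l x * lam ⟨j, l⟩ * ((u j)ᵀ * V i j a) l y) * this

lemma bigW_rank (hp : ∀ j, 0 < p j)
    (hbal : ∑ i : Fin k, (d i : ℝ) = ∑ j : Fin m, p j * (n j : ℝ))
    (hss : Semistable p V) (u : ∀ j : Fin m, Matrix (Fin (n j)) (Fin (n j)) ℝ)
    (hu : ∀ j, u j * (u j)ᵀ = 1) (S : Finset (Σ j : Fin m, Fin (n j))) :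
    ∑ e ∈ S, p e.1 ≤
      (Module.finrank ℝ (Submodule.span ℝ ((bigW p V u).row '' {t | bigLab t ∈ S})) : ℝ) := by
  classical
  let B := (bigW p V u).submatrix (Subtype.val : {t // bigLab t ∈ S} → _) id
  have hrange : Set.range B.row = (bigW p V u).row '' {t | bigLab t ∈ S} := by
    rw [Set.image_eq_range]; rfl
  have hrk : B.rank = Module.finrank ℝ (Submodule.span ℝ ((bigW p V u).row '' {t | bigLab t ∈ S})) := by
    rw [rank_eq_finrank_span_row, hrange]
  have hrn : B.rank + Module.finrank ℝ (LinearMap.ker B.mulVecLin) = ∑ i, d i := by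
    have := LinearMap.finrank_range_add_finrank_ker B.mulVecLin
    rw [Module.finrank_fintype_fun_eq_card, Fintype.card_sigma] at this
    simpa [Matrix.rank] using this
  -- the subspaces
  let U2 : ∀ j : Fin m, Submodule ℝ (Fin (n j) → ℝ) := fun j =>
    Submodule.span ℝ (((Finset.univ.filter fun l => (⟨j, l⟩ : Σ j, Fin (n j)) ∉ S).image
      (fun l => (u j).col l) : Finset (Fin (n j) → ℝ)) : Set (Fin (n j) → ℝ))
  let U1 : ∀ i : Fin k, Submodule ℝ (Fin (d i) → ℝ) := fun i =>
    ⨅ j, ⨅ a, (U2 j).comap (V i j a).mulVecLin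
  have hU := hss U1 U2 (by
    intro i j a
    rw [Submodule.map_le_iff_le_comap]
    exact (iInf_le _ j).trans (iInf_le _ a))
  have hU2 : ∀ j, (Module.finrank ℝ (U2 j) : ℝ) ≤
      ((Finset.univ.filter fun l => (⟨j, l⟩ : Σ j, Fin (n j)) ∉ S).card : ℝ) := by
    intro j
    norm_cast
    exact (finrank_span_finset_le_card _).trans Finset.card_image_le
  -- kernel embeds
  have hker : ∀ x ∈ LinearMap.ker B.mulVecLin, ∀ i, (fun y => x ⟨i, y⟩) ∈ U1 i := by
    intro x hx i
    simp only [U1, Submodule.mem_iInf, Submodule.mem_comap]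
    intro j a
    set z := (V i j a).mulVecLin fun y => x ⟨i, y⟩ with hz
    have hzero : ∀ l, (⟨j, l⟩ : Σ j, Fin (n j)) ∈ S → ((u j)ᵀ *ᵥ z) l = 0 := by
      intro l hl
      have h1 := congrFun (LinearMap.mem_ker.1 hx) ⟨⟨i, j, a, l⟩, hl⟩
      simp only [mulVecLin_apply, mulVec, dotProduct, B, submatrix_apply, id, Pi.zero_apply] at h1
      rw [Fintype.sum_sigma, Finset.sum_eq_single i] at h1
      · simp only [bigW, blockDiagonal'_apply_eq, of_apply, mul_assoc] at h1
        rw [← Finset.mul_sum] at h1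
        rcases mul_eq_zero.1 h1 with h | h
        · exact absurd h (Real.sqrt_pos.2 (hp j)).ne'
        · rw [hz, mulVecLin_apply, mulVec_mulVec]
          exact h
      · intro i' _ hne
        refine Finset.sum_eq_zero fun y _ => ?_
        rw [bigW, blockDiagonal'_apply_ne _ _ _ hne.symm, zero_mul]
      · simp
    have hzz : z = ∑ l, ((u j)ᵀ *ᵥ z) l • (u j).col l := by
      conv_lhs => rw [← one_mulVec z, ← hu j, ← mulVec_mulVec]
      ext q
      simp [mulVec, dotProduct, Finset.sum_apply, mul_comm]
    rw [hzz]
    refine Submodule.sum_mem _ fun l _ => ?_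
    by_cases hl : (⟨j, l⟩ : Σ j, Fin (n j)) ∈ S
    · rw [hzero l hl, zero_smul]; exact Submodule.zero_mem _
    · refine Submodule.smul_mem _ _ (Submodule.subset_span ?_)
      simp only [Finset.coe_image, Set.mem_image, Finset.coe_filter, Finset.mem_univ, true_and,
        Set.mem_ofPred_eq]
      exact ⟨l, hl, rfl⟩
  have hkd : Module.finrank ℝ (LinearMap.ker B.mulVecLin) ≤ ∑ i, Module.finrank ℝ (U1 i) := by
    rw [← Module.finrank_pi_fintype]
    let f : LinearMap.ker B.mulVecLin →ₗ[ℝ] (∀ i, U1 i) :=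
      { toFun := fun x i => ⟨fun y => (x : (Σ i, Fin (d i)) → ℝ) ⟨i, y⟩, hker x x.2 i⟩
        map_add' := fun x y => rfl
        map_smul' := fun c x => rfl }
    refine LinearMap.finrank_le_finrank_of_injective (f := f) ?_
    intro x y hxy
    ext ⟨i, q⟩
    have := congrFun hxy i
    exact congrFun (congrArg Subtype.val this) q
  have hcount : ∑ j, p j * ((Finset.univ.filter fun l => (⟨j, l⟩ : Σ j, Fin (n j)) ∉ S).card : ℝ)
      = ∑ j, p j * (n j : ℝ) - ∑ e ∈ S, p e.1 := by
    have h1 : ∑ j, p j * (n j : ℝ) = ∑ e : Σ j, Fin (n j), p e.1 := by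
      rw [Fintype.sum_sigma]; simp [mul_comm]
    have h2 : ∑ e ∈ S, p e.1 + ∑ e ∈ Sᶜ, p e.1 = ∑ e : Σ j, Fin (n j), p e.1 :=
      Finset.sum_add_sum_compl _ _
    have h3 : ∑ e ∈ Sᶜ, p e.1
        = ∑ j, p j * ((Finset.univ.filter fun l => (⟨j, l⟩ : Σ j, Fin (n j)) ∉ S).card : ℝ) := by
      have : Sᶜ = Finset.univ.filter fun e => e ∉ S := by ext; simp
      rw [this, Finset.sum_filter, Fintype.sum_sigma]
      refine Finset.sum_congr rfl fun j _ => ?_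
      rw [← Finset.sum_filter]
      simp [mul_comm]
    linarith
  rw [← hrk]
  have h5 : ∑ j, p j * (Module.finrank ℝ (U2 j) : ℝ) ≤
      ∑ j, p j * ((Finset.univ.filter fun l => (⟨j, l⟩ : Σ j, Fin (n j)) ∉ S).card : ℝ) :=
    Finset.sum_le_sum fun j _ => mul_le_mul_of_nonneg_left (hU2 j) (hp j).le
  have h6 : ((B.rank : ℝ) + Module.finrank ℝ (LinearMap.ker B.mulVecLin)) = ∑ i, (d i : ℝ) := by
    exact_mod_cast hrn
  have h7 : (Module.finrank ℝ (LinearMap.ker B.mulVecLin) : ℝ)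
      ≤ ∑ i, (Module.finrank ℝ (U1 i) : ℝ) := by exact_mod_cast hkd
  linarith

lemma isCompact_orth (q : ℕ) : IsCompact {u : Matrix (Fin q) (Fin q) ℝ | u * uᵀ = 1} := by
  have hcl : IsClosed {u : Matrix (Fin q) (Fin q) ℝ | u * uᵀ = 1} :=
    isClosed_eq (continuous_id.matrix_mul continuous_id.matrix_transpose) continuous_const
  have hK : IsCompact (Set.univ.pi fun _ : Fin q => Set.univ.pi fun _ : Fin q =>
      Set.Icc (-1 : ℝ) 1) :=
    isCompact_univ_pi fun _ => isCompact_univ_pi fun _ => isCompact_Icc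
  refine IsCompact.of_isClosed_subset hK hcl ?_
  intro u hu x _ y _
  have hmem : u ∈ Matrix.unitaryGroup (Fin q) ℝ := by
    rw [mem_unitaryGroup_iff]
    simpa [star_eq_conjTranspose] using hu
  have := entry_norm_bound_of_unitary hmem x y
  rw [Real.norm_eq_abs, abs_le] at this
  exact this

lemma feasible_of_semistable (hp : ∀ j, 0 < p j)
    (hbal : ∑ i : Fin k, (d i : ℝ) = ∑ j : Fin m, p j * (n j : ℝ))
    (hss : Semistable p V) : 0 < cap p V := by
  classical
  obtain ⟨δ, hδ, hmain⟩ := uniform_lower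
    (Set.univ.pi fun j => {u : Matrix (Fin (n j)) (Fin (n j)) ℝ | u * uᵀ = 1})
    (isCompact_univ_pi fun j => isCompact_orth (n j)) (bigW p V) (bigW_continuous p V)
    bigLab (fun e : Σ j, Fin (n j) => p e.1)
    (by
      rw [Fintype.sum_sigma, Fintype.card_sigma]
      simp only [Finset.sum_const, Finset.card_univ, Fintype.card_fin, nsmul_eq_mul]
      push_cast
      rw [hbal]
      exact Finset.sum_congr rfl fun j _ => mul_comm _ _)
    (by
      intro u hu S
      exact bigW_rank p V hp hbal hss u (fun j => hu j (Set.mem_univ _)) S)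
  refine lt_of_lt_of_le hδ (le_csInf ⟨_, fun _ => 1, fun _ => PosDef.one, rfl⟩ ?_)
  rintro r ⟨Y, hY, rfl⟩
  let u : ∀ j : Fin m, Matrix (Fin (n j)) (Fin (n j)) ℝ := fun j => (hY j).1.eigenvectorUnitary
  let lam : (Σ j : Fin m, Fin (n j)) → ℝ := fun e => (hY e.1).1.eigenvalues e.2
  have hlam : ∀ e, 0 < lam e := fun e => (hY e.1).eigenvalues_pos e.2
  have hu : ∀ j, u j * (u j)ᵀ = 1 := by
    intro j
    have h : u j * star (u j) = 1 := Unitary.coe_mul_star_self _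
    simpa [star_eq_conjTranspose] using h
  have hYd : ∀ j, u j * diagonal (fun l => lam ⟨j, l⟩) * (u j)ᵀ = Y j := by
    intro j
    have h := (hY j).1.spectral_theorem
    rw [Unitary.conjStarAlgAut_apply] at h
    conv_rhs => rw [h]
    simp only [star_eq_conjTranspose, conjTranspose_eq_transpose_of_trivial]
    rfl
  have h1 := hmain u (fun j _ => hu j) lam hlam
  rw [bigW_det p V (fun j => (hp j).le)] at h1
  simp only [hYd] at h1
  have h2 : ∏ e, lam e ^ p e.1 = ∏ j, (Y j).det ^ p j := by
    rw [Fintype.prod_sigma]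
    refine Finset.prod_congr rfl fun j _ => ?_
    rw [(hY j).1.det_eq_prod_eigenvalues]
    exact Real.finsetProd_rpow Finset.univ (fun l => lam ⟨j, l⟩) (fun l _ => (hlam ⟨j, l⟩).le) (p j)
  rw [h2] at h1
  unfold capVal
  rwa [le_div_iff₀ (Finset.prod_pos fun j _ => Real.rpow_pos_of_pos (hY j).det_pos _)]

end

lemma adapted_basis {q : ℕ} (U : Submodule ℝ (Fin q → ℝ)) :
    ∃ (G : Matrix (Fin q) (Fin q) ℝ) (S : Finset (Fin q)), G.det ≠ 0 ∧
      S.card = Module.finrank ℝ U ∧ (∀ l ∈ S, G.col l ∈ U) ∧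
      ∀ x ∈ U, ∀ l ∉ S, (G⁻¹ *ᵥ x) l = 0 := by
  classical
  obtain ⟨U', hc⟩ := Submodule.exists_isCompl U
  let b0 := ((Module.finBasis ℝ U).prod (Module.finBasis ℝ U')).map
    (Submodule.prodEquivOfIsCompl U U' hc)
  have hcard : Fintype.card (Fin (Module.finrank ℝ U) ⊕ Fin (Module.finrank ℝ U'))
      = Fintype.card (Fin q) := by
    rw [← Module.finrank_eq_card_basis b0]; simp
  let φ := Fintype.equivOfCardEq hcard
  let b := b0.reindex φ
  let G : Matrix (Fin q) (Fin q) ℝ := (Pi.basisFun ℝ (Fin q)).toMatrix b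
  have hGcol : ∀ l, G.col l = b l := by intro l; ext x; simp [G, Module.Basis.toMatrix_apply]
  have hGu : IsUnit G.det := by
    have := (Pi.basisFun ℝ (Fin q)).invertibleToMatrix b
    exact (isUnit_iff_isUnit_det G).1 (isUnit_of_invertible G)
  let S : Finset (Fin q) := Finset.univ.image fun a => φ (Sum.inl a)
  have hbU : ∀ a, b (φ (Sum.inl a)) = (Module.finBasis ℝ U a : Fin q → ℝ) := by
    intro a; simp [b, b0]
  refine ⟨G, S, hGu.ne_zero, ?_, ?_, ?_⟩
  · have hinj : Function.Injective fun a : Fin (Module.finrank ℝ U) =>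
        φ (Sum.inl a : Fin (Module.finrank ℝ U) ⊕ Fin (Module.finrank ℝ U')) :=
      φ.injective.comp Sum.inl_injective
    simp only [S]
    rw [Finset.card_image_of_injective _ hinj]; simp
  · intro l hl
    obtain ⟨a, -, rfl⟩ := Finset.mem_image.1 hl
    rw [hGcol, hbU]; exact (Module.finBasis ℝ U a).2
  · intro x hx l hl
    have h1 := (Module.finBasis ℝ U).sum_repr ⟨x, hx⟩
    have h2 : x = ∑ a, (Module.finBasis ℝ U).repr ⟨x, hx⟩ a • G.col (φ (Sum.inl a)) := by
      conv_lhs => rw [show x = ((⟨x, hx⟩ : U) : Fin q → ℝ) from rfl, ← h1]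
      simp only [Submodule.coe_sum, Submodule.coe_smul, hGcol, hbU]
    rw [h2, mulVec_sum, Finset.sum_apply]
    refine Finset.sum_eq_zero fun a _ => ?_
    have h3 : G⁻¹ *ᵥ G.col (φ (Sum.inl a)) = Pi.single (φ (Sum.inl a)) 1 := by
      rw [← mulVec_single_one, mulVec_mulVec, nonsing_inv_mul _ hGu, one_mulVec]
    rw [mulVec_smul, h3, Pi.smul_apply, Pi.single_eq_of_ne, smul_zero]
    rintro rfl
    exact hl (Finset.mem_image_of_mem _ (Finset.mem_univ a))

section
variable {k m : ℕ} {d : Fin k → ℕ} {n : Fin m → ℕ} {A : Fin k → Fin m → ℕ}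
    (p : Fin m → ℝ)
    (V : ∀ i : Fin k, ∀ j : Fin m, Fin (A i j) → Matrix (Fin (n j)) (Fin (d i)) ℝ)

lemma prod_ite_card {q : ℕ} (S : Finset (Fin q)) (ε : ℝ) :
    ∏ l, (if l ∈ S then ε else 1) = ε ^ S.card := by
  rw [Finset.prod_ite]; simp

lemma semistable_of_feasible (hcap : 0 < cap p V) : Semistable p V := by
  classical
  intro U1 U2 hmap
  by_contra hlt
  rw [not_le] at hlt
  choose G1 S1 hG1 hS1 hc1 _ using fun i => adapted_basis (U1 i)
  choose G2 S2 hG2 hS2 _ hz2 using fun j => adapted_basis (U2 j)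
  let Y : ℝ → ∀ j : Fin m, Matrix (Fin (n j)) (Fin (n j)) ℝ := fun ε j =>
    ((G2 j)⁻¹)ᵀ * diagonal (fun l => if l ∈ S2 j then ε else 1) * (G2 j)⁻¹
  have hG2i : ∀ j, ((G2 j)⁻¹).det ≠ 0 := fun j => by
    rw [det_nonsing_inv, Ring.inverse_eq_inv']; exact inv_ne_zero (hG2 j)
  have hYpos : ∀ ε, 0 < ε → ∀ j, (Y ε j).PosDef := by
    intro ε hε j
    have hD : (diagonal (fun l => if l ∈ S2 j then ε else 1) :
        Matrix (Fin (n j)) (Fin (n j)) ℝ).PosDef :=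
      PosDef.diagonal fun l => by split_ifs <;> simp [hε]
    have := hD.conjTranspose_mul_mul_same (B := (G2 j)⁻¹)
      (mulVec_injective_iff_isUnit.2 ((isUnit_iff_isUnit_det _).2 (isUnit_iff_ne_zero.2 (hG2i j))))
    simpa [Y] using this
  have hYdet : ∀ ε j, (Y ε j).det = ((G2 j)⁻¹).det ^ 2 * ε ^ Module.finrank ℝ (U2 j) := by
    intro ε j
    rw [det_mul, det_mul, det_transpose, det_diagonal, prod_ite_card, hS2]; ring
  have hYU : ∀ ε j, ∀ x ∈ U2 j, Y ε j *ᵥ x = ε • (Y 1 j *ᵥ x) := by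
    intro ε j x hx
    have e1 : (diagonal (fun l => if l ∈ S2 j then ε else 1)) *ᵥ ((G2 j)⁻¹ *ᵥ x)
        = ε • ((G2 j)⁻¹ *ᵥ x) := by
      ext l
      rw [mulVec_diagonal]
      by_cases hl : l ∈ S2 j
      · simp [hl]
      · simp [hl, hz2 j x hx l hl]
    have e2 : (diagonal (fun l => if l ∈ S2 j then (1:ℝ) else 1)) *ᵥ ((G2 j)⁻¹ *ᵥ x)
        = ((G2 j)⁻¹ *ᵥ x) := by simp
    simp only [Y, ← mulVec_mulVec]
    rw [e1, e2, mulVec_smul]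
  let M : ℝ → ∀ i : Fin k, Matrix (Fin (d i)) (Fin (d i)) ℝ := fun ε i =>
    ∑ j : Fin m, p j • ∑ a : Fin (A i j), (V i j a)ᵀ * Y ε j * V i j a
  have hMU : ∀ ε i, ∀ x ∈ U1 i, M ε i *ᵥ x = ε • (M 1 i *ᵥ x) := by
    intro ε i x hx
    simp only [M, sum_mulVec, smul_mulVec, Finset.smul_sum, ← mulVec_mulVec]
    refine Finset.sum_congr rfl fun j _ => ?_
    refine Finset.sum_congr rfl fun a _ => ?_
    have hmem : V i j a *ᵥ x ∈ U2 j := hmap i j a ⟨x, hx, rfl⟩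
    rw [hYU ε j _ hmem, mulVec_smul, smul_comm]
  let R : ℝ → ∀ i : Fin k, Matrix (Fin (d i)) (Fin (d i)) ℝ := fun ε i =>
    Matrix.of fun x l => if l ∈ S1 i then (M 1 i * G1 i) x l else (M ε i * G1 i) x l
  have hR : ∀ ε i, M ε i * G1 i = R ε i * diagonal (fun l => if l ∈ S1 i then ε else 1) := by
    intro ε i
    ext x l
    rw [mul_diagonal]
    simp only [R, of_apply]
    by_cases hl : l ∈ S1 i
    · simp only [hl, if_true]
      have := congrFun (hMU ε i _ (hc1 i l hl)) x
      rw [Pi.smul_apply, smul_eq_mul] at this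
      rw [mul_comm]
      exact this
    · simp [hl]
  have hMdet : ∀ ε i, (M ε i).det = (R ε i).det / (G1 i).det * ε ^ Module.finrank ℝ (U1 i) := by
    intro ε i
    have := congrArg Matrix.det (hR ε i)
    rw [det_mul, det_mul, det_diagonal, prod_ite_card, hS1] at this
    have h := hG1 i
    field_simp
    exact this
  have hYcont : ∀ j, Continuous fun ε => Y ε j := by
    intro j
    refine (continuous_const.matrix_mul (Continuous.matrix_diagonal ?_)).matrix_mul continuous_const
    refine continuous_pi fun l => ?_
    by_cases hl : l ∈ S2 j
    · simp only [hl, if_true]; exact continuous_id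
    · simpa [hl] using continuous_const
  have hMcont : ∀ i, Continuous fun ε => M ε i := by
    intro i
    refine continuous_finsetSum _ fun j _ => ?_
    refine Continuous.fun_const_smul (continuous_finsetSum _ fun a _ => ?_) (p j)
    exact (continuous_const.matrix_mul (hYcont j)).matrix_mul continuous_const
  have hRcont : ∀ i, Continuous fun ε => R ε i := by
    intro i
    refine continuous_matrix fun x l => ?_
    by_cases hl : l ∈ S1 i
    · simpa [R, hl] using continuous_const
    · simp only [R, of_apply, hl, if_false]
      exact ((hMcont i).matrix_mul continuous_const).matrix_elem x l
  let f : ℝ → ℝ := fun ε => (∏ i, (R ε i).det / (G1 i).det) / ∏ j, (((G2 j)⁻¹).det ^ 2) ^ p j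
  have hf : Continuous f := by
    refine Continuous.div_const (continuous_finsetProd _ fun i _ => ?_) _
    exact ((hRcont i).matrix_det).div_const _
  set α : ℝ := ∑ i, (Module.finrank ℝ (U1 i) : ℝ) - ∑ j, p j * (Module.finrank ℝ (U2 j) : ℝ) with hα
  have hα0 : 0 < α := by linarith
  have hval : ∀ ε, 0 < ε → capVal p V (Y ε) = f ε * ε ^ α := by
    intro ε hε
    have h1 : ∏ i, (M ε i).det = (∏ i, (R ε i).det / (G1 i).det)
        * ε ^ (∑ i, (Module.finrank ℝ (U1 i) : ℝ)) := by
      simp only [hMdet, Finset.prod_mul_distrib, Finset.prod_pow_eq_pow_sum]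
      congr 1
      rw [← Real.rpow_natCast]; push_cast; rfl
    have h2 : ∏ j, (Y ε j).det ^ p j = (∏ j, (((G2 j)⁻¹).det ^ 2) ^ p j)
        * ε ^ (∑ j, p j * (Module.finrank ℝ (U2 j) : ℝ)) := by
      rw [Real.rpow_sum_of_pos hε, ← Finset.prod_mul_distrib]
      refine Finset.prod_congr rfl fun j _ => ?_
      rw [hYdet, Real.mul_rpow (sq_nonneg _) (by positivity), ← Real.rpow_natCast ε,
        ← Real.rpow_mul hε.le, mul_comm (p j)]
    have h3 : capVal p V (Y ε) = (∏ i, (M ε i).det) / ∏ j, (Y ε j).det ^ p j := rfl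
    rw [h3, h1, h2, hα, Real.rpow_sub hε]
    simp only [f]
    rw [mul_div_mul_comm]
  have hbdd : BddBelow { r : ℝ | ∃ Y : ∀ j : Fin m, Matrix (Fin (n j)) (Fin (n j)) ℝ,
      (∀ j, (Y j).PosDef) ∧ r = capVal p V Y } := by
    by_contra h
    rw [cap, Real.sInf_of_not_bddBelow h] at hcap
    exact lt_irrefl _ hcap
  have hge : ∀ ε, 0 < ε → cap p V ≤ f ε * ε ^ α := by
    intro ε hε
    rw [← hval ε hε]
    exact csInf_le hbdd ⟨Y ε, hYpos ε hε, rfl⟩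
  have hlim : Filter.Tendsto (fun ε => f ε * ε ^ α) (nhdsWithin 0 (Set.Ioi 0)) (nhds 0) := by
    have h1 : Continuous fun ε : ℝ => f ε * ε ^ α :=
      hf.mul (Real.continuous_rpow_const hα0.le)
    have h2 := h1.tendsto 0
    rw [Real.zero_rpow hα0.ne', mul_zero] at h2
    exact h2.mono_left nhdsWithin_le_nhds
  have := ge_of_tendsto hlim (Filter.eventually_of_mem self_mem_nhdsWithin fun ε hε => hge ε hε)
  linarith

end

/-- For positive rational weights, a quiver datum `(V, p)` is feasible
(`cap(V, p) > 0`) if and only if `V` is `p`-semi-stable. -/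
theorem feasible_iff_semistable {k m : ℕ} (hk : 0 < k) (hm : 0 < m)
    {d : Fin k → ℕ} {n : Fin m → ℕ} {A : Fin k → Fin m → ℕ} (p : Fin m → ℚ)
    (hd : ∀ i, 0 < d i) (hn : ∀ j, 0 < n j) (hp : ∀ j, 0 < p j)
    (hbal : ∑ i : Fin k, (d i : ℝ) = ∑ j : Fin m, (p j : ℝ) * (n j : ℝ))
    (V : ∀ i : Fin k, ∀ j : Fin m, Fin (A i j) → Matrix (Fin (n j)) (Fin (d i)) ℝ) :
    0 < cap (fun j => (p j : ℝ)) V ↔ Semistable (fun j => (p j : ℝ)) V := by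
  have hp' : ∀ j, (0 : ℝ) < (p j : ℝ) := fun j => by exact_mod_cast hp j
  exact ⟨semistable_of_feasible _ V, feasible_of_semistable _ V hp' hbal⟩
end
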